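/- arXiv:1501.01690 — 3 statements merged into one kernel-verified Lean document; each statement's English description precedes it below -/
import Mathlib

section
/- Suppose a is an action of a group Γ on a Polish space X by Borel automorphisms which has a paradoxical decomposition (equivalently, by Tarski's theorem, is nonamenable). Then there is a free action of the free group F₂ on two generators on X by Baire measurable automorphisms which is a-Lipschitz. -/
open scoped Pointwise

/-- The families `A₁,…,Aₙ, B₁,…,B_m` together with group elements `α₁,…,αₙ, β₁,…,β_m` form a
paradoxical decomposition of the action of `Γ` on `X`. -/
def IsParadoxicalDecomposition {Γ X : Type*} [Group Γ] [MulAction Γ X]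
    {n m : ℕ} (A : Fin n → Set X) (B : Fin m → Set X) (α : Fin n → Γ) (β : Fin m → Γ) : Prop :=
  (∀ i j, i ≠ j → Disjoint (A i) (A j)) ∧
  (∀ i j, i ≠ j → Disjoint (B i) (B j)) ∧
  (∀ i j, Disjoint (A i) (B j)) ∧
  ((⋃ i, A i) ∪ (⋃ j, B j)) = Set.univ ∧
  (∀ i j, i ≠ j → Disjoint (α i • A i) (α j • A j)) ∧
  (∀ i j, i ≠ j → Disjoint (β i • B i) (β j • B j)) ∧
  (⋃ i, α i • A i) = Set.univ ∧
  (⋃ j, β j • B j) = Set.univ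

/-- A function between topological spaces (with Borel σ-algebras) is Baire measurable if the
preimage of every Borel set has the Baire property. -/
def BaireMeasurableFun {X Y : Type*} [TopologicalSpace X] [TopologicalSpace Y]
    [MeasurableSpace Y] (f : X → Y) : Prop :=
  ∀ s : Set Y, MeasurableSet s → BaireMeasurableSet (f ⁻¹' s)

section Comb
open Classical Finset

noncomputable def nb {X : Type*} (N : X → Finset X) (U : Set X) (F : Finset X) : Finset X :=
  (F.biUnion N).filter (fun y => y ∉ U)

theorem mem_nb {X : Type*} {N : X → Finset X} {U : Set X} {F : Finset X} {y : X} :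
    y ∈ nb N U F ↔ (∃ x ∈ F, y ∈ N x) ∧ y ∉ U := by
  simp [nb]

def Thick {X : Type*} (N : X → Finset X) (m : ℕ) (F : Finset X) : Prop :=
  ∀ F' ⊆ F, F'.Nonempty → #F' < m → ¬ Disjoint (nb N ∅ F') (nb N ∅ (F \ F'))

def HallInv {X : Type*} (N : X → Finset X) (n : ℕ) (U Z : Set X) : Prop :=
  (∀ F : Finset X, (F : Set X) ⊆ Z → 3 * #F ≤ #(nb N U F)) ∧
  ∀ F : Finset X, (F : Set X) ⊆ Z → Thick N (2 ^ n) F →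
    3 * (2 ^ n + 1) * #F ≤ 2 ^ n * #(nb N U F)

/-- growth of balls inside `F` around a point touching `F` -/
theorem ball_growth {X : Type*} {N : X → Finset X} {Bl : ℕ → Set X}
    (hmono : Monotone Bl)
    (hstep : ∀ ρ x y, x ∈ Bl ρ → ¬ Disjoint (N x) (N y) → y ∈ Bl (ρ + 1))
    (F : Finset X) (hF : (F.filter (· ∈ Bl 1)).Nonempty) (m : ℕ) :
    m ≤ #(F.filter (· ∈ Bl m)) ∨
      ∃ F' ⊆ F, F'.Nonempty ∧ (∀ x ∈ F', x ∈ Bl m) ∧ #F' < m ∧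
        Disjoint (nb N ∅ F') (nb N ∅ (F \ F')) := by
  by_contra! hcon
  obtain ⟨h1, h2⟩ := hcon
  have key : ∀ ρ, 1 ≤ ρ → ρ ≤ m → ρ ≤ #(F.filter (· ∈ Bl ρ)) := by
    intro ρ hρ
    induction ρ, hρ using Nat.le_induction with
    | base => intro _; exact Finset.card_pos.2 hF
    | succ ρ hρ ih =>
      intro hm
      have ih := ih (by omega)
      have hsub : F.filter (· ∈ Bl ρ) ⊆ F.filter (· ∈ Bl (ρ + 1)) := by
        intro x hx
        simp only [Finset.mem_filter] at hx ⊢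
        exact ⟨hx.1, hmono (Nat.le_succ _) hx.2⟩
      have hsubm : F.filter (· ∈ Bl ρ) ⊆ F.filter (· ∈ Bl m) := by
        intro x hx
        simp only [Finset.mem_filter] at hx ⊢
        exact ⟨hx.1, hmono (by omega) hx.2⟩
      have := h2 (F.filter (· ∈ Bl ρ)) (Finset.filter_subset _ _)
        (Finset.card_pos.1 (by omega))
        (by intro x hx; exact (Finset.mem_filter.1 (hsubm hx)).2)
        (lt_of_le_of_lt (Finset.card_le_card hsubm) h1)
      rw [Finset.not_disjoint_iff] at this
      obtain ⟨z, hz1, hz2⟩ := this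
      rw [mem_nb] at hz1 hz2
      obtain ⟨⟨x, hx, hzx⟩, -⟩ := hz1
      obtain ⟨⟨y, hy, hzy⟩, -⟩ := hz2
      have hlt : F.filter (· ∈ Bl ρ) ⊂ F.filter (· ∈ Bl (ρ + 1)) := by
        rw [Finset.ssubset_iff_of_subset hsub]
        simp only [Finset.mem_sdiff, Finset.mem_filter] at hy hx
        refine ⟨y, ?_, ?_⟩
        · simp only [Finset.mem_filter]
          exact ⟨hy.1, hstep ρ x y hx.2 (Finset.not_disjoint_iff.2 ⟨z, hzx, hzy⟩)⟩
        · simp only [Finset.mem_filter]; exact hy.2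
      have := Finset.card_lt_card hlt
      omega
  rcases Nat.eq_zero_or_pos m with h0 | h0
  · subst h0; simp at h1
  · have := key m h0 le_rfl; omega

theorem hall_step {X : Type*} {N : X → Finset X} {n : ℕ} {U Z W : Set X}
    (hI : HallInv N n U Z) (y : X → Fin 3 → X)
    (hy : ∀ w ∈ W, ∀ i, y w i ∈ N w)
    (hyH : ∀ w ∈ W, ∀ F : Finset X, (F : Set X) ⊆ Z \ {w} →
      3 * #F ≤ #(nb N (U ∪ Set.range (y w)) F))
    (Bl : X → ℕ → Set X) (hmono : ∀ w, Monotone (Bl w))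
    (h0 : ∀ w, w ∈ Bl w 0)
    (hstep : ∀ w ρ x y, x ∈ Bl w ρ → ¬ Disjoint (N x) (N y) → y ∈ Bl w (ρ + 1))
    (hsep : ∀ w ∈ W, ∀ w' ∈ W, ∀ x, x ∈ Bl w (2 ^ (n + 1)) → x ∈ Bl w' (2 ^ (n + 1)) → w = w') :
    HallInv N (n + 1) (U ∪ {z | ∃ w ∈ W, ∃ i, z = y w i}) (Z \ W) := by
  set U' := U ∪ {z | ∃ w ∈ W, ∃ i, z = y w i} with hU'
  -- touchers
  have touch : ∀ F : Finset X, ∃ WF : Finset X, ∀ w, w ∈ WF ↔ w ∈ W ∧ ∃ i, y w i ∈ nb N U F := by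
    intro F
    have hfin : {w | w ∈ W ∧ ∃ i, y w i ∈ nb N U F}.Finite := by
      have hsub : {w | w ∈ W ∧ ∃ i, y w i ∈ nb N U F} ⊆
          ⋃ x ∈ F, {w | w ∈ W ∧ x ∈ Bl w (2 ^ (n + 1))} := by
        rintro w ⟨hw, i, hi⟩
        obtain ⟨⟨x, hx, hxi⟩, -⟩ := mem_nb.1 hi
        simp only [Set.mem_iUnion]
        refine ⟨x, hx, hw, hmono w (Nat.one_le_two_pow) ?_⟩
        exact hstep w 0 w x (h0 w) (Finset.not_disjoint_iff.2 ⟨_, hy w hw i, hxi⟩)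
      refine Set.Finite.subset ?_ hsub
      refine Set.Finite.biUnion F.finite_toSet ?_
      intro x _
      apply Set.Subsingleton.finite
      intro w hw w' hw'
      exact hsep w hw.1 w' hw'.1 x hw.2 hw'.2
    exact ⟨hfin.toFinset, by simp⟩
  have touchNe : ∀ F : Finset X, ∀ w ∈ W, (∃ i, y w i ∈ nb N U F) →
      (F.filter (· ∈ Bl w 1)).Nonempty := by
    rintro F w hw ⟨i, hi⟩
    obtain ⟨⟨x, hx, hxi⟩, -⟩ := mem_nb.1 hi
    exact ⟨x, Finset.mem_filter.2 ⟨hx,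
      hstep w 0 w x (h0 w) (Finset.not_disjoint_iff.2 ⟨_, hy w hw i, hxi⟩)⟩⟩
  have big : ∀ F : Finset X, (F : Set X) ⊆ Z \ W → Thick N (2 ^ (n + 1)) F →
      3 * (2 ^ (n + 1) + 1) * #F ≤ 2 ^ (n + 1) * #(nb N U' F) := by
    intro F hF hT
    obtain ⟨WF, hWF⟩ := touch F
    have hT' : Thick N (2 ^ n) F := by
      intro F' h1 h2 h3
      exact hT F' h1 h2 (lt_of_lt_of_le h3 (Nat.pow_le_pow_right (by norm_num) (Nat.le_succ n)))
    have hb := hI.2 F (fun x hx => (hF hx).1) hT'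
    have hcard : #(nb N U F) ≤ #(nb N U' F) + #WF * 3 := by
      have hsub : nb N U F ⊆ nb N U' F ∪ WF.biUnion (fun w => Finset.univ.image (y w)) := by
        intro z hz
        by_cases hzU : z ∈ U'
        · rcases hzU with hzU | ⟨w, hw, i, rfl⟩
          · exact absurd hzU (mem_nb.1 hz).2
          · refine Finset.mem_union_right _ (Finset.mem_biUnion.2 ⟨w, (hWF w).2 ⟨hw, i, hz⟩, ?_⟩)
            simp
        · exact Finset.mem_union_left _ (mem_nb.2 ⟨(mem_nb.1 hz).1, hzU⟩)
      refine (Finset.card_le_card hsub).trans ((Finset.card_union_le _ _).trans ?_)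
      gcongr
      refine Finset.card_biUnion_le_card_mul _ _ _ ?_
      intro w _
      exact Finset.card_image_le.trans (by simp)
    have hW : #WF * 2 ^ (n + 1) ≤ #F := by
      calc #WF * 2 ^ (n + 1) ≤ ∑ w ∈ WF, #(F.filter (· ∈ Bl w (2 ^ (n + 1)))) := by
            rw [← smul_eq_mul]
            apply Finset.card_nsmul_le_sum
            intro w hw
            obtain ⟨hw1, hw2⟩ := (hWF w).1 hw
            rcases ball_growth (hmono w) (hstep w) F (touchNe F w hw1 hw2) (2 ^ (n + 1)) with h | h
            · exact h
            · obtain ⟨F', h1, h2, -, h3, h4⟩ := h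
              exact absurd h4 (hT F' h1 h2 h3)
        _ = #(WF.biUnion (fun w => F.filter (· ∈ Bl w (2 ^ (n + 1))))) := by
            symm
            apply Finset.card_biUnion
            intro w hw w' hw' hne
            rw [Function.onFun, Finset.disjoint_left]
            intro x hx hx'
            exact hne (hsep w ((hWF w).1 hw).1 w' ((hWF w').1 hw').1 x
              (Finset.mem_filter.1 hx).2 (Finset.mem_filter.1 hx').2)
        _ ≤ #F := by
            apply Finset.card_le_card
            intro x hx
            obtain ⟨w, _, hx⟩ := Finset.mem_biUnion.1 hx
            exact (Finset.mem_filter.1 hx).1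
    rw [pow_succ] at hW ⊢
    generalize 2 ^ n = k at *
    nlinarith
  refine ⟨?_, big⟩
  intro F
  induction F using Finset.strongInduction with
  | H F ih =>
  intro hF
  by_cases hs : ∃ F' ⊂ F, F'.Nonempty ∧ Disjoint (nb N ∅ F') (nb N ∅ (F \ F'))
  · obtain ⟨F', h1, h2, h3⟩ := hs
    have e1 := ih F' h1 (fun x hx => hF (h1.1 hx))
    have e2 := ih (F \ F') (Finset.sdiff_ssubset h1.1 h2)
      (fun x hx => hF (Finset.sdiff_subset hx))
    have hd : Disjoint (nb N U' F') (nb N U' (F \ F')) := by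
      rw [Finset.disjoint_left] at h3 ⊢
      intro z hz1 hz2
      exact h3 (mem_nb.2 ⟨(mem_nb.1 hz1).1, by simp⟩) (mem_nb.2 ⟨(mem_nb.1 hz2).1, by simp⟩)
    have e3 : #(nb N U' F') + #(nb N U' (F \ F')) ≤ #(nb N U' F) := by
      rw [← Finset.card_union_of_disjoint hd]
      apply Finset.card_le_card
      intro z hz
      rcases Finset.mem_union.1 hz with hz | hz
      · obtain ⟨⟨x, hx, hzx⟩, hu⟩ := mem_nb.1 hz
        exact mem_nb.2 ⟨⟨x, h1.1 hx, hzx⟩, hu⟩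
      · obtain ⟨⟨x, hx, hzx⟩, hu⟩ := mem_nb.1 hz
        exact mem_nb.2 ⟨⟨x, Finset.sdiff_subset hx, hzx⟩, hu⟩
    have e4 := Finset.card_sdiff_add_card_eq_card h1.1
    omega
  · by_cases hm : 2 ^ (n + 1) ≤ #F
    · have hT : Thick N (2 ^ (n + 1)) F := by
        intro F' h1 h2 h3 h4
        refine hs ⟨F', ⟨h1, fun h => ?_⟩, h2, h4⟩
        have := Finset.card_le_card h
        omega
      have := big F hF hT
      have hp : 0 < 2 ^ (n + 1) := by positivity
      generalize 2 ^ (n + 1) = k at *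
      by_contra! hlt
      nlinarith
    · have hball : ∀ w ∈ W, (∃ i, y w i ∈ nb N U F) → ∀ x ∈ F, x ∈ Bl w (2 ^ (n + 1)) := by
        intro w hw hi
        rcases ball_growth (hmono w) (hstep w) F (touchNe F w hw hi) (2 ^ (n + 1)) with h | h
        · exact absurd (h.trans (Finset.card_filter_le _ _)) hm
        · obtain ⟨F', h1, h2, h3, -, h4⟩ := h
          rcases h1.eq_or_ssubset with h | h
          · exact h ▸ h3
          · exact absurd ⟨F', h, h2, h4⟩ hs
      by_cases hw : ∃ w ∈ W, ∃ i, y w i ∈ nb N U F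
      · obtain ⟨w, hw, hi⟩ := hw
        refine (hyH w hw F ?_).trans (Finset.card_le_card ?_)
        · intro x hx
          refine ⟨(hF hx).1, fun h => (hF hx).2 ?_⟩
          rw [Set.mem_singleton_iff.1 h]; exact hw
        · intro z hz
          obtain ⟨hz1, hz2⟩ := mem_nb.1 hz
          have hzU : z ∉ U := fun h => hz2 (Or.inl h)
          refine mem_nb.2 ⟨hz1, ?_⟩
          rintro (h | ⟨w', hw', i, rfl⟩)
          · exact hzU h
          · have hi' : ∃ i, y w' i ∈ nb N U F := ⟨i, mem_nb.2 ⟨hz1, hzU⟩⟩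
            obtain ⟨x, hx, -⟩ := hz1
            have := hsep w hw w' hw' x (hball w hw hi x hx) (hball w' hw' hi' x hx)
            subst this
            exact hz2 (Or.inr ⟨i, rfl⟩)
      · refine (hI.1 F (fun x hx => (hF hx).1)).trans (Finset.card_le_card ?_)
        intro z hz
        obtain ⟨hz1, hz2⟩ := mem_nb.1 hz
        refine mem_nb.2 ⟨hz1, ?_⟩
        rintro (h | ⟨w', hw', i, rfl⟩)
        · exact hz2 h
        · exact hw ⟨w', hw', i, hz⟩

theorem hall_choice {X : Type*} {N : X → Finset X} {U Z : Set X}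
    (hH : ∀ F : Finset X, (F : Set X) ⊆ Z → 3 * #F ≤ #(nb N U F)) {w : X} (hw : w ∈ Z) :
    ∃ y : Fin 3 → X, Function.Injective y ∧ (∀ i, y i ∈ N w ∧ y i ∉ U) ∧
      ∀ F : Finset X, (F : Set X) ⊆ Z \ {w} → 3 * #F ≤ #(nb N (U ∪ Set.range y) F) := by
  obtain ⟨φ, hφ, hφ'⟩ := (Finset.all_card_le_biUnion_card_iff_exists_injective
    (fun p : Z × Fin 3 => nb N U {p.1.1})).1 (by
      intro s
      let F : Finset X := s.image (fun p => p.1.1)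
      have h1 : #s ≤ #(F ×ˢ (Finset.univ : Finset (Fin 3))) := by
        apply Finset.card_le_card_of_injOn (fun p => (p.1.1, p.2))
        · intro p hp
          simp only [Finset.coe_product, Set.mem_prod, F]
          exact ⟨Finset.mem_coe.2 (Finset.mem_image_of_mem _ hp), by simp⟩
        · rintro ⟨⟨a, ha⟩, i⟩ _ ⟨⟨b, hb⟩, j⟩ _ h
          simp at h
          simp [h.1, h.2]
      have h2 := hH F (by
        intro x hx
        obtain ⟨p, _, rfl⟩ := Finset.mem_image.1 (Finset.mem_coe.1 hx)
        exact p.1.2)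
      have h3 : nb N U F ⊆ s.biUnion (fun p : Z × Fin 3 => nb N U {p.1.1}) := by
        intro z hz
        obtain ⟨⟨x, hx, hzx⟩, hu⟩ := mem_nb.1 hz
        obtain ⟨p, hp, rfl⟩ := Finset.mem_image.1 hx
        exact Finset.mem_biUnion.2 ⟨p, hp, mem_nb.2 ⟨⟨_, by simp, hzx⟩, hu⟩⟩
      have h4 := Finset.card_le_card h3
      rw [Finset.card_product] at h1
      simp at h1
      omega)
  refine ⟨fun i => φ (⟨w, hw⟩, i), ?_, ?_, ?_⟩
  · intro i j h
    have := hφ h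
    simpa using this
  · intro i
    have := mem_nb.1 (hφ' (⟨w, hw⟩, i))
    simpa using this
  · intro F hF
    have : #(F.attach ×ˢ (Finset.univ : Finset (Fin 3))) ≤
        #(nb N (U ∪ Set.range fun i => φ (⟨w, hw⟩, i)) F) := by
      apply Finset.card_le_card_of_injOn (fun p => φ (⟨p.1.1, (hF p.1.2).1⟩, p.2))
      · rintro ⟨⟨x, hx⟩, i⟩ _
        have := mem_nb.1 (hφ' (⟨x, (hF hx).1⟩, i))
        refine mem_nb.2 ⟨⟨x, hx, by simpa using this.1⟩, ?_⟩
        rintro (h | ⟨j, hj⟩)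
        · exact this.2 h
        · have := hφ hj
          simp at this
          exact (hF hx).2 this.1.symm
      · rintro ⟨⟨a, ha⟩, i⟩ _ ⟨⟨b, hb⟩, j⟩ _ h
        have := hφ h
        simp at this
        simp [this.1, this.2]
    rw [Finset.card_product] at this
    simp at this
    omega

end Comb

section Baire
open Classical

theorem mforall {X : Type*} {ι : Sort*} [MeasurableSpace X] [Countable ι] {p : ι → X → Prop}
    (h : ∀ i, MeasurableSet {x | p i x}) : MeasurableSet {x | ∀ i, p i x} := by
  rw [Set.setOf_forall]
  exact MeasurableSet.iInter h

theorem mimp {X : Type*} [MeasurableSpace X] {p q : X → Prop}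
    (hp : MeasurableSet {x | p x}) (hq : MeasurableSet {x | q x}) :
    MeasurableSet {x | p x → q x} := by
  have : {x | p x → q x} = {x | p x}ᶜ ∪ {x | q x} := by ext; simp [imp_iff_not_or]
  rw [this]
  exact hp.compl.union hq

theorem meas_select {X C : Type*} [MeasurableSpace X] [Countable C] [Nonempty C]
    (P : C → X → Prop) (hP : ∀ c, MeasurableSet {x | P c x}) :
    ∃ σ : X → C, (∀ c, MeasurableSet {x | σ x = c}) ∧ ∀ x, (∃ c, P c x) → P (σ x) x := by
  obtain ⟨e, he⟩ := exists_surjective_nat C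
  let Q : X → ℕ → Prop := fun x n => P (e n) x ∨ ∀ c, ¬ P c x
  have hQ : ∀ x, ∃ n, Q x n := by
    intro x
    by_cases h : ∃ c, P c x
    · obtain ⟨c, hc⟩ := h
      obtain ⟨n, rfl⟩ := he c
      exact ⟨n, Or.inl hc⟩
    · push Not at h
      exact ⟨0, Or.inr h⟩
  have hm : Measurable (fun x => Nat.find (hQ x)) := by
    apply measurable_find
    intro k
    refine MeasurableSet.union (hP _) ?_
    have : {x | ∀ c, ¬ P c x} = ⋂ c, {x | P c x}ᶜ := by ext; simp
    change MeasurableSet {x | ∀ c, ¬ P c x}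
    rw [this]
    exact MeasurableSet.iInter fun c => (hP c).compl
  refine ⟨fun x => e (Nat.find (hQ x)), ?_, ?_⟩
  · intro c
    exact hm (MeasurableSet.of_discrete (s := {n | e n = c}))
  · rintro x ⟨c, hc⟩
    rcases Nat.find_spec (hQ x) with h | h
    · exact h
    · exact absurd hc (h c)

theorem meas_card {Γ X : Type*} [Group Γ] [MeasurableSpace X] [MeasurableEq X] [MulAction Γ X]
    (hB : ∀ γ : Γ, Measurable (fun x : X => γ • x)) {q : X → X → Prop}
    [∀ w, DecidablePred (q w)]
    (hV : ∀ γ : Γ, MeasurableSet {w | q w (γ • w)})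
    (T : Finset Γ) :
    Measurable fun w : X => ((T.image (fun γ => γ • w)).filter (q w)).card := by
  induction T using Finset.induction_on with
  | empty => simp
  | insert γ T hγ ih =>
    have : (fun w : X => (((insert γ T).image (fun γ => γ • w)).filter (q w)).card) =
        fun w => ((T.image (fun γ => γ • w)).filter (q w)).card +
          if q w (γ • w) ∧ ∀ δ ∈ T, δ • w ≠ γ • w then 1 else 0 := by
      funext w
      rw [Finset.image_insert, Finset.filter_insert]
      by_cases h1 : q w (γ • w)
      · by_cases h2 : ∀ δ ∈ T, δ • w ≠ γ • w
        · rw [if_pos h1, if_pos ⟨h1, h2⟩, Finset.card_insert_of_notMem]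
          simp only [Finset.mem_filter, Finset.mem_image, not_and]
          rintro ⟨δ, hδ, h⟩
          exact absurd h (h2 δ hδ)
        · rw [if_pos h1, if_neg (fun h => h2 h.2), Finset.insert_eq_of_mem, add_zero]
          push Not at h2
          obtain ⟨δ, hδ, h⟩ := h2
          exact Finset.mem_filter.2 ⟨Finset.mem_image.2 ⟨δ, hδ, h⟩, h1⟩
      · rw [if_neg h1, if_neg (fun h => h1 h.1), add_zero]
    rw [this]
    refine ih.add (Measurable.ite ?_ measurable_const measurable_const)
    have : {w : X | q w (γ • w) ∧ ∀ δ ∈ T, δ • w ≠ γ • w} =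
      {w | q w (γ • w)} ∩ ⋂ δ ∈ T, {w | δ • w = γ • w}ᶜ := by ext; simp
    rw [this]
    exact (hV γ).inter (Finset.measurableSet_biInter _ fun δ _ =>
      (measurableSet_eq_fun (hB δ) (hB γ)).compl)

noncomputable def NN {Γ X : Type*} [Group Γ] [MulAction Γ X] (S : Finset Γ) (x : X) : Finset X :=
  S.image (fun γ => γ • x)

theorem mem_NN {Γ X : Type*} [Group Γ] [MulAction Γ X] {S : Finset Γ} {x y : X} :
    y ∈ NN S x ↔ ∃ γ ∈ S, γ • x = y := by simp [NN]

theorem mem_nb_NN {Γ X : Type*} [Group Γ] [MulAction Γ X] (S T : Finset Γ) (U : Set X) (w : X)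
    (y : X) : y ∈ nb (NN S) U (T.image (fun γ => γ • w)) ↔
      y ∈ (S * T).image (fun γ => γ • w) ∧ y ∉ U := by
  simp only [mem_nb, mem_NN, Finset.mem_image, Finset.mem_mul]
  constructor
  · rintro ⟨⟨x, ⟨γ, hγ, rfl⟩, δ, hδ, rfl⟩, hu⟩
    exact ⟨⟨δ * γ, ⟨δ, hδ, γ, hγ, rfl⟩, mul_smul _ _ _⟩, hu⟩
  · rintro ⟨⟨_, ⟨δ, hδ, γ, hγ, rfl⟩, rfl⟩, hu⟩
    exact ⟨⟨γ • w, ⟨γ, hγ, rfl⟩, δ, hδ, (mul_smul _ _ _).symm⟩, hu⟩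

/-- separation sets -/
noncomputable def TT {Γ : Type*} [Group Γ] (S : Finset Γ) : Finset Γ := insert 1 (S⁻¹ * S)

noncomputable def RR {Γ : Type*} [Group Γ] (S : Finset Γ) (n : ℕ) : Finset Γ :=
  (TT S ^ 2 ^ (n + 1))⁻¹ * TT S ^ 2 ^ (n + 1)

theorem stage {Γ X : Type*} [Group Γ] [Countable Γ] [MeasurableSpace X] [MeasurableEq X]
    [MulAction Γ X]
    (hB : ∀ γ : Γ, Measurable (fun x : X => γ • x)) (S : Finset Γ) {A : Set X} {n : ℕ}
    (hA : ∀ x ∈ A, ∀ γ ∈ RR S n, γ • x ∈ A → γ • x = x) {U Z : Set X}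
    (hU : MeasurableSet U) (hZ : MeasurableSet Z) (hI : HallInv (NN S) n U Z) :
    ∃ σ : X → Fin 3 → Γ, (∀ c, MeasurableSet {x | σ x = c}) ∧
      (∀ w ∈ A ∩ Z, ∀ i, σ w i ∈ S ∧ σ w i • w ∉ U) ∧
      (∀ w ∈ A ∩ Z, ∀ w' ∈ A ∩ Z, ∀ i j, σ w i • w = σ w' j • w' → w = w' ∧ i = j) ∧
      HallInv (NN S) (n + 1) (U ∪ {z | ∃ w ∈ A ∩ Z, ∃ i, z = σ w i • w}) (Z \ A) := by
  let P : (Fin 3 → Γ) → X → Prop := fun c w =>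
    (∀ i j, i ≠ j → c i • w ≠ c j • w) ∧ (∀ i, c i ∈ S ∧ c i • w ∉ U) ∧
    ∀ T : Finset Γ, (∀ γ ∈ T, γ • w ∈ Z ∧ γ • w ≠ w) →
      3 * ((T.image (fun γ => γ • w)).filter (fun _ => True)).card ≤
        (((S * T).image (fun γ => γ • w)).filter
          (fun z => z ∉ U ∧ ∀ i, c i • w ≠ z)).card
  have hP : ∀ c, MeasurableSet {w | P c w} := by
    intro c
    have hne : ∀ γ δ : Γ, MeasurableSet {w : X | γ • w ≠ δ • w} := fun γ δ =>
      (measurableSet_eq_fun (hB γ) (hB δ)).compl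
    have hne1 : ∀ γ : Γ, MeasurableSet {w : X | γ • w ≠ w} := fun γ =>
      (measurableSet_eq_fun (hB γ) measurable_id).compl
    have hUm : ∀ γ : Γ, MeasurableSet {w : X | γ • w ∉ U} := fun γ => hB γ hU.compl
    have hZm : ∀ γ : Γ, MeasurableSet {w : X | γ • w ∈ Z} := fun γ => hB γ hZ
    have hc1 : ∀ T : Finset Γ, Measurable fun w : X =>
        3 * ((T.image (fun γ => γ • w)).filter (fun _ => True)).card := fun T =>
      (meas_card hB (q := fun _ _ => True) (by simp) T).const_mul 3
    have hc2 : ∀ T : Finset Γ, Measurable fun w : X =>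
        (((S * T).image (fun γ => γ • w)).filter
          (fun z => z ∉ U ∧ ∀ i, c i • w ≠ z)).card := fun T => by
      refine meas_card hB (q := fun w z => z ∉ U ∧ ∀ i, c i • w ≠ z) ?_ (S * T)
      intro γ
      exact (hUm γ).inter (mforall fun i => hne _ _)
    refine MeasurableSet.inter ?_ (MeasurableSet.inter ?_ ?_)
    · exact mforall fun i => mforall fun j =>
        mforall fun _ => hne _ _
    · exact mforall fun i => (MeasurableSet.const _).inter (hUm _)
    · refine mforall fun T => mimp ?_ ?_
      · exact mforall fun γ => mforall fun _ => (hZm γ).inter (hne1 γ)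
      · exact measurableSet_le (hc1 T) (hc2 T)
  obtain ⟨σ, hσm, hσ⟩ := meas_select P hP
  have hex : ∀ w ∈ Z, ∃ c, P c w := by
    intro w hw
    obtain ⟨y, hy1, hy2, hy3⟩ := hall_choice hI.1 hw
    choose c hcS hc using fun i => mem_NN.1 (hy2 i).1
    refine ⟨c, ?_, ?_, ?_⟩
    · intro i j hij h
      rw [hc, hc] at h
      exact hij (hy1 h)
    · intro i
      exact ⟨hcS i, by rw [hc]; exact (hy2 i).2⟩
    · intro T hT
      have := hy3 (T.image (fun γ => γ • w)) (by
        intro x hx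
        obtain ⟨γ, hγ, rfl⟩ := Finset.mem_image.1 (Finset.mem_coe.1 hx)
        exact hT γ hγ)
      rw [Finset.filter_true]
      refine this.trans (Finset.card_le_card ?_)
      intro z hz
      obtain ⟨h1, h2⟩ := (mem_nb_NN _ _ _ _ _).1 hz
      refine Finset.mem_filter.2 ⟨h1, fun h => h2 (Or.inl h), ?_⟩
      rintro i rfl
      exact h2 (Or.inr ⟨i, (hc i).symm⟩)
  have hPσ : ∀ w ∈ A ∩ Z, P (σ w) w := fun w hw => hσ w (hex w hw.2)
  let Bl : X → ℕ → Set X := fun w ρ => {x | ∃ γ ∈ TT S ^ ρ, γ • w = x}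
  have h1T : (1 : Γ) ∈ TT S := Finset.mem_insert_self _ _
  have hmono : ∀ w, Monotone (Bl w) := by
    intro w a b hab x hx
    obtain ⟨γ, hγ, rfl⟩ := hx
    exact ⟨γ, Finset.pow_subset_pow_right h1T hab hγ, rfl⟩
  have h0 : ∀ w, w ∈ Bl w 0 := fun w => ⟨1, by simp, one_smul _ _⟩
  have hstep : ∀ w ρ x y, x ∈ Bl w ρ → ¬ Disjoint (NN S x) (NN S y) → y ∈ Bl w (ρ + 1) := by
    rintro w ρ x y ⟨γ, hγ, rfl⟩ h
    obtain ⟨z, hz1, hz2⟩ := Finset.not_disjoint_iff.1 h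
    obtain ⟨s, hs, rfl⟩ := mem_NN.1 hz1
    obtain ⟨t, ht, ht'⟩ := mem_NN.1 hz2
    refine ⟨t⁻¹ * s * γ, ?_, ?_⟩
    · rw [pow_succ']
      refine Finset.mul_mem_mul (Finset.mem_insert_of_mem ?_) hγ
      exact Finset.mul_mem_mul (Finset.inv_mem_inv ht) hs
    · rw [mul_smul, mul_smul, ← ht', inv_smul_smul]
  have hsep : ∀ w ∈ A ∩ Z, ∀ w' ∈ A ∩ Z, ∀ x, x ∈ Bl w (2 ^ (n + 1)) →
      x ∈ Bl w' (2 ^ (n + 1)) → w = w' := by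
    rintro w hw w' hw' x ⟨γ, hγ, rfl⟩ ⟨δ, hδ, h⟩
    have e : (δ⁻¹ * γ) • w = w' := by rw [mul_smul, ← h, inv_smul_smul]
    have := hA w hw.1 (δ⁻¹ * γ) (Finset.mul_mem_mul (Finset.inv_mem_inv hδ) hγ)
      (by rw [e]; exact hw'.1)
    rw [← e, this]
  refine ⟨σ, hσm, fun w hw => (hPσ w hw).2.1, ?_, ?_⟩
  · intro w hw w' hw' i j h
    have e : w = w' := by
      refine hsep w hw w' hw' w' ?_ (hmono w' (Nat.zero_le _) (h0 w'))
      refine hmono w Nat.one_le_two_pow (hstep w 0 w w' (h0 w) ?_)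
      refine Finset.not_disjoint_iff.2 ⟨σ w i • w, mem_NN.2 ⟨_, ((hPσ w hw).2.1 i).1, rfl⟩, ?_⟩
      rw [h]
      exact mem_NN.2 ⟨_, ((hPσ w' hw').2.1 j).1, rfl⟩
    subst e
    refine ⟨rfl, ?_⟩
    by_contra hij
    exact (hPσ w hw).1 i j hij h
  · have hZA : Z \ A = Z \ (A ∩ Z) := by ext; simp
    rw [hZA]
    refine hall_step hI (fun w i => σ w i • w) ?_ ?_ Bl hmono h0 hstep hsep
    · intro w hw i
      exact mem_NN.2 ⟨_, ((hPσ w hw).2.1 i).1, rfl⟩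
    · intro w hw
      have hcl : ∀ F : Finset X, (F : Set X) ⊆ Z \ {w} → (∀ x ∈ F, ∃ γ : Γ, γ • w = x) →
          3 * F.card ≤ (nb (NN S) (U ∪ Set.range (fun i => σ w i • w)) F).card := by
        intro F hF hFo
        choose! k hk using hFo
        have e : F = (F.image k).image (fun γ => γ • w) := by
          rw [Finset.image_image]
          ext x
          simp only [Finset.mem_image, Function.comp]
          constructor
          · intro hx; exact ⟨x, hx, hk x hx⟩
          · rintro ⟨x', hx', rfl⟩; rwa [hk x' hx']
        have := (hPσ w hw).2.2 (F.image k) (by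
          intro γ hγ
          obtain ⟨x, hx, rfl⟩ := Finset.mem_image.1 hγ
          rw [hk x hx]
          exact hF hx)
        rw [Finset.filter_true, ← e] at this
        refine this.trans (Finset.card_le_card ?_)
        intro z hz
        rw [e, mem_nb_NN]
        obtain ⟨h1, h2, h3⟩ := Finset.mem_filter.1 hz
        refine ⟨h1, ?_⟩
        rintro (h | ⟨i, hi⟩)
        · exact h2 h
        · exact h3 i hi
      intro F hF
      have e1 := hcl (F.filter (fun x => ∃ γ : Γ, γ • w = x))
        (fun x hx => hF (Finset.mem_filter.1 hx).1) (fun x hx => (Finset.mem_filter.1 hx).2)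
      have e2 := hI.1 (F.filter (fun x => ¬ ∃ γ : Γ, γ • w = x))
        (fun x hx => (hF (Finset.mem_filter.1 hx).1).1)
      have e3 := Finset.card_filter_add_card_filter_not (s := F) (fun x => ∃ γ : Γ, γ • w = x)
      have hd : Disjoint
          (nb (NN S) (U ∪ Set.range (fun i => σ w i • w)) (F.filter (fun x => ∃ γ : Γ, γ • w = x)))
          (nb (NN S) U (F.filter (fun x => ¬ ∃ γ : Γ, γ • w = x))) := by
        rw [Finset.disjoint_left]
        intro z hz1 hz2
        obtain ⟨⟨x, hx, hzx⟩, -⟩ := mem_nb.1 hz1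
        obtain ⟨⟨y, hy, hzy⟩, -⟩ := mem_nb.1 hz2
        obtain ⟨s, -, rfl⟩ := mem_NN.1 hzx
        obtain ⟨t, -, ht⟩ := mem_NN.1 hzy
        obtain ⟨γ, rfl⟩ := (Finset.mem_filter.1 hx).2
        refine (Finset.mem_filter.1 hy).2 ⟨t⁻¹ * s * γ, ?_⟩
        rw [mul_smul, mul_smul, ← ht, inv_smul_smul]
      have e4 := Finset.card_le_card (s := (nb (NN S) (U ∪ Set.range (fun i => σ w i • w))
          (F.filter (fun x => ∃ γ : Γ, γ • w = x))) ∪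
          (nb (NN S) U (F.filter (fun x => ¬ ∃ γ : Γ, γ • w = x))))
        (t := nb (NN S) (U ∪ Set.range (fun i => σ w i • w)) F) (by
          intro z hz
          rcases Finset.mem_union.1 hz with hz | hz
          · obtain ⟨⟨x, hx, hzx⟩, h⟩ := mem_nb.1 hz
            exact mem_nb.2 ⟨⟨x, (Finset.mem_filter.1 hx).1, hzx⟩, h⟩
          · obtain ⟨⟨x, hx, hzx⟩, h⟩ := mem_nb.1 hz
            refine mem_nb.2 ⟨⟨x, (Finset.mem_filter.1 hx).1, hzx⟩, ?_⟩
            rintro (h' | ⟨i, rfl⟩)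
            · exact h h'
            · obtain ⟨t, -, ht⟩ := mem_NN.1 hzx
              refine (Finset.mem_filter.1 hx).2 ⟨t⁻¹ * σ w i, ?_⟩
              change t • x = σ w i • w at ht
              rw [mul_smul, ← ht, inv_smul_smul])
      rw [Finset.card_union_of_disjoint hd] at e4
      omega

theorem exists_sep {Γ X : Type*} [Group Γ] [Countable Γ] [TopologicalSpace X] [PolishSpace X]
    [MeasurableSpace X] [BorelSpace X] [MulAction Γ X]
    (hB : ∀ γ : Γ, Measurable (fun x : X => γ • x)) (R : ℕ → Finset Γ) :
    ∃ A : ℕ → Set X, (∀ n, MeasurableSet (A n)) ∧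
      (∀ n, ∀ x ∈ A n, ∀ γ ∈ R n, γ • x ∈ A n → γ • x = x) ∧
      {x : X | ∀ γ : Γ, ∃ n, γ • x ∈ A n} ∈ residual X := by
  have : Countable (TopologicalSpace.countableBasis X) :=
    (TopologicalSpace.countable_countableBasis X).to_subtype
  let I := Γ × TopologicalSpace.countableBasis X
  have : Encodable I := Encodable.ofCountable I
  let Bs : Finset Γ → TopologicalSpace.countableBasis X → Set X := fun T V =>
    {x | x ∈ V.1 ∧ ∀ γ ∈ T, γ • x ∈ V.1 → γ • x = x}
  have hbo : ∀ V : TopologicalSpace.countableBasis X, IsOpen V.1 := fun V =>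
    TopologicalSpace.isOpen_of_mem_countableBasis V.2
  have hBm : ∀ T V, MeasurableSet (Bs T V) := by
    intro T V
    refine (hbo V).measurableSet.inter (mforall fun γ => mforall fun _ =>
      mimp (hB γ (hbo V).measurableSet) ?_)
    exact measurableSet_eq_fun (hB γ) measurable_id
  have hcov : ∀ T x, ∃ V, x ∈ Bs T V := by
    intro T x
    let K : Set X := ((T.image (fun γ => γ • x)).erase x : Finset X)
    have hK : IsOpen Kᶜ := (Finset.finite_toSet _).isClosed.isOpen_compl
    have hx : x ∈ Kᶜ := by simp [K]
    obtain ⟨V, hV, hxV, hVK⟩ :=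
      (TopologicalSpace.isBasis_countableBasis X).exists_subset_of_mem_open hx hK
    refine ⟨⟨V, hV⟩, hxV, ?_⟩
    intro γ hγ h
    by_contra hne
    refine hVK h ?_
    simp only [K, Finset.mem_coe, Finset.mem_erase, Finset.mem_image]
    exact ⟨hne, γ, hγ, rfl⟩
  have hch : ∀ n : ℕ, ∀ p : I, ∃ V, ¬ IsMeagre (p.2.1 ∩ (fun x => p.1 • x) ⁻¹' (Bs (R n) V)) := by
    intro n p
    by_contra! hcon
    have := isMeagre_iUnion hcon
    refine not_isMeagre_of_isOpen (hbo p.2)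
      (TopologicalSpace.nonempty_of_mem_countableBasis p.2.2) (this.mono ?_)
    intro x hx
    obtain ⟨V, hV⟩ := hcov (R n) (p.1 • x)
    exact Set.mem_iUnion.2 ⟨V, hx, hV⟩
  choose v hv using hch
  let A : ℕ → Set X := fun n => match Encodable.decode (α := I) n with
    | none => ∅
    | some p => Bs (R n) (v n p)
  have hAm : ∀ n, MeasurableSet (A n) := by
    intro n
    change MeasurableSet (match Encodable.decode (α := I) n with
    | none => ∅
    | some p => Bs (R n) (v n p))
    split
    · exact MeasurableSet.empty
    · exact hBm _ _
  refine ⟨A, hAm, ?_, ?_⟩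
  · intro n
    change ∀ x ∈ (match Encodable.decode (α := I) n with
    | none => ∅
    | some p => Bs (R n) (v n p)), ∀ γ ∈ R n, γ • x ∈ (match Encodable.decode (α := I) n with
    | none => ∅
    | some p => Bs (R n) (v n p)) → γ • x = x
    split
    · simp
    · intro x hx γ hγ h
      exact hx.2 γ hγ h.1
  · have : {x : X | ∀ γ : Γ, ∃ n, γ • x ∈ A n} = ⋂ γ : Γ, (fun x => γ • x) ⁻¹' (⋃ n, A n) := by
      ext; simp
    rw [this, countable_iInter_mem]
    intro γ
    have hm : MeasurableSet ((fun x : X => γ • x) ⁻¹' (⋃ n, A n))ᶜ := by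
      refine (hB γ (MeasurableSet.iUnion hAm)).compl
    obtain ⟨O, hO, hEO⟩ := hm.residualEq_isOpen
    have hOe : O = ∅ := by
      by_contra hne
      obtain ⟨x, hx⟩ := Set.nonempty_iff_ne_empty.2 hne
      obtain ⟨V, hV, hxV, hVO⟩ :=
        (TopologicalSpace.isBasis_countableBasis X).exists_subset_of_mem_open hx hO
      let p : I := (γ, ⟨V, hV⟩)
      refine hv (Encodable.encode p) p ?_
      change _ ∈ residual X
      filter_upwards [hEO.mem_iff] with z hz
      rintro ⟨hz1, hz2⟩
      refine hz.2 (hVO hz1) ?_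
      refine Set.mem_iUnion.2 ⟨Encodable.encode p, ?_⟩
      simp only [A, Encodable.encodek]
      exact hz2
    rw [hOe] at hEO
    filter_upwards [hEO.mem_iff] with z hz
    by_contra h
    exact hz.1 h

theorem exists_matching {Γ X : Type*} [Group Γ] [Countable Γ] [TopologicalSpace X] [PolishSpace X]
    [MeasurableSpace X] [BorelSpace X] [MulAction Γ X]
    (hB : ∀ γ : Γ, Measurable (fun x : X => γ • x)) (S : Finset Γ)
    (hS : ∀ F : Finset X, 6 * F.card ≤ (nb (NN S) ∅ F).card) :
    ∃ Y : Set X, MeasurableSet Y ∧ Y ∈ residual X ∧ (∀ (γ : Γ) (x : X), x ∈ Y → γ • x ∈ Y) ∧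
    ∃ c : X → Fin 3 → Γ, (∀ d, MeasurableSet {x | c x = d}) ∧ (∀ x ∈ Y, ∀ i, c x i ∈ S) ∧
      ∀ x ∈ Y, ∀ x' ∈ Y, ∀ i j, c x i • x = c x' j • x' → x = x' ∧ i = j := by
  obtain ⟨A, hAm, hAs, hAr⟩ := exists_sep hB (RR S)
  have hst : ∀ (n : ℕ) (U Z : Set X), ∃ σ : X → Fin 3 → Γ,
      MeasurableSet U → MeasurableSet Z → HallInv (NN S) n U Z →
      (∀ c, MeasurableSet {x | σ x = c}) ∧
      (∀ w ∈ A n ∩ Z, ∀ i, σ w i ∈ S ∧ σ w i • w ∉ U) ∧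
      (∀ w ∈ A n ∩ Z, ∀ w' ∈ A n ∩ Z, ∀ i j, σ w i • w = σ w' j • w' → w = w' ∧ i = j) ∧
      HallInv (NN S) (n + 1) (U ∪ {z | ∃ w ∈ A n ∩ Z, ∃ i, z = σ w i • w}) (Z \ A n) := by
    intro n U Z
    by_cases h : MeasurableSet U ∧ MeasurableSet Z ∧ HallInv (NN S) n U Z
    · obtain ⟨σ, hσ⟩ := stage hB S (hAs n) h.1 h.2.1 h.2.2
      exact ⟨σ, fun _ _ _ => hσ⟩
    · exact ⟨fun _ _ => 1, fun h1 h2 h3 => absurd ⟨h1, h2, h3⟩ h⟩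
  choose σ hσ using hst
  let UZ : ℕ → Set X × Set X := fun n => Nat.rec (∅, Set.univ) (fun n p =>
    (p.1 ∪ {z | ∃ w ∈ A n ∩ p.2, ∃ i, z = σ n p.1 p.2 w i • w}, p.2 \ A n)) n
  let U : ℕ → Set X := fun n => (UZ n).1
  let Z : ℕ → Set X := fun n => (UZ n).2
  let τ : ℕ → X → Fin 3 → Γ := fun n => σ n (U n) (Z n)
  have hU1 : ∀ n, U (n + 1) = U n ∪ {z | ∃ w ∈ A n ∩ Z n, ∃ i, z = τ n w i • w} := fun n => rfl
  have hZ1 : ∀ n, Z (n + 1) = Z n \ A n := fun n => rfl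
  have hinv : ∀ n, MeasurableSet (U n) ∧ MeasurableSet (Z n) ∧ HallInv (NN S) n (U n) (Z n) := by
    intro n
    induction n with
    | zero =>
      refine ⟨MeasurableSet.empty, MeasurableSet.univ, ?_, ?_⟩
      · intro F _
        have := hS F
        change _ ≤ (nb (NN S) ∅ F).card
        omega
      · intro F _ _
        have := hS F
        change _ ≤ 2 ^ 0 * (nb (NN S) ∅ F).card
        omega
    | succ n ih =>
      obtain ⟨h1, h2, h3⟩ := ih
      obtain ⟨g1, g2, g3, g4⟩ := hσ n (U n) (Z n) h1 h2 h3
      refine ⟨?_, h2.diff (hAm n), g4⟩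
      have : U (n + 1) = U n ∪ ⋃ i : Fin 3, ⋃ c : Fin 3 → Γ, (fun x => (c i)⁻¹ • x) ⁻¹'
          (A n ∩ Z n ∩ {x | τ n x = c}) := by
        rw [hU1]
        congr 1
        ext z
        simp only [Set.mem_setOf_eq, Set.mem_iUnion, Set.mem_preimage]
        constructor
        · rintro ⟨w, hw, i, rfl⟩
          refine ⟨i, τ n w, ?_⟩
          rw [inv_smul_smul]
          exact ⟨hw, rfl⟩
        · rintro ⟨i, c, hz, hc⟩
          refine ⟨_, hz, i, ?_⟩
          change τ n _ = c at hc
          rw [hc, smul_inv_smul]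
      rw [this]
      refine h1.union (MeasurableSet.iUnion fun i => MeasurableSet.iUnion fun c => hB _ ?_)
      exact ((hAm n).inter h2).inter (g1 c)
  have hτ := fun n => hσ n (U n) (Z n) (hinv n).1 (hinv n).2.1 (hinv n).2.2
  have hUmono : Monotone U := monotone_nat_of_le_succ fun n => by
    rw [hU1]; exact Set.subset_union_left
  have hZ : ∀ n x, x ∈ Z n ↔ ∀ k < n, x ∉ A k := by
    intro n x
    induction n with
    | zero => simp [Z, UZ]
    | succ n ih =>
      rw [hZ1, Set.mem_diff, ih]
      constructor
      · rintro ⟨h1, h2⟩ k hk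
        rcases Nat.lt_succ_iff_lt_or_eq.1 hk with h | rfl
        · exact h1 k h
        · exact h2
      · intro h
        exact ⟨fun k hk => h k (by omega), h n (by omega)⟩
  obtain ⟨nn, hnm, hnn⟩ := meas_select (fun n x => x ∈ A n ∩ Z n)
    (fun n => (hAm n).inter (hinv n).2.1)
  have hex : ∀ x, (∃ n, x ∈ A n) → x ∈ A (nn x) ∩ Z (nn x) := by
    intro x hx
    apply hnn
    exact ⟨Nat.find hx, Nat.find_spec hx, (hZ _ _).2 fun k hk => Nat.find_min hx hk⟩
  let Y : Set X := {x : X | ∀ γ : Γ, ∃ n, γ • x ∈ A n}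
  have hY : ∀ x ∈ Y, x ∈ A (nn x) ∩ Z (nn x) := by
    intro x hx
    apply hex
    obtain ⟨n, hn⟩ := hx 1
    exact ⟨n, by simpa using hn⟩
  refine ⟨Y, ?_, hAr, ?_, fun x => τ (nn x) x, ?_, ?_, ?_⟩
  · refine mforall fun γ => ?_
    rw [Set.setOf_exists]
    exact MeasurableSet.iUnion fun n => hB γ (hAm n)
  · intro γ x hx δ
    obtain ⟨n, hn⟩ := hx (δ * γ)
    exact ⟨n, by rwa [← mul_smul]⟩
  · intro d
    have : {x | τ (nn x) x = d} = ⋃ n, {x | nn x = n} ∩ {x | τ n x = d} := by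
      ext x; simp
    rw [this]
    exact MeasurableSet.iUnion fun n => (hnm n).inter ((hτ n).1 d)
  · intro x hx i
    exact ((hτ _).2.1 x (hY x hx) i).1
  · have aux : ∀ x ∈ Y, ∀ x' ∈ Y, ∀ i j, nn x < nn x' →
        τ (nn x) x i • x ≠ τ (nn x') x' j • x' := by
      intro x hx x' hx' i j hlt h
      refine ((hτ _).2.1 x' (hY x' hx') j).2 ?_
      rw [← h]
      apply hUmono (Nat.succ_le_of_lt hlt)
      exact Or.inr ⟨x, hY x hx, i, rfl⟩
    intro x hx x' hx' i j h
    change τ (nn x) x i • x = τ (nn x') x' j • x' at h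
    rcases lt_trichotomy (nn x) (nn x') with hl | he | hl
    · exact absurd h (aux x hx x' hx' i j hl)
    · have h2 := hY x' hx'
      rw [← he] at h h2
      exact (hτ _).2.2.1 x (hY x hx) x' h2 i j h
    · exact absurd h.symm (aux x' hx' x hx j i hl)
end Baire

section NiceSec
open Classical

/-- Measurable and Lipschitz. -/
def Nice (Γ : Type*) {X : Type*} [Group Γ] [MulAction Γ X] [MeasurableSpace X] (f : X → X) : Prop :=
  Measurable f ∧ ∃ S : Finset Γ, ∀ x, ∃ γ ∈ S, f x = γ • x

variable {Γ X : Type*} [Group Γ] [MulAction Γ X] [MeasurableSpace X]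

theorem Nice.id : Nice Γ (fun x : X => x) :=
  ⟨measurable_id, {1}, fun x => ⟨1, by simp, by simp⟩⟩

theorem Nice.comp {f g : X → X} (hf : Nice Γ f) (hg : Nice Γ g) : Nice Γ (fun x => f (g x)) := by
  obtain ⟨hf, S, hS⟩ := hf
  obtain ⟨hg, T, hT⟩ := hg
  refine ⟨hf.comp hg, S * T, fun x => ?_⟩
  obtain ⟨γ, hγ, h1⟩ := hS (g x)
  obtain ⟨δ, hδ, h2⟩ := hT x
  exact ⟨γ * δ, Finset.mul_mem_mul hγ hδ, by dsimp only; rw [h1, h2, mul_smul]⟩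

theorem Nice.ite {f g : X → X} {p : X → Prop} [DecidablePred p]
    (hp : MeasurableSet {x | p x}) (hf : Nice Γ f) (hg : Nice Γ g) : Nice Γ (fun x => if p x then f x else g x) := by
  obtain ⟨hf, S, hS⟩ := hf
  obtain ⟨hg, T, hT⟩ := hg
  refine ⟨Measurable.ite hp hf hg, S ∪ T, fun x => ?_⟩
  obtain ⟨γ, hγ, h1⟩ := hS x
  obtain ⟨δ, hδ, h2⟩ := hT x
  by_cases h : p x
  · exact ⟨γ, by simp [hγ], by simp [h, h1]⟩
  · exact ⟨δ, by simp [hδ], by simp [h, h2]⟩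

theorem Nice.iterate {f : X → X} (hf : Nice Γ f) (n : ℕ) : Nice Γ (f^[n]) := by
  induction n with
  | zero => exact Nice.id
  | succ n ih => exact ih.comp hf

theorem Nice.image [MeasurableEq X] (hB : ∀ γ : Γ, Measurable (fun x : X => γ • x))
    {f : X → X} (hf : Nice Γ f) {s : Set X} (hs : MeasurableSet s) : MeasurableSet (f '' s) := by
  obtain ⟨hf, S, hS⟩ := hf
  have : f '' s = ⋃ γ ∈ S, ((fun x : X => γ⁻¹ • x) ⁻¹' s ∩ {x | f (γ⁻¹ • x) = x}) := by
    ext y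
    simp only [Set.mem_image, Set.mem_iUnion, Set.mem_inter_iff, Set.mem_preimage]
    constructor
    · rintro ⟨x, hx, rfl⟩
      obtain ⟨γ, hγ, h⟩ := hS x
      refine ⟨γ, hγ, ?_, ?_⟩
      · simpa [h] using hx
      · change f (γ⁻¹ • f x) = f x
        rw [h]; simp [h]
    · rintro ⟨γ, hγ, h1, h2⟩
      exact ⟨_, h1, h2⟩
  rw [this]
  exact Finset.measurableSet_biUnion _ fun γ _ =>
    (hB _ hs).inter (measurableSet_eq_fun (hf.comp (hB _)) measurable_id)

theorem Nice.symm [MeasurableEq X] (hB : ∀ γ : Γ, Measurable (fun x : X => γ • x))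
    {e : Equiv.Perm X} (hf : Nice Γ e) : Nice Γ e.symm := by
  refine ⟨fun s hs => ?_, ?_⟩
  · rw [← Equiv.image_eq_preimage_symm]; exact hf.image hB hs
  · obtain ⟨-, S, hS⟩ := hf
    refine ⟨S⁻¹, fun x => ?_⟩
    obtain ⟨γ, hγ, h⟩ := hS (e.symm x)
    exact ⟨γ⁻¹, Finset.inv_mem_inv hγ, by rw [eq_inv_smul_iff, ← h]; simp⟩

/-- joint inverse -/
noncomputable def par {ι : Type*} (g : ι → X → X) (x : X) : X :=
  if h : ∃ q : ι × X, g q.1 q.2 = x then h.choose.2 else x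

theorem par_apply {ι : Type*} {g : ι → X → X} (hg : ∀ i j x y, g i x = g j y → i = j ∧ x = y)
    (i : ι) (x : X) : par g (g i x) = x := by
  have h : ∃ q : ι × X, g q.1 q.2 = g i x := ⟨(i, x), rfl⟩
  rw [par, dif_pos h]
  exact (hg _ _ _ _ h.choose_spec).2

theorem par_nice [MeasurableEq X] (hB : ∀ γ : Γ, Measurable (fun x : X => γ • x))
    {ι : Type*} [Fintype ι] {g : ι → X → X} (hn : ∀ i, Nice Γ (g i))
    (hg : ∀ i j x y, g i x = g j y → i = j ∧ x = y) : Nice Γ (par g) := by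
  constructor
  · intro s hs
    have : par g ⁻¹' s = (⋃ i, g i '' s) ∪ (s ∩ (⋃ i, g i '' Set.univ)ᶜ) := by
      ext x
      by_cases h : ∃ q : ι × X, g q.1 q.2 = x
      · obtain ⟨⟨i, y⟩, rfl⟩ := h
        simp only [Set.mem_preimage, par_apply hg, Set.mem_union, Set.mem_iUnion, Set.mem_image,
          Set.mem_inter_iff, Set.mem_compl_iff]
        constructor
        · intro hy; exact Or.inl ⟨i, y, hy, rfl⟩
        · rintro (⟨j, z, hz, he⟩ | ⟨_, h⟩)
          · rwa [← (hg _ _ _ _ he).2]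
          · exact absurd ⟨i, y, trivial, rfl⟩ h
      · simp only [Set.mem_preimage, par, dif_neg h, Set.mem_union, Set.mem_iUnion, Set.mem_image,
          Set.mem_inter_iff, Set.mem_compl_iff]
        constructor
        · intro hy; exact Or.inr ⟨hy, fun ⟨i, z, _, e⟩ => h ⟨(i, z), e⟩⟩
        · rintro (⟨j, z, hz, he⟩ | ⟨h, _⟩)
          · exact absurd ⟨(j, z), he⟩ h
          · exact h
    rw [this]
    exact (MeasurableSet.iUnion fun i => (hn i).image hB hs).union
      (hs.inter (MeasurableSet.iUnion fun i => (hn i).image hB MeasurableSet.univ).compl)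
  · choose hm S hS using hn
    refine ⟨insert 1 (Finset.univ.biUnion fun i => (S i)⁻¹), fun x => ?_⟩
    by_cases h : ∃ q : ι × X, g q.1 q.2 = x
    · obtain ⟨⟨i, y⟩, rfl⟩ := h
      obtain ⟨γ, hγ, h⟩ := hS i y
      refine ⟨γ⁻¹, ?_, ?_⟩
      · simp only [Finset.mem_insert, Finset.mem_biUnion]
        exact Or.inr ⟨i, Finset.mem_univ _, Finset.inv_mem_inv hγ⟩
      · simp only [par_apply hg]; rw [h]; simp
    · exact ⟨1, by simp, by simp [par, h]⟩

theorem acyclic_step [MeasurableEq X] (hB : ∀ γ : Γ, Measurable (fun x : X => γ • x))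
    {g : Fin 3 → X → X} (hn : ∀ i, Nice Γ (g i))
    (hg : ∀ i j x y, g i x = g j y → i = j ∧ x = y) :
    ∃ h0 h1 p : X → X, Nice Γ h0 ∧ Nice Γ h1 ∧ Nice Γ p ∧ (∀ x, p (h0 x) = x) ∧
      (∀ x, p (h1 x) = x) ∧ (∀ x, h0 x ≠ h1 x) ∧ (∀ x, h0 x ∉ Function.periodicPts p) ∧
      (∀ x, h1 x ∉ Function.periodicPts p) := by
  have hp := par_nice hB hn hg
  have pg := par_apply hg
  set p := par g
  set D := Function.periodicPts p with hDdef
  have hD : MeasurableSet D := by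
    have : D = ⋃ n : ℕ, {x | p^[n + 1] x = x} := by
      ext x
      simp only [hDdef, Function.mem_periodicPts, Set.mem_iUnion]
      constructor
      · rintro ⟨n, hn, h⟩
        exact ⟨n - 1, by rw [show n - 1 + 1 = n by lia]; exact h⟩
      · rintro ⟨n, h⟩; exact ⟨n + 1, by lia, h⟩
    rw [this]
    exact MeasurableSet.iUnion fun n => measurableSet_eq_fun (hp.iterate _).1 measurable_id
  have key : ∀ i j x, g i x ∈ D → g j x ∈ D → i = j := by
    intro i j x hi hj
    have := (Function.bijOn_periodicPts p).injOn hi hj (by rw [pg, pg])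
    exact (hg _ _ _ _ this).1
  have m : ∀ i, MeasurableSet {x | g i x ∈ D} := fun i => (hn i).1 hD
  refine ⟨fun x => if g 0 x ∈ D then g 2 x else g 0 x,
    fun x => if g 1 x ∈ D then g 2 x else g 1 x, p, Nice.ite (m 0) (hn 2) (hn 0),
    Nice.ite (m 1) (hn 2) (hn 1), hp, ?_, ?_, ?_, ?_, ?_⟩
  · intro x; dsimp only; split_ifs <;> exact pg _ _
  · intro x; dsimp only; split_ifs <;> exact pg _ _
  · intro x; dsimp only; split_ifs with h1 h2 h2
    · have := key _ _ _ h1 h2; simp at this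
    · intro h; have := (hg _ _ _ _ h).1; simp at this
    · intro h; have := (hg _ _ _ _ h).1; simp at this
    · intro h; have := (hg _ _ _ _ h).1; simp at this
  · intro x; dsimp only; split_ifs with h1
    · intro h2; have := key _ _ _ h1 h2; simp at this
    · exact h1
  · intro x; dsimp only; split_ifs with h1
    · intro h2; have := key _ _ _ h1 h2; simp at this
    · exact h1

theorem root_fix [MeasurableEq X] (hB : ∀ γ : Γ, Measurable (fun x : X => γ • x))
    {h0 h1 p : X → X} (n0 : Nice Γ h0) (n1 : Nice Γ h1) (np : Nice Γ p) (p0 : ∀ x, p (h0 x) = x)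
    (p1 : ∀ x, p (h1 x) = x) (hne : ∀ x, h0 x ≠ h1 x) (d0 : ∀ x, h0 x ∉ Function.periodicPts p)
    (d1 : ∀ x, h1 x ∉ Function.periodicPts p) :
    ∃ G0 G1 F : X → X, Nice Γ G0 ∧ Nice Γ G1 ∧ Nice Γ F ∧ (∀ x, F (G0 x) = x) ∧
      (∀ x, F (G1 x) = x) ∧ (∀ x, G0 x ≠ G1 x) ∧ (∀ x, G0 (F x) = x ∨ G1 (F x) = x) ∧
      (∀ x n, 0 < n → F^[n] x ≠ x) := by
  have i0 : ∀ x y, h0 x = h0 y → x = y := fun x y h => by rw [← p0 x, h, p0]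
  have i1 : ∀ x y, h1 x = h1 y → x = y := fun x y h => by rw [← p1 x, h, p1]
  have hne' : ∀ x y, h0 x ≠ h1 y := fun x y h => by
    have : x = y := by rw [← p0 x, h, p1]
    subst this; exact hne _ h
  set R : Set X := (h0 '' Set.univ ∪ h1 '' Set.univ)ᶜ with hR
  have mR : MeasurableSet R :=
    ((n0.image hB MeasurableSet.univ).union (n1.image hB MeasurableSet.univ)).compl
  set P : Set X := ⋃ j : ℕ, h0^[j] '' R with hP
  set Q : Set X := ⋃ j : ℕ, h1^[j + 1] '' R with hQ
  have mP : MeasurableSet P := MeasurableSet.iUnion fun j => (n0.iterate j).image hB mR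
  have mQ : MeasurableSet Q := MeasurableSet.iUnion fun j => (n1.iterate _).image hB mR
  have R0 : ∀ x, h0 x ∉ R := fun x h => h (Or.inl ⟨x, trivial, rfl⟩)
  have R1 : ∀ x, h1 x ∉ R := fun x h => h (Or.inr ⟨x, trivial, rfl⟩)
  have cases3 : ∀ x, x ∈ R ∨ (∃ y, x = h0 y) ∨ ∃ y, x = h1 y := by
    intro x
    by_cases h : x ∈ R
    · exact Or.inl h
    · right
      simp only [hR, Set.mem_compl_iff, not_not] at h
      rcases h with ⟨y, -, h⟩ | ⟨y, -, h⟩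
      · exact Or.inl ⟨y, h.symm⟩
      · exact Or.inr ⟨y, h.symm⟩
  have RP : ∀ x ∈ R, x ∈ P := fun x h => Set.mem_iUnion.2 ⟨0, x, h, rfl⟩
  have P0 : ∀ x, h0 x ∈ P ↔ x ∈ P := by
    intro x
    constructor
    · intro h
      obtain ⟨j, r, hr, e⟩ := Set.mem_iUnion.1 h
      cases j with
      | zero => exact absurd (e ▸ hr : h0 x ∈ R) (R0 x)
      | succ j =>
        rw [Function.iterate_succ_apply'] at e
        exact Set.mem_iUnion.2 ⟨j, r, hr, i0 _ _ e⟩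
    · intro h
      obtain ⟨j, r, hr, e⟩ := Set.mem_iUnion.1 h
      exact Set.mem_iUnion.2 ⟨j + 1, r, hr, by rw [Function.iterate_succ_apply', e]⟩
  have P1 : ∀ x, h1 x ∉ P := by
    intro x h
    obtain ⟨j, r, hr, e⟩ := Set.mem_iUnion.1 h
    cases j with
    | zero => exact absurd (e ▸ hr : h1 x ∈ R) (R1 x)
    | succ j =>
      rw [Function.iterate_succ_apply'] at e
      exact hne' _ _ e
  have Q0 : ∀ x, h0 x ∉ Q := by
    intro x h
    obtain ⟨j, r, hr, e⟩ := Set.mem_iUnion.1 h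
    rw [Function.iterate_succ_apply'] at e
    exact hne' _ _ e.symm
  have Q1 : ∀ x, h1 x ∈ Q ↔ (x ∈ R ∨ x ∈ Q) := by
    intro x
    constructor
    · intro h
      obtain ⟨j, r, hr, e⟩ := Set.mem_iUnion.1 h
      rw [Function.iterate_succ_apply'] at e
      have e := i1 _ _ e
      cases j with
      | zero => left; exact (e ▸ hr : x ∈ R)
      | succ j => right; exact Set.mem_iUnion.2 ⟨j, r, hr, e⟩
    · rintro (h | h)
      · exact Set.mem_iUnion.2 ⟨0, x, h, rfl⟩
      · obtain ⟨j, r, hr, e⟩ := Set.mem_iUnion.1 h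
        exact Set.mem_iUnion.2 ⟨j + 1, r, hr, by rw [Function.iterate_succ_apply', e]⟩
  have RQ : ∀ x ∈ R, x ∉ Q := by
    intro x hx h
    obtain ⟨j, r, hr, e⟩ := Set.mem_iUnion.1 h
    rw [Function.iterate_succ_apply'] at e
    exact R1 _ (e ▸ hx)
  clear_value R P Q
  let G0 : X → X := fun x => if x ∈ R then h1 (h1 x) else if x ∈ P then p x else h0 x
  let G1 : X → X := fun x => if x ∈ Q then h1 (h1 x) else h1 x
  let F : X → X := fun x => if x ∈ P then h0 x else if x ∈ Q ∩ p ⁻¹' Q then p (p x) else p x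
  refine ⟨G0, G1, F, Nice.ite mR (n1.comp n1) (Nice.ite mP np n0), Nice.ite mQ (n1.comp n1) n1,
    Nice.ite mP n0 (Nice.ite (mQ.inter (np.1 mQ)) (np.comp np) np), ?_, ?_, ?_, ?_, ?_⟩
  · intro x
    rcases cases3 x with h | ⟨y, rfl⟩ | ⟨y, rfl⟩
    · simp [G0, F, h, P1, Q1, p1]
    · by_cases h : y ∈ P
      · simp [G0, F, h, R0, P0, p0]
      · simp [G0, F, h, R0, P0, p0, Q0]
    · simp [G0, F, R1, P1, P0, p0, Q0]
  · intro x
    by_cases h : x ∈ Q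
    · simp [G1, F, h, P1, Q1, p1]
    · simp [G1, F, h, P1, Q1, p1]
  · intro x
    rcases cases3 x with h | ⟨y, rfl⟩ | ⟨y, rfl⟩
    · simp only [G0, G1, h, RQ x h, if_true, if_false]
      intro e
      exact R1 x (by rw [i1 _ _ e]; exact h)
    · by_cases h : y ∈ P
      · simp only [G0, G1, R0, P0, h, Q0, if_true, if_false, p0]
        intro e; rw [e] at h; exact P1 _ h
      · simp only [G0, G1, R0, P0, h, Q0, if_false]
        exact hne' _ _
    · simp only [G0, G1, R1, P1, if_false]
      split_ifs
      · exact hne' _ _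
      · exact hne' _ _
  · intro y
    by_cases hy : y ∈ P
    · left; simp [F, G0, hy, R0, P0, p0]
    · rcases cases3 y with h | ⟨x, rfl⟩ | ⟨x, rfl⟩
      · exact absurd (RP _ h) hy
      · left
        have hx : x ∉ P := fun h => hy ((P0 x).2 h)
        have hx' : x ∉ R := fun h => hx (RP x h)
        simp [F, G0, hx, hx', P0, Q0, p0]
      · by_cases hx : x ∈ Q
        · rcases cases3 x with h | ⟨z, rfl⟩ | ⟨z, rfl⟩
          · exact absurd hx (RQ _ h)
          · exact absurd hx (Q0 _)
          · rcases (Q1 z).1 hx with h | h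
            · left; simp [F, G0, h, P1, Q1, p1]
            · right; simp [F, G1, h, P1, Q1, p1]
        · right; simp [F, G1, hx, P1, Q1, p1]
  · have caseP : ∀ x n, 0 < n → x ∈ P → F^[n] x ≠ x := by
      intro x n hn hx e
      have : ∀ n, F^[n] x = h0^[n] x ∧ F^[n] x ∈ P := by
        intro n
        induction n with
        | zero => exact ⟨rfl, hx⟩
        | succ n ih =>
          rw [Function.iterate_succ_apply', Function.iterate_succ_apply', ← ih.1]
          have e3 : F (F^[n] x) = h0 (F^[n] x) := if_pos ih.2
          rw [e3]
          exact ⟨rfl, (P0 _).2 ih.2⟩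
      rw [(this n).1] at e
      have hper : p^[n] x = x := by
        conv_lhs => rw [← e]
        exact Function.LeftInverse.iterate p0 n x
      obtain ⟨k, rfl⟩ : ∃ k, n = k + 1 := ⟨n - 1, by lia⟩
      rw [Function.iterate_succ_apply'] at e
      apply d0 (h0^[k] x)
      rw [e]
      exact ⟨k + 1, hn, hper⟩
    intro x n hn e
    by_cases hk : ∃ k, F^[k] x ∈ P
    · obtain ⟨k, hk⟩ := hk
      refine caseP _ n hn hk ?_
      rw [← Function.iterate_add_apply, add_comm, Function.iterate_add_apply, e]
    · push Not at hk
      have : ∀ n, ∃ m, n ≤ m ∧ F^[n] x = p^[m] x := by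
        intro n
        induction n with
        | zero => exact ⟨0, le_rfl, rfl⟩
        | succ n ih =>
          obtain ⟨m, hm, e⟩ := ih
          have h1 := hk n
          rw [Function.iterate_succ_apply']
          by_cases h2 : F^[n] x ∈ Q ∩ p ⁻¹' Q
          · refine ⟨m + 2, by lia, ?_⟩
            rw [Function.iterate_succ_apply', Function.iterate_succ_apply', ← e]
            simp only [F, if_neg h1, if_pos h2]
          · refine ⟨m + 1, by lia, ?_⟩
            rw [Function.iterate_succ_apply', ← e]
            simp only [F, if_neg h1, if_neg h2]
      obtain ⟨m, hm, e2⟩ := this n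
      have hx : x ∈ Function.periodicPts p := ⟨m, by lia, by rw [Function.IsPeriodicPt, Function.IsFixedPt, ← e2, e]⟩
      rcases cases3 x with h | ⟨y, rfl⟩ | ⟨y, rfl⟩
      · exact hk 0 (RP _ h)
      · exact d0 _ hx
      · exact d1 _ hx

end NiceSec

section FreeSec
open Classical

/-- the generator s -/
def sF {X : Type*} (G : Bool → X → X) (l : X → Bool) (f : X → X) (x : X) : X :=
  if l x = true then G false (G true x)
  else if l (f x) = true then G false (G true (G false (f (f x))))
  else if l (f (f x)) = true then f (f x) else f x

/-- its inverse -/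
def sI {X : Type*} (G : Bool → X → X) (l : X → Bool) (f : X → X) (x : X) : X :=
  if l x = true then G false (G false x)
  else if l (f x) = true then
    (if l (f (f x)) = true then f (f x) else G false (G true (f (f (f x)))))
  else G false x

/-- the generator t -/
def tF {X : Type*} (G : Bool → X → X) (l : X → Bool) (f : X → X) (x : X) : X :=
  if l x = true then
    (if l (f x) = true then G true (G true (G false (f (f x))))
    else if l (f (f x)) = true then G false (f (f (f x))) else G true (G false (f (f (f x)))))
  else G true (G true (G true (f x)))

/-- its inverse -/
def tI {X : Type*} (G : Bool → X → X) (l : X → Bool) (f : X → X) (x : X) : X :=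
  if l x = true then
    (if l (f x) = true then
      (if l (f (f x)) = true then G false (f (f (f x))) else G true (G true (f (f (f x)))))
    else G true (G false (G false (f (f x)))))
  else G true (G false (G true (f x)))

/-- the upward letter -/
def cF {X : Type*} (l : X → Bool) (f : X → X) (x : X) : Fin 2 × Bool :=
  (if l x = true then 1 else 0, !(l (f x)))

theorem word_down {X : Type*} {L : Fin 2 × Bool → Equiv.Perm X} {c : X → Fin 2 × Bool}
    (hL : ∀ a, L (a.1, !a.2) = (L a)⁻¹)
    (K : ∀ a x, c x ≠ a → c (L a x) = (a.1, !a.2)) :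
    ∀ (w : List (Fin 2 × Bool)), FreeGroup.IsReduced w → ∀ x, (∀ a ∈ w.getLast?, c x ≠ a) →
      (∀ a ∈ w.head?, c ((w.map L).prod x) = (a.1, !a.2)) ∧
      (fun x => L (c x) x)^[w.length] ((w.map L).prod x) = x := by
  intro w
  induction w with
  | nil => intro _ x _; simp
  | cons a w ih =>
    intro hw x hx
    have hz : c ((w.map L).prod x) ≠ a := by
      cases w with
      | nil => simpa using hx
      | cons b w =>
        have h1 := (ih (hw.tail) x (by simpa using hx)).1 b (by simp)
        rw [h1]
        rintro rfl
        have := (FreeGroup.isReduced_cons_cons.1 hw).1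
        simp at this
    have hw' : FreeGroup.IsReduced w := hw.tail
    have h2 : (fun x => L (c x) x)^[w.length] ((w.map L).prod x) = x := by
      cases w with
      | nil => simp
      | cons b w => exact (ih hw' x (by simpa using hx)).2
    have h3 := K a _ hz
    refine ⟨?_, ?_⟩
    · intro a' ha'
      simp at ha'
      subst ha'
      simpa using h3
    · rw [List.length_cons, Function.iterate_succ_apply]
      simp only [List.map_cons, List.prod_cons, Equiv.Perm.mul_apply]
      rw [h3, hL]
      simp only [Equiv.Perm.inv_def, Equiv.symm_apply_apply]
      exact h2

theorem free_of_tree {X : Type*} {s t : Equiv.Perm X} {c : X → Fin 2 × Bool}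
    {L : Fin 2 × Bool → Equiv.Perm X}
    (hL : ∀ a, L a = if a.2 then ![s, t] a.1 else (![s, t] a.1)⁻¹)
    (K : ∀ a x, c x ≠ a → c (L a x) = (a.1, !a.2))
    (hac : ∀ x n, 0 < n → (fun x => L (c x) x)^[n] x ≠ x)
    (w : FreeGroup (Fin 2)) (hw : w ≠ 1) (x : X) : FreeGroup.lift ![s, t] w x ≠ x := by
  have hL' : ∀ a, L (a.1, !a.2) = (L a)⁻¹ := by
    rintro ⟨i, b⟩
    rw [hL, hL]
    cases b <;> simp
  have hmk : ∀ v : List (Fin 2 × Bool), FreeGroup.lift ![s, t] (FreeGroup.mk v) = (v.map L).prod := by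
    intro v
    rw [FreeGroup.lift_mk]
    congr 1
    apply List.map_congr_left
    intro a _
    rw [hL]
    cases a.2 <;> simp
  have main : ∀ v : List (Fin 2 × Bool), v ≠ [] → FreeGroup.IsCyclicallyReduced v → ∀ x,
      FreeGroup.lift ![s, t] (FreeGroup.mk v) x ≠ x := by
    intro v hv hcr x e
    have hlen : 0 < v.length := List.length_pos_iff.2 hv
    have e2 : FreeGroup.lift ![s, t] (FreeGroup.mk (FreeGroup.invRev v)) x = x := by
      rw [← FreeGroup.inv_mk, map_inv, Equiv.Perm.inv_eq_iff_eq, e]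
    rw [hmk] at e e2
    have hl : v.getLast hv = c x := by
      by_contra hne
      have := (word_down hL' K v hcr.1 x (by
        intro a ha
        rw [List.getLast?_eq_getLast_of_ne_nil hv] at ha
        simp at ha
        rw [← ha]; exact fun h => hne h.symm)).2
      rw [e] at this
      exact hac x _ hlen this
    have hh : ((v.head hv).1, !(v.head hv).2) = c x := by
      by_contra hne
      have := (word_down hL' K (FreeGroup.invRev v) (by
        rw [FreeGroup.isReduced_iff_reduce_eq, FreeGroup.reduce_invRev,
          FreeGroup.IsReduced.reduce_eq hcr.1]) x (by
        intro a ha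
        rw [FreeGroup.invRev, List.getLast?_reverse, List.head?_map, List.head?_eq_some_head hv] at ha
        simp at ha
        rw [← ha]; exact fun h => hne h.symm)).2
      rw [e2] at this
      exact hac x _ (by simpa using hlen) this
    have h3 := hcr.2 _ (List.getLast?_eq_getLast_of_ne_nil hv) _ (List.head?_eq_some_head hv)
    rw [hl, ← hh] at h3
    simp at h3
  intro e
  set v := w.toWord with hv
  have h1 := FreeGroup.reduceCyclically.conj_conjugator_reduceCyclically v
  set g := FreeGroup.mk (FreeGroup.reduceCyclically.conjugator v) with hg
  set u := FreeGroup.reduceCyclically v with hu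
  have h2 : w = g * FreeGroup.mk u * g⁻¹ := by
    rw [hg, FreeGroup.inv_mk, FreeGroup.mul_mk, FreeGroup.mul_mk, h1, hv, FreeGroup.mk_toWord]
  have hun : u ≠ [] := by
    intro h
    rw [h] at h2
    apply hw
    rw [h2, ← FreeGroup.one_eq_mk]; simp
  apply main u hun (FreeGroup.reduceCyclically.isCyclicallyReduced FreeGroup.isReduced_toWord)
    ((FreeGroup.lift ![s, t] g)⁻¹ x)
  rw [h2] at e
  simp only [map_mul, map_inv, Equiv.Perm.mul_apply] at e
  rw [Equiv.Perm.eq_inv_iff_eq]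
  exact e

theorem free_action {Γ X : Type*} [Group Γ] [MulAction Γ X] [MeasurableSpace X]
    [MeasurableEq X] (hB : ∀ γ : Γ, Measurable (fun x : X => γ • x))
    {G0 G1 f : X → X} (n0 : Nice Γ G0) (n1 : Nice Γ G1) (nf : Nice Γ f)
    (f0 : ∀ x, f (G0 x) = x) (f1 : ∀ x, f (G1 x) = x) (hne : ∀ x, G0 x ≠ G1 x)
    (hc : ∀ x, G0 (f x) = x ∨ G1 (f x) = x) (hac : ∀ x n, 0 < n → f^[n] x ≠ x) :
    ∃ b : FreeGroup (Fin 2) →* Equiv.Perm X, (∀ w, Nice Γ (b w)) ∧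
      ∀ w, w ≠ 1 → ∀ x, b w x ≠ x := by
  let l : X → Bool := fun x => decide (G1 (f x) = x)
  let G : Bool → X → X := fun b => if b then G1 else G0
  have fG : ∀ b x, f (G b x) = x := by
    rintro (_ | _) x
    · exact f0 x
    · exact f1 x
  have lG : ∀ b x, l (G b x) = b := by
    rintro (_ | _) x
    · simp only [l, G]
      rw [if_neg (by simp), f0]
      simpa using (hne x).symm
    · simp [l, G, f1]
  have Gl : ∀ x, G (l x) (f x) = x := by
    intro x
    by_cases h : G1 (f x) = x
    · simp [G, l, h]
    · simpa [G, l, h] using (hc x).resolve_right h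
  have ml : MeasurableSet {x | l x = true} := by
    have : {x | l x = true} = {x | G1 (f x) = x} := by ext; simp [l]
    rw [this]
    exact measurableSet_eq_fun (n1.comp nf).1 measurable_id
  have nG : ∀ b, Nice Γ (G b) := by
    rintro (_ | _)
    · exact n0
    · exact n1
  clear_value l G
  have dec : ∀ x, ∃ a b c y, x = G a (G b (G c y)) := fun x =>
    ⟨l x, l (f x), l (f (f x)), f (f (f x)), by rw [Gl, Gl, Gl]⟩
  let s : Equiv.Perm X := ⟨sF G l f, sI G l f, by
    intro x
    obtain ⟨a, b, c, y, rfl⟩ := dec x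
    cases a <;> cases b <;> cases c <;> simp [sF, sI, fG, lG], by
    intro x
    obtain ⟨a, b, c, y, rfl⟩ := dec x
    cases a <;> cases b <;> cases c <;> simp [sF, sI, fG, lG]⟩
  let t : Equiv.Perm X := ⟨tF G l f, tI G l f, by
    intro x
    obtain ⟨a, b, c, y, rfl⟩ := dec x
    cases a <;> cases b <;> cases c <;> simp [tF, tI, fG, lG], by
    intro x
    obtain ⟨a, b, c, y, rfl⟩ := dec x
    cases a <;> cases b <;> cases c <;> simp [tF, tI, fG, lG]⟩
  have ml1 : MeasurableSet {x | l (f x) = true} := nf.1 ml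
  have ml2 : MeasurableSet {x | l (f (f x)) = true} := (nf.comp nf).1 ml
  have nf2 := nf.comp nf
  have nf3 := nf.comp nf2
  have ns : Nice Γ s := by
    change Nice Γ (fun x => sF G l f x)
    unfold sF
    exact Nice.ite ml ((nG _).comp (nG _)) (Nice.ite ml1
      ((nG _).comp ((nG _).comp ((nG _).comp nf2))) (Nice.ite ml2 nf2 nf))
  have nt : Nice Γ t := by
    change Nice Γ (fun x => tF G l f x)
    unfold tF
    exact Nice.ite ml (Nice.ite ml1 ((nG _).comp ((nG _).comp ((nG _).comp nf2)))
      (Nice.ite ml2 ((nG _).comp nf3) ((nG _).comp ((nG _).comp nf3))))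
      ((nG _).comp ((nG _).comp ((nG _).comp nf)))
  let L : Fin 2 × Bool → Equiv.Perm X := fun a => if a.2 then ![s, t] a.1 else (![s, t] a.1)⁻¹
  have L00 : ∀ x, L (0, true) x = sF G l f x := fun x => rfl
  have L01 : ∀ x, L (0, false) x = sI G l f x := fun x => rfl
  have L10 : ∀ x, L (1, true) x = tF G l f x := fun x => rfl
  have L11 : ∀ x, L (1, false) x = tI G l f x := fun x => rfl
  refine ⟨FreeGroup.lift ![s, t], ?_, ?_⟩
  · intro w
    induction w using FreeGroup.induction_on with
    | C1 => rw [map_one]; exact Nice.id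
    | of i => 
      rw [FreeGroup.lift_apply_of]
      fin_cases i
      · exact ns
      · exact nt
    | inv_of i h => 
      rw [map_inv]
      exact Nice.symm hB h
    | mul x y hx hy =>
      rw [map_mul]
      exact hx.comp hy
  · refine free_of_tree (c := cF l f) (L := L) (fun a => rfl) ?_ ?_
    · rintro ⟨i, e⟩ x
      obtain ⟨a, b, c, y, rfl⟩ := dec x
      fin_cases i <;> cases e <;> cases a <;> cases b <;> cases c <;>
        simp [L00, L01, L10, L11, sF, sI, tF, tI, fG, lG, cF]
    · have step : ∀ x, f (f (L (cF l f x) x)) = f (f (f x)) ∨ f (L (cF l f x) x) = f (f (f x)) := by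
        intro x
        obtain ⟨a, b, c, y, rfl⟩ := dec x
        cases a <;> cases b <;> cases c <;>
          simp [L00, L01, L10, L11, sF, sI, tF, tI, fG, lG, cF]
      have itadd : ∀ i j x, f^[i] (f^[j] x) = f^[i + j] x := fun i j x =>
        (Function.iterate_add_apply f i j x).symm
      intro x n hn e
      have : ∀ n, ∃ a k, n ≤ k ∧ f^[a] ((fun x => L (cF l f x) x)^[n] x) = f^[k] (f^[a] x) := by
        intro n
        induction n with
        | zero => exact ⟨0, 0, le_rfl, rfl⟩
        | succ n ih =>
          obtain ⟨a, k, hk, h⟩ := ih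
          rw [Function.iterate_succ_apply']
          set z := (fun x => L (cF l f x) x)^[n] x
          rcases step z with h1 | h1
          · refine ⟨a + 2, k + 1, by lia, ?_⟩
            have : f^[a + 2] (L (cF l f z) z) = f^[a + 3] z := by
              rw [Function.iterate_add_apply, Function.iterate_add_apply f a 3]
              exact congrArg _ h1
            rw [this, add_comm a 3, Function.iterate_add_apply, h]
            simp only [itadd]
            exact congrArg (fun m => f^[m] x) (by lia)
          · refine ⟨a + 1, k + 2, by lia, ?_⟩
            have : f^[a + 1] (L (cF l f z) z) = f^[a + 3] z := by
              rw [Function.iterate_add_apply, Function.iterate_add_apply f a 3]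
              exact congrArg _ h1
            rw [this, add_comm a 3, Function.iterate_add_apply, h]
            simp only [itadd]
            exact congrArg (fun m => f^[m] x) (by lia)
      obtain ⟨a, k, hk, h⟩ := this n
      rw [e] at h
      exact hac _ k (by lia) h.symm

theorem nice_main {Γ X : Type*} [Group Γ] [MulAction Γ X] [MeasurableSpace X]
    [MeasurableEq X] (hB : ∀ γ : Γ, Measurable (fun x : X => γ • x))
    {g : Fin 3 → X → X} (hn : ∀ i, Nice Γ (g i))
    (hg : ∀ i j x y, g i x = g j y → i = j ∧ x = y) :
    ∃ b : FreeGroup (Fin 2) →* Equiv.Perm X, (∀ w, Nice Γ (b w)) ∧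
      ∀ w, w ≠ 1 → ∀ x, b w x ≠ x := by
  obtain ⟨h0, h1, p, a1, a2, a3, a4, a5, a6, a7, a8⟩ := acyclic_step hB hn hg
  obtain ⟨G0, G1, F, b1, b2, b3, b4, b5, b6, b7, b8⟩ := root_fix hB a1 a2 a3 a4 a5 a6 a7 a8
  exact free_action hB b1 b2 b3 b4 b5 b6 b7 b8

end FreeSec

section Core
open Classical

/-- sets whose trace on `Y` is measurable -/
@[reducible]
def traceSpace {X : Type*} (m : MeasurableSpace X) (Y : Set X) (hY : MeasurableSet Y) :
    MeasurableSpace X where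
  MeasurableSet' s := @MeasurableSet X m (s ∩ Y)
  measurableSet_empty := by simp
  measurableSet_compl s hs := by
    have : sᶜ ∩ Y = Y \ (s ∩ Y) := by ext; simp; tauto
    rw [this]
    exact hY.diff hs
  measurableSet_iUnion s hs := by
    rw [Set.iUnion_inter]
    exact MeasurableSet.iUnion hs

theorem core {Γ X : Type*} [Group Γ] [Countable Γ] [TopologicalSpace X] [PolishSpace X]
    [m : MeasurableSpace X] [BorelSpace X] [MulAction Γ X]
    (hB : ∀ γ : Γ, Measurable (fun x : X => γ • x))
    (h : Bool → X → X) (hinj : ∀ a b x y, h a x = h b y → a = b ∧ x = y)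
    (S0 : Finset Γ) (hS0 : ∀ b x, ∃ γ ∈ S0, h b x = γ • x) :
    ∃ b : FreeGroup (Fin 2) →* Equiv.Perm X,
      (∀ w : FreeGroup (Fin 2), BaireMeasurableFun (⇑(b w))) ∧
      (∀ w : FreeGroup (Fin 2), w ≠ 1 → ∀ x : X, b w x ≠ x) ∧
      (∀ w : FreeGroup (Fin 2), ∃ S : Finset Γ, ∀ x : X, ∃ γ ∈ S, b w x = γ • x) := by
  have hS : ∀ F : Finset X, 6 * F.card ≤ (nb (NN (S0 * (S0 * S0))) ∅ F).card := by
    intro F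
    let φ : (Bool × Bool × Bool) × X → X := fun q => h q.1.1 (h q.1.2.1 (h q.1.2.2 q.2))
    have hφ : Function.Injective φ := by
      rintro ⟨⟨a, b, c⟩, x⟩ ⟨⟨a', b', c'⟩, x'⟩ e
      obtain ⟨e1, e⟩ := hinj _ _ _ _ e
      obtain ⟨e2, e⟩ := hinj _ _ _ _ e
      obtain ⟨e3, e⟩ := hinj _ _ _ _ e
      simp only at e1 e2 e3 e
      rw [e1, e2, e3, e]
    have hsub : (Finset.univ ×ˢ F).image φ ⊆ nb (NN (S0 * (S0 * S0))) ∅ F := by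
      intro y hy
      obtain ⟨⟨⟨a, b, c⟩, x⟩, hx, rfl⟩ := Finset.mem_image.1 hy
      have hxF : x ∈ F := (Finset.mem_product.1 hx).2
      obtain ⟨γ3, h3, e3⟩ := hS0 c x
      obtain ⟨γ2, h2, e2⟩ := hS0 b (h c x)
      obtain ⟨γ1, h1, e1⟩ := hS0 a (h b (h c x))
      rw [mem_nb]
      refine ⟨⟨x, hxF, ?_⟩, by simp⟩
      rw [mem_NN]
      refine ⟨γ1 * (γ2 * γ3), Finset.mul_mem_mul h1 (Finset.mul_mem_mul h2 h3), ?_⟩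
      simp only [φ]
      rw [e1, e2, e3, mul_smul, mul_smul]
    have := Finset.card_le_card hsub
    rw [Finset.card_image_of_injective _ hφ, Finset.card_product] at this
    have h8 : (Finset.univ : Finset (Bool × Bool × Bool)).card = 8 := rfl
    rw [h8] at this
    lia
  obtain ⟨Y, hYm, hYr, hYi, c, hcm, hcS, hcinj⟩ := exists_matching hB _ hS
  set S := S0 * (S0 * S0)
  have hYi' : ∀ (γ : Γ) x, γ • x ∈ Y → x ∈ Y := fun γ x hx => by
    simpa using hYi γ⁻¹ _ hx
  let k : Fin 3 → X → X := ![fun x => h false (h false x), fun x => h false (h true x), h true]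
  have hk : ∀ i, ∃ T : Finset Γ, ∀ x, ∃ γ ∈ T, k i x = γ • x := by
    have two : ∀ a b, ∃ T : Finset Γ, ∀ x, ∃ γ ∈ T, h a (h b x) = γ • x := by
      intro a b
      refine ⟨S0 * S0, fun x => ?_⟩
      obtain ⟨γ3, h3, e3⟩ := hS0 b x
      obtain ⟨γ2, h2, e2⟩ := hS0 a (h b x)
      exact ⟨γ2 * γ3, Finset.mul_mem_mul h2 h3, by rw [e2, e3, mul_smul]⟩
    intro i
    fin_cases i
    · exact two _ _
    · exact two _ _
    · exact ⟨S0, hS0 true⟩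
  have kinj : ∀ i j x y, k i x = k j y → i = j ∧ x = y := by
    intro i j x y e
    fin_cases i <;> fin_cases j <;> simp [k] at e <;>
      first
      | (have e1 := hinj _ _ _ _ e
         simp at e1
         done)
      | (have e1 := (hinj _ _ _ _ (hinj _ _ _ _ e).2)
         simp at e1
         done)
      | exact ⟨rfl, (hinj _ _ _ _ (hinj _ _ _ _ e).2).2⟩
      | exact ⟨rfl, (hinj _ _ _ _ e).2⟩
  choose T hT using hk
  have hkY : ∀ i x, k i x ∈ Y → x ∈ Y := by
    intro i x hx
    obtain ⟨γ, -, e⟩ := hT i x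
    rw [e] at hx
    exact hYi' _ _ hx
  let g : Fin 3 → X → X := fun i x => if x ∈ Y then c x i • x else k i x
  have ginj : ∀ i j x y, g i x = g j y → i = j ∧ x = y := by
    intro i j x y e
    by_cases hx : x ∈ Y <;> by_cases hy : y ∈ Y <;> simp only [g, hx, hy, if_true, if_false] at e
    · exact (hcinj x hx y hy i j e).symm
    · exact absurd (hkY j y (e ▸ hYi _ _ hx)) hy
    · exact absurd (hkY i x (e ▸ hYi _ _ hy)) hx
    · exact kinj _ _ _ _ e
  have hle : ∀ s, @MeasurableSet X m s → @MeasurableSet X (traceSpace m Y hYm) s :=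
    fun s hs => MeasurableSet.inter hs hYm
  have hB' : ∀ γ : Γ, @Measurable X X (traceSpace m Y hYm) (traceSpace m Y hYm) (fun x => γ • x) := by
    intro γ s hs
    change @MeasurableSet X m _
    have : (fun x : X => γ • x) ⁻¹' s ∩ Y = (fun x : X => γ • x) ⁻¹' (s ∩ Y) := by
      ext x
      constructor
      · rintro ⟨h1, h2⟩; exact ⟨h1, hYi _ _ h2⟩
      · rintro ⟨h1, h2⟩; exact ⟨h1, hYi' _ _ h2⟩
    rw [this]
    exact hB γ hs
  have hE : @MeasurableEq X (traceSpace m Y hYm) := by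
    have hle2 : m ≤ traceSpace m Y hYm := hle
    have hpr : m.prod m ≤ (traceSpace m Y hYm).prod (traceSpace m Y hYm) :=
      sup_le_sup (MeasurableSpace.comap_mono hle2) (MeasurableSpace.comap_mono hle2)
    exact @MeasurableEq.mk X (traceSpace m Y hYm) (hpr _ (measurableSet_diagonal (α := X)))
  have hN : ∀ i, @Nice Γ X _ _ (traceSpace m Y hYm) (g i) := by
    intro i
    constructor
    · intro s hs
      change @MeasurableSet X m _
      have hci : ∀ γ : Γ, @MeasurableSet X m {x | c x i = γ} := by
        intro γ
        have : {x | c x i = γ} = ⋃ d : {d : Fin 3 → Γ // d i = γ}, {x | c x = d.1} := by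
          ext x
          simp only [Set.mem_iUnion]
          constructor
          · intro h; exact ⟨⟨c x, h⟩, rfl⟩
          · rintro ⟨⟨d, hd⟩, e⟩
            have e : c x = d := e
            change c x i = γ
            rw [e, hd]
        rw [this]
        exact MeasurableSet.iUnion fun d => hcm d.1
      have : g i ⁻¹' s ∩ Y = ⋃ γ : Γ, ({x | c x i = γ} ∩ ((fun x : X => γ • x) ⁻¹' s ∩ Y)) := by
        ext x
        simp only [Set.mem_iUnion, Set.mem_inter_iff, Set.mem_preimage]
        constructor
        · rintro ⟨h1, h2⟩
          simp only [g, h2, if_true] at h1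
          exact ⟨c x i, rfl, h1, h2⟩
        · rintro ⟨γ, e, h1, h2⟩
          have e : c x i = γ := e
          simp only [g, h2, if_true, e]
          exact ⟨h1, trivial⟩
      rw [this]
      exact MeasurableSet.iUnion fun γ => (hci γ).inter (hB' γ hs)
    · refine ⟨S ∪ T i, fun x => ?_⟩
      by_cases hx : x ∈ Y
      · exact ⟨c x i, by simp [hcS x hx i], by simp [g, hx]⟩
      · obtain ⟨γ, h1, h2⟩ := hT i x
        exact ⟨γ, by simp [h1], by simp [g, hx, h2]⟩
  obtain ⟨b, hb, hfree⟩ := @nice_main Γ X _ _ (traceSpace m Y hYm) hE hB' g hN ginj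
  refine ⟨b, ?_, hfree, fun w => (hb w).2⟩
  intro w s hs
  have h1 : @MeasurableSet X m (b w ⁻¹' s ∩ Y) := (hb w).1 (hle s hs)
  have h2 : b w ⁻¹' s = (b w ⁻¹' s ∩ Y) ∪ (b w ⁻¹' s \ Y) := (Set.inter_union_sdiff _ _).symm
  rw [h2]
  refine h1.baireMeasurableSet.union (IsMeagre.baireMeasurableSet ?_)
  have : IsMeagre Yᶜ := by rwa [IsMeagre, compl_compl]
  exact this.mono (fun x hx => hx.2)

end Core

/-- **Theorem (Marks–Unger).** If `a` is a nonamenable (equivalently, paradoxical) action of a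
group `Γ` on a Polish space `X` by Borel automorphisms, then there is a free `a`-Lipschitz
action of the free group `F₂` on `X` by Baire measurable automorphisms. -/
theorem dynamical_vnd {Γ X : Type*} [Group Γ] [TopologicalSpace X] [PolishSpace X]
    [MeasurableSpace X] [BorelSpace X] [MulAction Γ X]
    (hBorelAction : ∀ γ : Γ, Measurable (fun x : X => γ • x))
    (hpara : ∃ (n m : ℕ) (A : Fin n → Set X) (B : Fin m → Set X) (α : Fin n → Γ)
      (β : Fin m → Γ), IsParadoxicalDecomposition A B α β) :
    ∃ b : FreeGroup (Fin 2) →* Equiv.Perm X,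
      -- the action is by Baire measurable automorphisms
      (∀ w : FreeGroup (Fin 2), BaireMeasurableFun (⇑(b w))) ∧
      -- the action is free
      (∀ w : FreeGroup (Fin 2), w ≠ 1 → ∀ x : X, b w x ≠ x) ∧
      -- the action is `a`-Lipschitz
      (∀ w : FreeGroup (Fin 2), ∃ S : Finset Γ, ∀ x : X, ∃ γ ∈ S, b w x = γ • x) := by
  classical
  obtain ⟨n, m, A, B, α, β, hA, hB, hAB, -, -, -, hαu, hβu⟩ := hpara
  have e1 : ∀ x : X, ∃ i, ∃ a ∈ A i, α i • a = x := by
    intro x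
    have : x ∈ ⋃ i, α i • A i := hαu ▸ Set.mem_univ x
    obtain ⟨i, hi⟩ := Set.mem_iUnion.1 this
    exact ⟨i, Set.mem_smul_set.1 hi⟩
  have e2 : ∀ x : X, ∃ j, ∃ a ∈ B j, β j • a = x := by
    intro x
    have : x ∈ ⋃ i, β i • B i := hβu ▸ Set.mem_univ x
    obtain ⟨i, hi⟩ := Set.mem_iUnion.1 this
    exact ⟨i, Set.mem_smul_set.1 hi⟩
  choose i1 a1 hA1 ha1 using e1
  choose i2 a2 hA2 ha2 using e2
  let T0 : Finset Γ := (Finset.univ.image fun i => (α i)⁻¹) ∪ (Finset.univ.image fun i => (β i)⁻¹)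
  let H : Subgroup Γ := (FreeGroup.lift (fun a : T0 => (a : Γ))).range
  have hH : ∀ γ ∈ T0, γ ∈ H := fun γ hγ => ⟨FreeGroup.of ⟨γ, hγ⟩, by simp⟩
  have hT1 : ∀ i, (α i)⁻¹ ∈ T0 := fun i =>
    Finset.mem_union_left _ (Finset.mem_image_of_mem _ (Finset.mem_univ i))
  have hT2 : ∀ i, (β i)⁻¹ ∈ T0 := fun i =>
    Finset.mem_union_right _ (Finset.mem_image_of_mem _ (Finset.mem_univ i))
  have hHc : Countable H := by
    have : (Set.range (FreeGroup.lift (fun a : T0 => (a : Γ)))).Countable := Set.countable_range _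
    exact this.to_subtype
  let S0 : Finset H := T0.attach.image fun a => ⟨a.1, hH a.1 a.2⟩
  have inj1 : ∀ x y, a1 x = a1 y → x = y := by
    intro x y e
    by_cases hi : i1 x = i1 y
    · rw [← ha1 x, ← ha1 y, e, hi]
    · exfalso
      exact Set.disjoint_left.1 (hA _ _ hi) (hA1 x) (e ▸ hA1 y)
  have inj2 : ∀ x y, a2 x = a2 y → x = y := by
    intro x y e
    by_cases hi : i2 x = i2 y
    · rw [← ha2 x, ← ha2 y, e, hi]
    · exfalso
      exact Set.disjoint_left.1 (hB _ _ hi) (hA2 x) (e ▸ hA2 y)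
  have ne12 : ∀ x y, a1 x ≠ a2 y := fun x y e =>
    Set.disjoint_left.1 (hAB (i1 x) (i2 y)) (hA1 x) (e ▸ hA2 y)
  obtain ⟨b, h1, h2, h3⟩ := core (Γ := H) (X := X) (fun γ => hBorelAction γ.1)
    (fun b x => if b then a2 x else a1 x) (by
      rintro (_ | _) (_ | _) x y e
      · exact ⟨rfl, inj1 x y (by simpa using e)⟩
      · exact absurd (by simpa using e) (ne12 x y)
      · exact absurd (by simpa using e.symm) (ne12 y x)
      · exact ⟨rfl, inj2 x y (by simpa using e)⟩) S0 (by
      have hS : ∀ γ (h : γ ∈ T0), (⟨γ, hH γ h⟩ : H) ∈ S0 := fun γ h =>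
        Finset.mem_image.2 ⟨⟨γ, h⟩, Finset.mem_attach _ _, rfl⟩
      rintro (_ | _) x
      · refine ⟨_, hS _ (hT1 (i1 x)), ?_⟩
        change a1 x = (α (i1 x))⁻¹ • x
        rw [eq_inv_smul_iff, ha1]
      · refine ⟨_, hS _ (hT2 (i2 x)), ?_⟩
        change a2 x = (β (i2 x))⁻¹ • x
        rw [eq_inv_smul_iff, ha2])
  refine ⟨b, h1, h2, fun w => ?_⟩
  obtain ⟨S, hS⟩ := h3 w
  refine ⟨S.image Subtype.val, fun x => ?_⟩
  obtain ⟨γ, hγ, e⟩ := hS x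
  exact ⟨γ.1, Finset.mem_image_of_mem _ hγ, e⟩
end

section
/- There exists a Polish space X, a group Γ (one may take a finitely generated free group) acting on X by Borel automorphisms, and Borel sets B₀, B₁ ⊆ X such that B₀ and B₁ are equidecomposable with respect to this action, but B₀ and B₁ are not equidecomposable using pieces having the Baire property. -/
open scoped Pointwise

/-- `A` and `B` are equidecomposable with respect to the action of `Γ` on `X`, using pieces
satisfying the predicate `P`: there is a partition of `A` into finitely many sets `Aᵢ`
satisfying `P` and group elements `αᵢ` such that the sets `αᵢ • Aᵢ` are pairwise disjoint with
union `B`. -/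
def EquidecomposableWith {Γ X : Type*} [Group Γ] [MulAction Γ X]
    (P : Set X → Prop) (A B : Set X) : Prop :=
  ∃ (n : ℕ) (C : Fin n → Set X) (α : Fin n → Γ),
    (∀ i, P (C i)) ∧
    (∀ i j, i ≠ j → Disjoint (C i) (C j)) ∧
    (⋃ i, C i) = A ∧
    (∀ i j, i ≠ j → Disjoint (α i • C i) (α j • C j)) ∧
    (⋃ i, α i • C i) = B

namespace BaireEq

abbrev X : Type := ℤ → Bool

/-- reflection with flip -/
def sg (k : ℤ) : Equiv.Perm X where
  toFun x i := !x (k - i)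
  invFun x i := !x (k - i)
  left_inv x := by funext i; simp
  right_inv x := by funext i; simp

lemma sg_apply (k : ℤ) (x : X) (i : ℤ) : sg k x i = !x (k - i) := rfl

lemma sg_sg (k : ℤ) (x : X) : sg k (sg k x) = x := (sg k).left_inv x

lemma sg_cont (k : ℤ) : Continuous (sg k : X → X) := by
  refine continuous_pi fun i => ?_
  exact (continuous_of_discreteTopology (f := Bool.not)).comp (continuous_apply (k - i))

lemma sg_inv (k : ℤ) : (sg k)⁻¹ = sg k := rfl

lemma sg_open (k : ℤ) : IsOpenMap (sg k : X → X) := by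
  have : IsOpenMap (Homeomorph.mk (sg k) (sg_cont k) (sg_cont k)) := Homeomorph.isOpenMap _
  exact this

/-- the group -/
abbrev G : Subgroup (Equiv.Perm X) := Subgroup.closure {sg 0, sg 2}

lemma G_cont (g : Equiv.Perm X) (hg : g ∈ G) : Continuous (g : X → X) ∧
    Continuous ((g⁻¹ : Equiv.Perm X) : X → X) := by
  induction hg using Subgroup.closure_induction with
  | mem x hx =>
    rcases hx with rfl | rfl
    · exact ⟨sg_cont _, sg_cont _⟩
    · exact ⟨sg_cont _, sg_cont _⟩
  | one => exact ⟨continuous_id, continuous_id⟩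
  | mul a b _ _ ha hb =>
    refine ⟨ha.1.comp hb.1, ?_⟩
    rw [mul_inv_rev]
    exact hb.2.comp ha.2
  | inv a _ ha => exact ⟨ha.2, by simpa using ha.1⟩

lemma G_open (g : Equiv.Perm X) (hg : g ∈ G) : IsOpenMap (g : X → X) := by
  have h := G_cont g hg
  have : IsOpenMap (Homeomorph.mk g h.1 h.2) := Homeomorph.isOpenMap _
  exact this

/-- Baire measurable integer function -/
def BM (f : X → ℤ) : Prop := @Measurable X ℤ (eventuallyMeasurableSpace (borel _) (residual _)) _ f

lemma BM.pre {f : X → ℤ} (h : BM f) (s : Set ℤ) : BaireMeasurableSet (f ⁻¹' s) :=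
  h (MeasurableSet.of_discrete)

lemma BM.add {f g : X → ℤ} (hf : BM f) (hg : BM g) : BM (f + g) := Measurable.add hf hg

lemma BM.sub {f g : X → ℤ} (hf : BM f) (hg : BM g) : BM (f - g) := Measurable.sub hf hg

lemma BM.neg {f : X → ℤ} (hf : BM f) : BM (-f) := Measurable.neg hf

lemma BM.const (c : ℤ) : BM (fun _ => c) :=
  @measurable_const ℤ X _ (eventuallyMeasurableSpace (borel _) (residual _)) c

lemma BM.zero : BM 0 := BM.const 0

lemma BM.comp {f : X → ℤ} (hf : BM f) {g : X → X} (hc : Continuous g) (ho : IsOpenMap g) :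
    BM (f ∘ g) := fun _ hs => BaireMeasurableSet.preimage hc ho (hf hs)

lemma BM.ind {s : Set X} (hs : BaireMeasurableSet s) : BM (s.indicator 1) :=
  Measurable.indicator (m := eventuallyMeasurableSpace (borel _) (residual _))
    (BM.const 1) hs

/-- coboundaries -/
def Good (f : X → ℤ) : Prop := ∃ p q : X → ℤ, BM p ∧ BM q ∧ (∀ x, p (sg 0 x) = - p x) ∧
  (∀ x, q (sg 2 x) = - q x) ∧ f = p + q

lemma Good.zero : Good 0 := ⟨0, 0, BM.zero, BM.zero, by simp, by simp, by simp⟩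

lemma Good.add {f g : X → ℤ} (hf : Good f) (hg : Good g) : Good (f + g) := by
  obtain ⟨p, q, hp, hq, h0, h2, rfl⟩ := hf
  obtain ⟨p', q', hp', hq', h0', h2', rfl⟩ := hg
  refine ⟨p + p', q + q', hp.add hp', hq.add hq', fun x => ?_, fun x => ?_, by abel⟩
  · simp [h0, h0']; ring
  · simp [h2, h2']; ring

lemma Good.neg {f : X → ℤ} (hf : Good f) : Good (-f) := by
  obtain ⟨p, q, hp, hq, h0, h2, rfl⟩ := hf
  exact ⟨-p, -q, hp.neg, hq.neg, fun x => by simp [h0], fun x => by simp [h2], by abel⟩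

lemma Good.cob (g : Equiv.Perm X) (hg : g ∈ G) : ∀ f : X → ℤ, BM f → Good (f - f ∘ g) := by
  induction hg using Subgroup.closure_induction with
  | mem x hx =>
    intro f hf
    rcases hx with rfl | rfl
    · exact ⟨f - f ∘ sg 0, 0, hf.sub (hf.comp (sg_cont _) (sg_open _)), BM.zero,
        fun x => by simp [sg_sg], by simp, by simp⟩
    · exact ⟨0, f - f ∘ sg 2, BM.zero, hf.sub (hf.comp (sg_cont _) (sg_open _)), by simp,
        fun x => by simp [sg_sg], by simp⟩
  | one => intro f _; simpa using Good.zero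
  | mul a b ha' hb' ha hb =>
    intro f hf
    have h1 := ha f hf
    have h2 := hb (f ∘ a) (hf.comp (G_cont a ha').1 (G_open a ha'))
    have := h1.add h2
    convert this using 1
    funext x
    simp
  | inv a ha' ha =>
    intro f hf
    have hi := G.inv_mem ha'
    have h1 := (ha (f ∘ (a⁻¹ : Equiv.Perm X))
      (hf.comp (G_cont _ hi).1 (G_open _ hi))).neg
    convert h1 using 1
    funext x
    simp

lemma Good.sum {n : ℕ} (f : Fin n → X → ℤ) (h : ∀ i, Good (f i)) : Good (∑ i, f i) :=
  Finset.sum_induction _ Good (fun _ _ => Good.add) Good.zero (fun i _ => h i)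

lemma sum_ind {n : ℕ} (C : Fin n → Set X) (h : ∀ i j, i ≠ j → Disjoint (C i) (C j)) :
    ∑ i, (C i).indicator (1 : X → ℤ) = (⋃ i, C i).indicator 1 := by
  classical
  funext x
  rw [Finset.sum_apply]
  by_cases hx : x ∈ ⋃ i, C i
  · rw [Set.indicator_of_mem hx]
    obtain ⟨i, hi⟩ := Set.mem_iUnion.1 hx
    rw [Finset.sum_eq_single i]
    · simp [hi]
    · intro j _ hj
      exact Set.indicator_of_notMem (fun hxj => Set.disjoint_left.1 (h j i hj) hxj hi) _
    · simp
  · rw [Set.indicator_of_notMem hx]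
    refine Finset.sum_eq_zero fun i _ => Set.indicator_of_notMem (fun hi => hx ?_) _
    exact Set.mem_iUnion.2 ⟨i, hi⟩

lemma mixing (U : Set X) (hU : IsOpen U) (u : X) (hu : u ∈ U) :
    ∃ n : ℕ, (U ∩ sg (2 * n) ⁻¹' U).Nonempty := by
  obtain ⟨F, V, hV, hVU⟩ := isOpen_pi_iff.1 hU u hu
  obtain ⟨N, hN⟩ : ∃ N : ℕ, ∀ i ∈ F, i ≤ N := by
    refine ⟨F.sup Int.toNat, fun i hi => ?_⟩
    have : i.toNat ≤ F.sup Int.toNat := Finset.le_sup hi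
    omega
  have key : ∀ x : X, (∀ i ∈ F, x i = u i) → x ∈ U := fun x hx =>
    hVU fun i hi => by rw [hx i hi]; exact (hV i hi).2
  refine ⟨N + 1, fun i => if i ∈ F then u i else !u (2 * ((N + 1 : ℕ) : ℤ) - i), key _ ?_, key _ ?_⟩
  · intro i hi; simp [hi]
  · intro i hi
    have h : (2 * ((N + 1 : ℕ) : ℤ) - i) ∉ F := fun h' => by
      have := hN _ h'
      have := hN _ hi
      push_cast at *
      omega
    rw [sg_apply]
    simp only [h, if_false]
    simp

lemma no_set (W : Set X) (hW : BaireMeasurableSet W) (h0 : ∀ x, sg 0 x ∈ W ↔ x ∉ W)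
    (h2 : ∀ x, sg 2 x ∈ W ↔ x ∉ W) : False := by
  obtain ⟨U, hU, hWU⟩ := hW.residualEq_isOpen
  rw [Filter.eventuallyEq_set] at hWU
  have hsg : ∀ k, ∀ᶠ x in residual X, (sg k x ∈ W ↔ sg k x ∈ U) := fun k =>
    (tendsto_residual_of_isOpenMap (sg_cont k) (sg_open k)).eventually hWU
  have hex : ∀ O : Set X, IsOpen O → O.Nonempty → ∀ P : X → Prop, (∀ᶠ x in residual X, P x) →
      ∃ x ∈ O, P x := fun O hO hne P hP =>
    (dense_of_mem_residual hP).inter_open_nonempty O hO hne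
  have hne : U.Nonempty := by
    by_contra hn
    rw [Set.not_nonempty_iff_eq_empty] at hn
    subst hn
    obtain ⟨x, -, h⟩ := hex Set.univ isOpen_univ Set.univ_nonempty _ (hWU.and (hsg 0))
    have := h0 x
    simp_all
  obtain ⟨u, hu⟩ := hne
  obtain ⟨n, hn⟩ := mixing U hU u hu
  have hρ : ∀ n : ℕ, ∀ x, sg (2 * n) x ∈ W ↔ x ∉ W := by
    intro n
    induction n with
    | zero => simpa using h0
    | succ n ih =>
      intro x
      have : sg (2 * ((n + 1 : ℕ) : ℤ)) x = sg (2 * n) (sg 0 (sg 2 x)) := by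
        funext i
        simp only [sg_apply, Bool.not_not]
        congr 2
        push_cast
        ring
      rw [this, ih, h0, h2, not_not]
  obtain ⟨x, hx, h1, h2⟩ := hex _ (hU.inter (hU.preimage (sg_cont _))) hn _
    (hWU.and (hsg (2 * n)))
  exact (hρ n x).1 (h2.2 hx.2) (h1.2 hx.1)

/-- shift orbit -/
def orb (x : X) : Set X := {y | ∃ n : ℤ, ∀ i, y i = x (i + 2 * n)}

lemma orb_even (x y : X) (m : ℤ) (h : ∀ i, y i = x (i + 2 * m)) : orb y = orb x := by
  ext z
  constructor
  · rintro ⟨n, hn⟩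
    exact ⟨n + m, fun i => by rw [hn, h]; congr 1; ring⟩
  · rintro ⟨n, hn⟩
    exact ⟨n - m, fun i => by rw [hn, h]; congr 1; ring⟩

lemma orb_ne (x : X) : orb x ≠ orb (sg 0 x) := by
  intro h
  have : sg 0 x ∈ orb x := by rw [h]; exact ⟨0, by simp⟩
  obtain ⟨n, hn⟩ := this
  have := hn (-n)
  rw [sg_apply] at this
  have e : -n + 2 * n = 0 - -n := by ring
  rw [e] at this
  simp at this

lemma exists_M : ∃ M : Set X, (∀ x, sg 0 x ∈ M ↔ x ∉ M) ∧ (∀ x, sg 2 x ∈ M ↔ x ∉ M) := by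
  let _ : LinearOrder (Set X) := WellOrderingRel.isWellOrder.linearOrder
  let lt : Set X → Set X → Prop := WellOrderingRel
  have tri : ∀ a b, a ≠ b → (lt b a ↔ ¬ lt a b) := by
    intro a b hab
    constructor
    · intro h h'
      exact asymm_of WellOrderingRel h h'
    · intro h
      rcases trichotomous_of WellOrderingRel a b with h1 | h1 | h1
      · exact absurd h1 h
      · exact absurd h1 hab
      · exact h1
  refine ⟨{x | lt (orb x) (orb (sg 0 x))}, fun x => ?_, fun x => ?_⟩
  · simp only [Set.mem_ofPred_eq, sg_sg]
    exact tri _ _ (orb_ne x)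
  · have e1 : orb (sg 2 x) = orb (sg 0 x) :=
      orb_even _ _ (-1) fun i => by rw [sg_apply, sg_apply]; congr 2; ring
    have e2 : orb (sg 0 (sg 2 x)) = orb x :=
      orb_even _ _ 1 fun i => by
        rw [sg_apply, sg_apply, Bool.not_not]; congr 1; ring
    simp only [Set.mem_ofPred_eq, e1, e2]
    exact tri _ _ (orb_ne x)

/-- half space -/
def Hs (k : ℤ) : Set X := {x | x k = true}

lemma Hs0 (x : X) : sg 0 x ∈ Hs 0 ↔ x ∉ Hs 0 := by simp [Hs, sg_apply]

lemma Hs1 (x : X) : sg 2 x ∈ Hs 1 ↔ x ∉ Hs 1 := by simp [Hs, sg_apply]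

lemma Hs_meas (k : ℤ) : IsOpen (Hs k) :=
  (isOpen_discrete ({true} : Set Bool)).preimage
    (show Continuous (fun x : X => x k) from continuous_apply k)

def g0 : G := ⟨sg 0, Subgroup.subset_closure (by simp)⟩
def g2 : G := ⟨sg 2, Subgroup.subset_closure (by simp)⟩

lemma g0_smul (x : X) : g0 • x = sg 0 x := rfl
lemma g2_smul (x : X) : g2 • x = sg 2 x := rfl
lemma g0_inv : g0⁻¹ = g0 := rfl
lemma g2_inv : g2⁻¹ = g2 := rfl

lemma equi : EquidecomposableWith (Γ := G) (fun _ => True) (Hs 0) (Hs 1) := by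
  obtain ⟨M, m0, m2⟩ := exists_M
  refine ⟨4, ![{x | x ∈ Hs 0 ∧ x ∈ M ∧ x ∈ Hs 1}, {x | x ∈ Hs 0 ∧ x ∈ M ∧ x ∉ Hs 1},
    {x | x ∈ Hs 0 ∧ x ∉ M ∧ sg 0 x ∈ Hs 1}, {x | x ∈ Hs 0 ∧ x ∉ M ∧ sg 0 x ∉ Hs 1}],
    ![1, g2, g0, g2 * g0], fun _ => trivial, ?_, ?_, ?_, ?_⟩
  · intro i j hij
    rw [Set.disjoint_left]
    intro x
    fin_cases i <;> fin_cases j <;> simp at hij ⊢ <;> grind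
  · ext x
    simp only [Set.mem_iUnion, Fin.exists_fin_succ]
    simp
    tauto
  · intro i j hij
    rw [Set.disjoint_left]
    intro x
    rw [Set.mem_smul_set_iff_inv_smul_mem, Set.mem_smul_set_iff_inv_smul_mem]
    have := m0 x
    have := m2 x
    have := m0 (sg 2 x)
    have := Hs0 x
    have := Hs0 (sg 2 x)
    have := Hs1 x
    fin_cases i <;> fin_cases j <;>
      simp [g0_inv, g2_inv, mul_smul, g0_smul, g2_smul, sg_sg] at hij ⊢ <;> grind
  · ext x
    simp only [Set.mem_iUnion, Set.mem_smul_set_iff_inv_smul_mem]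
    have := m0 x
    have := m2 x
    have := m0 (sg 2 x)
    have := Hs0 x
    have := Hs0 (sg 2 x)
    have := Hs1 x
    simp only [Fin.exists_fin_succ]
    simp [g0_inv, g2_inv, mul_smul, g0_smul, g2_smul, sg_sg]
    tauto

lemma not_equi : ¬ EquidecomposableWith (Γ := G) (fun s => BaireMeasurableSet s) (Hs 0) (Hs 1) := by
  classical
  rintro ⟨n, C, α, hC, hd, hA, hd', hB⟩
  have e1 := sum_ind C hd
  have e2 := sum_ind (fun i => α i • C i) hd'
  rw [hA] at e1
  rw [hB] at e2
  have hgood : Good ((Hs 0).indicator 1 - (Hs 1).indicator 1) := by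
    rw [← e1, ← e2, ← Finset.sum_sub_distrib]
    refine Good.sum _ fun i => ?_
    have := Good.cob ((α i)⁻¹ : G) ((α i)⁻¹ : G).2 _ (BM.ind (hC i))
    convert this using 2
    funext x
    simp only [Set.indicator, Function.comp, Set.mem_smul_set_iff_inv_smul_mem]
    rfl
  obtain ⟨p, q, hp, hq, h0, h2, he⟩ := hgood
  have he' : ∀ x, (Hs 0).indicator 1 x - (Hs 1).indicator 1 x = p x + q x := fun x => congrFun he x
  have i0 : ∀ x, (Hs 0).indicator (1 : X → ℤ) (sg 0 x) = 1 - (Hs 0).indicator 1 x := by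
    intro x
    have := Hs0 x
    by_cases hx : x ∈ Hs 0 <;> simp_all
  have i1 : ∀ x, (Hs 1).indicator (1 : X → ℤ) (sg 2 x) = 1 - (Hs 1).indicator 1 x := by
    intro x
    have := Hs1 x
    by_cases hx : x ∈ Hs 1 <;> simp_all
  refine no_set (((Hs 0).indicator 1 - p) ⁻¹' {m | 1 ≤ m})
    (BM.pre ((BM.ind (Hs_meas 0).baireMeasurableSet).sub hp) _) ?_ ?_
  · intro x
    simp only [Set.mem_preimage, Set.mem_ofPred_eq, Pi.sub_apply, i0, h0]
    omega
  · intro x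
    have a := he' x
    have b := he' (sg 2 x)
    rw [i1, h2] at b
    simp only [Set.mem_preimage, Set.mem_ofPred_eq, Pi.sub_apply]
    omega

end BaireEq

/-- **Theorem (Marks–Unger).** There is a group acting on a Polish space by Borel automorphisms
and two Borel sets which are equidecomposable with respect to this action, but not
equidecomposable using pieces having the Baire property. -/
theorem exists_equidecomposable_not_baire_equidecomposable :
    ∃ (X : Type) (_ : TopologicalSpace X) (_ : PolishSpace X)
      (_ : MeasurableSpace X) (_ : BorelSpace X)
      (Γ : Type) (_ : Group Γ) (_ : MulAction Γ X),
      (∀ γ : Γ, Measurable (fun x : X => γ • x)) ∧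
      ∃ B₀ B₁ : Set X,
        MeasurableSet B₀ ∧ MeasurableSet B₁ ∧
        EquidecomposableWith (Γ := Γ) (fun _ => True) B₀ B₁ ∧
        ¬ EquidecomposableWith (Γ := Γ) (fun s => BaireMeasurableSet s) B₀ B₁ := by
  have hB : PolishSpace Bool :=
    (Topology.IsClosedEmbedding.polishSpace (f := Bool.toNat) (continuous_of_discreteTopology.isClosedEmbedding (by decide)))
  have hP : PolishSpace BaireEq.X := inferInstance
  refine ⟨BaireEq.X, inferInstance, hP, inferInstance, inferInstance, BaireEq.G, inferInstance,
    inferInstance, ?_, BaireEq.Hs 0, BaireEq.Hs 1, ?_, ?_, BaireEq.equi, BaireEq.not_equi⟩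
  · intro γ
    exact (BaireEq.G_cont γ.1 γ.2).1.measurable
  · exact (BaireEq.Hs_meas 0).measurableSet
  · exact (BaireEq.Hs_meas 1).measurableSet
end

section
/- Suppose a is an action of a group Γ on a Polish space X by Borel automorphisms which has a paradoxical decomposition (equivalently, by Tarski's theorem, is nonamenable). Then there exists a 4-regular acyclic a-Lipschitz graph G on X and a comeager G-invariant Borel set A ⊆ X such that the induced graph G ↾ A is Borel. -/
open scoped Pointwise

/-- functional forest -/
theorem frt_forest {X : Type*} (D : X → X → Prop)
    (huniq : ∀ x y y', D y x → D y' x → y = y')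
    (hac : ∀ x, ¬ Relation.TransGen D x x) (G : SimpleGraph X)
    (hG : ∀ x y, G.Adj x y ↔ D x y ∨ D y x) : G.IsAcyclic := by
  have key : ∀ x y, D y x → ¬ (G \ SimpleGraph.fromEdgeSet {s(y, x)}).Reachable y x := by
    intro x y hyx hr
    have hy : ¬ Relation.ReflTransGen D x y := by
      intro h
      exact hac x (Relation.TransGen.tail' h hyx)
    have step : ∀ u v, (G \ SimpleGraph.fromEdgeSet {s(y, x)}).Adj u v →
        Relation.ReflTransGen D x v → Relation.ReflTransGen D x u := by
      intro u v huv hv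
      rw [SimpleGraph.sdiff_adj, hG] at huv
      obtain ⟨h1, h2⟩ := huv
      rcases h1 with h1 | h1
      · rcases Relation.ReflTransGen.cases_tail hv with h | ⟨w, hw, hwv⟩
        · subst h
          have := huniq _ _ _ h1 hyx
          subst this
          exfalso; apply h2
          rw [SimpleGraph.fromEdgeSet_adj]
          refine ⟨rfl, ?_⟩
          rintro rfl
          exact hac _ (Relation.TransGen.single h1)
        · rw [huniq _ _ _ h1 hwv]; exact hw
      · exact hv.tail h1
    obtain ⟨p⟩ := hr
    have : ∀ u v, (G \ SimpleGraph.fromEdgeSet {s(y, x)}).Walk u v →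
        Relation.ReflTransGen D x v → Relation.ReflTransGen D x u := by
      intro u v q
      induction q with
      | nil => exact id
      | cons h _ ih => exact fun hv => step _ _ h (ih hv)
    exact hy (this _ _ p Relation.ReflTransGen.refl)
  rw [SimpleGraph.isAcyclic_iff_forall_adj_isBridge]
  intro v w hvw
  rw [SimpleGraph.isBridge_iff]
  rcases (hG v w).1 hvw with h | h
  · exact key w v h
  · intro hr
    apply key v w h
    rw [Sym2.eq_swap]
    exact hr.symm

theorem frt_regular {X : Type*} (d : Fin 4 → X → X) (Rt : Set X)
    (D : X → X → Prop)
    (hD : ∀ y x, D y x ↔ ∃ i, d i y = x ∧ (i = 3 → y ∈ Rt))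
    (hinj : ∀ i j y z, (i = 3 → y ∈ Rt) → (j = 3 → z ∈ Rt) → d i y = d j z → i = j ∧ y = z)
    (hroot : ∀ x, x ∈ Rt ↔ ∀ y, ¬ D y x)
    (hac : ∀ x, ¬ Relation.TransGen D x x) :
    ∃ G : SimpleGraph X, (∀ x y, G.Adj x y ↔ D x y ∨ D y x) ∧ G.IsAcyclic ∧
      ∀ x, (G.neighborSet x).ncard = 4 := by
  classical
  have hne : ∀ x y, D x y → x ≠ y := by
    rintro x y h rfl
    exact hac _ (Relation.TransGen.single h)
  have huniq : ∀ x y y', D y x → D y' x → y = y' := by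
    intro x y y' h h'
    rw [hD] at h h'
    obtain ⟨i, hi, hi'⟩ := h
    obtain ⟨j, hj, hj'⟩ := h'
    exact (hinj i j y y' hi' hj' (hi.trans hj.symm)).2
  let G : SimpleGraph X :=
    { Adj := fun x y => D x y ∨ D y x
      symm := ⟨fun x y h => h.symm⟩
      loopless := ⟨fun x h => hne x x (h.elim id id) rfl⟩ }
  refine ⟨G, fun _ _ => Iff.rfl, frt_forest D huniq hac G (fun _ _ => Iff.rfl), ?_⟩
  intro x
  have hdist : ∀ i j, i ≠ j → (i = 3 → x ∈ Rt) → (j = 3 → x ∈ Rt) → d i x ≠ d j x :=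
    fun i j hij h1 h2 h => hij (hinj i j x x h1 h2 h).1
  by_cases hx : x ∈ Rt
  · have : G.neighborSet x = ((Finset.univ.image (fun i => d i x) : Finset X) : Set X) := by
      ext y
      simp only [SimpleGraph.mem_neighborSet, Finset.coe_image, Finset.coe_univ, Set.image_univ,
        Set.mem_range]
      constructor
      · rintro (h | h)
        · obtain ⟨i, hi, -⟩ := (hD _ _).1 h
          exact ⟨i, hi⟩
        · exact absurd h ((hroot x).1 hx y)
      · rintro ⟨i, hi⟩
        exact Or.inl ((hD _ _).2 ⟨i, hi, fun _ => hx⟩)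
    rw [this, Set.ncard_coe_finset, Finset.card_image_of_injective]
    · simp
    · intro i j h
      by_contra hij
      exact hdist i j hij (fun _ => hx) (fun _ => hx) h
  · have : ∃ y, D y x := by
      by_contra h
      push Not at h
      exact hx ((hroot x).2 h)
    obtain ⟨p, hp⟩ := this
    have hkid : ∀ i : Fin 4, i ≠ 3 → D x (d i x) := fun i hi => (hD _ _).2 ⟨i, rfl, fun h => absurd h hi⟩
    have hpk : ∀ i : Fin 4, i ≠ 3 → p ≠ d i x := by
      intro i hi h
      have h2 := hkid i hi
      rw [← h] at h2
      exact hac _ ((Relation.TransGen.single h2).tail hp)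
    have : G.neighborSet x = ({p, d 0 x, d 1 x, d 2 x} : Finset X) := by
      ext y
      simp only [SimpleGraph.mem_neighborSet, Finset.coe_insert, Finset.coe_singleton,
        Set.mem_insert_iff, Set.mem_singleton_iff]
      constructor
      · rintro (h | h)
        · obtain ⟨i, hi, h3⟩ := (hD _ _).1 h
          right
          fin_cases i
          · exact Or.inl hi.symm
          · exact Or.inr (Or.inl hi.symm)
          · exact Or.inr (Or.inr hi.symm)
          · exact absurd (h3 rfl) hx
        · exact Or.inl (huniq _ _ _ h hp)
      · rintro (h | h | h | h)
        · subst h; exact Or.inr hp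
        · subst h; exact Or.inl (hkid 0 (by decide))
        · subst h; exact Or.inl (hkid 1 (by decide))
        · subst h; exact Or.inl (hkid 2 (by decide))
    rw [this, Set.ncard_coe_finset]
    rw [Finset.card_insert_of_notMem, Finset.card_insert_of_notMem,
      Finset.card_insert_of_notMem, Finset.card_singleton]
    · simpa using hdist 1 2 (by decide) (by simp) (by simp)
    · simpa using ⟨hdist 0 1 (by decide) (by simp) (by simp),
        hdist 0 2 (by decide) (by simp) (by simp)⟩
    · simpa using ⟨hpk 0 (by decide), hpk 1 (by decide), hpk 2 (by decide)⟩

theorem frt_core {X : Type*} (c : Fin 3 → X → X)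
    (hinj : ∀ i j x y, c i x = c j y → i = j ∧ x = y) (Z Q V W : Set X)
    (hZp : ∀ z ∈ Z, ∃ y ∈ Z, c 2 y = z) (hZ2 : ∀ z ∈ Z, c 2 z ∈ Z)
    (hcyc : ∀ x, Relation.TransGen (fun y x => ∃ i, c i y = x) x x → x ∈ Z)
    (hQ : ∀ x, x ∈ Q ↔ ∀ i y, c i y ≠ x)
    (hV : ∀ x, x ∈ V ↔ ∃ n : ℕ, ∃ r ∈ Q, (c 0)^[n] r = x)
    (hW : ∀ x, x ∈ W ↔ ∃ n : ℕ, ∃ r ∈ Z, (c 0)^[n] r = x)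
    (d : Fin 4 → X → X) (hd0 : ∀ y, d 0 y = c 0 y)
    (hd1 : ∀ y, y ∈ V ∪ W → d 1 y = c 1 (c 0 y)) (hd1' : ∀ y, y ∉ V ∪ W → d 1 y = c 1 y)
    (hd2 : ∀ y, y ∈ W → d 2 y = c 2 (c 0 y)) (hd2' : ∀ y, y ∉ W → d 2 y = c 2 y)
    (hd3 : ∀ y, d 3 y = c 1 y) :
    ∃ G : SimpleGraph X, (∀ x y, G.Adj x y ↔ (∃ i, d i x = y ∧ (i = 3 → x ∈ Q ∪ Z)) ∨
        (∃ i, d i y = x ∧ (i = 3 → y ∈ Q ∪ Z))) ∧ G.IsAcyclic ∧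
      ∀ x, (G.neighborSet x).ncard = 4 := by
  have hQV : ∀ x ∈ Q, x ∈ V := fun x hx => (hV x).2 ⟨0, x, hx, rfl⟩
  have hZW : ∀ x ∈ Z, x ∈ W := fun x hx => (hW x).2 ⟨0, x, hx, rfl⟩
  have hVs : ∀ x, x ∈ V → c 0 x ∈ V := by
    intro x hx
    obtain ⟨n, r, hr, h⟩ := (hV x).1 hx
    exact (hV _).2 ⟨n+1, r, hr, by rw [Function.iterate_succ_apply', h]⟩
  have hWs : ∀ x, x ∈ W → c 0 x ∈ W := by
    intro x hx
    obtain ⟨n, r, hr, h⟩ := (hW x).1 hx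
    exact (hW _).2 ⟨n+1, r, hr, by rw [Function.iterate_succ_apply', h]⟩
  have hVp : ∀ x, x ∈ V → x ∈ Q ∨ ∃ y ∈ V, c 0 y = x := by
    intro x hx
    obtain ⟨n, r, hr, h⟩ := (hV x).1 hx
    cases n with
    | zero => left; simpa [← h] using hr
    | succ n => right; exact ⟨_, (hV _).2 ⟨n, r, hr, rfl⟩, by rw [← h, Function.iterate_succ_apply']⟩
  have hWp : ∀ x, x ∈ W → x ∈ Z ∨ ∃ y ∈ W, c 0 y = x := by
    intro x hx
    obtain ⟨n, r, hr, h⟩ := (hW x).1 hx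
    cases n with
    | zero => left; simpa [← h] using hr
    | succ n => right; exact ⟨_, (hW _).2 ⟨n, r, hr, rfl⟩, by rw [← h, Function.iterate_succ_apply']⟩
  have hcQ : ∀ i y, c i y ∉ Q := fun i y h => (hQ _).1 h i y rfl
  have h0Z : ∀ y, c 0 y ∉ Z := by
    intro y h
    obtain ⟨z, hz, hzz⟩ := hZp _ h
    exact absurd (hinj _ _ _ _ hzz).1 (by decide)
  have h1Z : ∀ y, c 1 y ∉ Z := by
    intro y h
    obtain ⟨z, hz, hzz⟩ := hZp _ h
    exact absurd (hinj _ _ _ _ hzz).1 (by decide)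
  have h2Z : ∀ y, c 2 y ∈ Z → y ∈ Z := by
    intro y h
    obtain ⟨z, hz, hzz⟩ := hZp _ h
    rwa [← (hinj _ _ _ _ hzz).2]
  have hVb : ∀ x, c 0 x ∈ V → x ∈ V := by
    intro x hx
    rcases hVp _ hx with h | ⟨y, hy, h⟩
    · exact absurd h (hcQ _ _)
    · rwa [← (hinj _ _ _ _ h).2]
  have hWb : ∀ x, c 0 x ∈ W → x ∈ W := by
    intro x hx
    rcases hWp _ hx with h | ⟨y, hy, h⟩
    · exact absurd h (h0Z _)
    · rwa [← (hinj _ _ _ _ h).2]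
  have hform1 : ∀ y, ∃ y', d 1 y = c 1 y' ∧ ((y ∈ V ∪ W ∧ y' = c 0 y) ∨ (y ∉ V ∪ W ∧ y' = y)) := by
    intro y
    by_cases h : y ∈ V ∪ W
    · exact ⟨_, hd1 y h, Or.inl ⟨h, rfl⟩⟩
    · exact ⟨_, hd1' y h, Or.inr ⟨h, rfl⟩⟩
  have hform2 : ∀ y, ∃ y', d 2 y = c 2 y' ∧ ((y ∈ W ∧ y' = c 0 y) ∨ (y ∉ W ∧ y' = y)) := by
    intro y
    by_cases h : y ∈ W
    · exact ⟨_, hd2 y h, Or.inl ⟨h, rfl⟩⟩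
    · exact ⟨_, hd2' y h, Or.inr ⟨h, rfl⟩⟩
  have hVWs : ∀ y, y ∈ V ∪ W → c 0 y ∈ V ∪ W := fun y h => h.imp (hVs y) (hWs y)
  have hform : ∀ i : Fin 4, ∀ y, (i = 3 → y ∈ Q ∪ Z) →
      (i = 0 ∧ d i y = c 0 y) ∨
      (i = 1 ∧ y ∈ V ∪ W ∧ d i y = c 1 (c 0 y)) ∨
      (i = 1 ∧ y ∉ V ∪ W ∧ d i y = c 1 y) ∨
      (i = 2 ∧ y ∈ W ∧ d i y = c 2 (c 0 y)) ∨
      (i = 2 ∧ y ∉ W ∧ d i y = c 2 y) ∨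
      (i = 3 ∧ y ∈ Q ∪ Z ∧ d i y = c 1 y) := by
    intro i y h3
    fin_cases i
    · exact Or.inl ⟨rfl, hd0 y⟩
    · by_cases h : y ∈ V ∪ W
      · exact Or.inr (Or.inl ⟨rfl, h, hd1 y h⟩)
      · exact Or.inr (Or.inr (Or.inl ⟨rfl, h, hd1' y h⟩))
    · by_cases h : y ∈ W
      · exact Or.inr (Or.inr (Or.inr (Or.inl ⟨rfl, h, hd2 y h⟩)))
      · exact Or.inr (Or.inr (Or.inr (Or.inr (Or.inl ⟨rfl, h, hd2' y h⟩))))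
    · exact Or.inr (Or.inr (Or.inr (Or.inr (Or.inr ⟨rfl, h3 rfl, hd3 y⟩))))
  have hRV : ∀ y, y ∈ Q ∪ Z → y ∈ V ∪ W := fun y h => h.imp (hQV y) (hZW y)
  have hR0 : ∀ y, c 0 y ∉ Q ∪ Z := fun y h => h.elim (hcQ 0 y) (h0Z y)
  have hi0 : ∀ x y, c 0 x = c 0 y → x = y := fun x y h => (hinj _ _ _ _ h).2
  have hi1 : ∀ x y, c 1 x = c 1 y → x = y := fun x y h => (hinj _ _ _ _ h).2
  have hi2 : ∀ x y, c 2 x = c 2 y → x = y := fun x y h => (hinj _ _ _ _ h).2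
  have h01 : ∀ x y, c 0 x ≠ c 1 y := fun x y h => absurd (hinj _ _ _ _ h).1 (by decide)
  have h02 : ∀ x y, c 0 x ≠ c 2 y := fun x y h => absurd (hinj _ _ _ _ h).1 (by decide)
  have h12 : ∀ x y, c 1 x ≠ c 2 y := fun x y h => absurd (hinj _ _ _ _ h).1 (by decide)
  have hDinj : ∀ i j y z, (i = 3 → y ∈ Q ∪ Z) → (j = 3 → z ∈ Q ∪ Z) → d i y = d j z →
      i = j ∧ y = z := by
    intro i j y z h1 h2 he
    have ha := hform i y h1
    have hb := hform j z h2
    clear hform hform1 hform2 hd0 hd1 hd1' hd2 hd2' hd3 hinj hcyc hQ hV hW hVp hWp hZp hZ2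
    rcases ha with ⟨ha, ha'⟩ | ⟨ha, hy, ha'⟩ | ⟨ha, hy, ha'⟩ | ⟨ha, hy, ha'⟩ | ⟨ha, hy, ha'⟩ | ⟨ha, hy, ha'⟩ <;>
    rcases hb with ⟨hb, hb'⟩ | ⟨hb, hz, hb'⟩ | ⟨hb, hz, hb'⟩ | ⟨hb, hz, hb'⟩ | ⟨hb, hz, hb'⟩ | ⟨hb, hz, hb'⟩ <;>
    rw [ha', hb'] at he <;> grind
  have hroot : ∀ x, x ∈ Q ∪ Z ↔ ∀ y, ¬ (∃ i, d i y = x ∧ (i = 3 → y ∈ Q ∪ Z)) := by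
    intro x
    constructor
    · rintro hx y ⟨i, hi, h3⟩
      have ha := hform i y h3
      rw [hi] at ha
      rcases hx with hx | hx
      · have := (hQ x).1 hx
        rcases ha with ⟨ha, ha'⟩ | ⟨ha, hy, ha'⟩ | ⟨ha, hy, ha'⟩ | ⟨ha, hy, ha'⟩ | ⟨ha, hy, ha'⟩ | ⟨ha, hy, ha'⟩ <;>
        exact this _ _ ha'.symm
      · rcases ha with ⟨ha, ha'⟩ | ⟨ha, hy, ha'⟩ | ⟨ha, hy, ha'⟩ | ⟨ha, hy, ha'⟩ | ⟨ha, hy, ha'⟩ | ⟨ha, hy, ha'⟩ <;>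
        rw [ha'] at hx
        · exact h0Z _ hx
        · exact h1Z _ hx
        · exact h1Z _ hx
        · exact h0Z _ (h2Z _ hx)
        · exact hy (hZW _ (h2Z _ hx))
        · exact h1Z _ hx
    · intro h
      by_contra hx
      have hxQ : x ∉ Q := fun h => hx (Or.inl h)
      have hxZ : x ∉ Z := fun h => hx (Or.inr h)
      rw [hQ] at hxQ
      push Not at hxQ
      obtain ⟨i, y, hy⟩ := hxQ
      fin_cases i
      · exact h y ⟨0, (hd0 y).trans hy, by simp⟩
      · by_cases hyV : y ∈ V ∪ W
        · by_cases hyR : y ∈ Q ∪ Z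
          · exact h y ⟨3, (hd3 y).trans hy, fun _ => hyR⟩
          · have : ∃ y' ∈ V ∪ W, c 0 y' = y := by
              rcases hyV with hv | hv
              · rcases hVp y hv with h | ⟨y', h, h'⟩
                · exact absurd (Or.inl h) hyR
                · exact ⟨y', Or.inl h, h'⟩
              · rcases hWp y hv with h | ⟨y', h, h'⟩
                · exact absurd (Or.inr h) hyR
                · exact ⟨y', Or.inr h, h'⟩
            obtain ⟨y', hy', hyy⟩ := this
            exact h y' ⟨1, by rw [hd1 y' hy', hyy]; exact hy, by simp⟩
        · exact h y ⟨1, (hd1' y hyV).trans hy, by simp⟩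
      · by_cases hyW : y ∈ W
        · rcases hWp y hyW with hz | ⟨y', hy', hyy⟩
          · exact hxZ (by rw [← hy]; exact hZ2 y hz)
          · exact h y' ⟨2, by rw [hd2 y' hy', hyy]; exact hy, by simp⟩
        · exact h y ⟨2, (hd2' y hyW).trans hy, by simp⟩
  have htr : ∀ x y, Relation.TransGen (fun y x => ∃ i, d i y = x ∧ (i = 3 → y ∈ Q ∪ Z)) x y →
      Relation.TransGen (fun y x => ∃ i, c i y = x) x y := by
    have one : ∀ y x, (∃ i, d i y = x ∧ (i = 3 → y ∈ Q ∪ Z)) →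
      Relation.TransGen (fun y x => ∃ i, c i y = x) y x := by
      rintro y x ⟨i, hi, h3⟩
      have ha := hform i y h3
      rw [hi] at ha
      rcases ha with ⟨ha, ha'⟩ | ⟨ha, hy, ha'⟩ | ⟨ha, hy, ha'⟩ | ⟨ha, hy, ha'⟩ | ⟨ha, hy, ha'⟩ | ⟨ha, hy, ha'⟩
      · exact .single ⟨_, ha'.symm⟩
      · exact .tail (.single ⟨0, rfl⟩) ⟨_, ha'.symm⟩
      · exact .single ⟨_, ha'.symm⟩
      · exact .tail (.single ⟨0, rfl⟩) ⟨_, ha'.symm⟩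
      · exact .single ⟨_, ha'.symm⟩
      · exact .single ⟨_, ha'.symm⟩
    intro x y h
    induction h with
    | single h => exact one _ _ h
    | tail _ h ih => exact ih.trans (one _ _ h)
  refine frt_regular d (Q ∪ Z) (fun y x => ∃ i, d i y = x ∧ (i = 3 → y ∈ Q ∪ Z))
    (fun _ _ => Iff.rfl) hDinj hroot ?_
  intro x hx
  have hz := hcyc x (htr x x hx)
  obtain ⟨y, -, hy⟩ := Relation.TransGen.tail'_iff.1 hx
  exact (hroot x).1 (Or.inr hz) y hy

theorem frt_cyc {X : Type*} (c : Fin 3 → X → X)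
    (hinj : ∀ i j x y, c i x = c j y → i = j ∧ x = y) (Z : Set X)
    (hZ : ∀ x, x ∈ Z ↔ Relation.TransGen (fun y x => ∃ i, c i y = x) x x) :
    (∀ z ∈ Z, ∃ i, c i z ∈ Z) ∧ (∀ z i j, c i z ∈ Z → c j z ∈ Z → i = j) ∧
    (∀ z ∈ Z, ∃ i, ∃ y ∈ Z, c i y = z) := by
  classical
  have hf : ∃ f : X → X, ∀ i y, f (c i y) = y := by
    refine ⟨fun x => if h : ∃ p : Fin 3 × X, c p.1 p.2 = x then h.choose.2 else x, ?_⟩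
    intro i y
    have h : ∃ p : Fin 3 × X, c p.1 p.2 = c i y := ⟨(i, y), rfl⟩
    simp only [h, dif_pos]
    exact (hinj _ _ _ _ h.choose_spec).2
  obtain ⟨f, hf⟩ := hf
  have hit : ∀ x y, Relation.TransGen (fun y x => ∃ i, c i y = x) x y →
      ∃ n : ℕ, f^[n+1] y = x := by
    intro x y h
    induction h with
    | single h => obtain ⟨i, rfl⟩ := h; exact ⟨0, by simp [hf]⟩
    | tail _ h ih =>
      obtain ⟨i, rfl⟩ := h
      obtain ⟨n, hn⟩ := ih
      exact ⟨n+1, by rw [Function.iterate_succ_apply, hf, hn]⟩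
  refine ⟨?_, ?_, ?_⟩
  · intro z hz
    obtain ⟨w, ⟨i, rfl⟩, hw⟩ := Relation.TransGen.head'_iff.1 ((hZ z).1 hz)
    exact ⟨i, (hZ _).2 (Relation.TransGen.tail' hw ⟨i, rfl⟩)⟩
  · intro z i j hi hj
    obtain ⟨a, ha⟩ := hit _ _ ((hZ _).1 hi)
    obtain ⟨b, hb⟩ := hit _ _ ((hZ _).1 hj)
    rw [Function.iterate_succ_apply, hf] at ha hb
    have ha' : Function.IsPeriodicPt f (a+1) z := by
      rw [Function.IsPeriodicPt, Function.IsFixedPt, Function.iterate_succ_apply', ha, hf]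
    have hb' : Function.IsPeriodicPt f (b+1) z := by
      rw [Function.IsPeriodicPt, Function.IsFixedPt, Function.iterate_succ_apply', hb, hf]
    have e1 : f^[a + b*(a+1)] z = c i z := by
      rw [Function.iterate_add_apply, (ha'.const_mul b).eq, ha]
    have e2 : f^[b + a*(b+1)] z = c j z := by
      rw [Function.iterate_add_apply, (hb'.const_mul a).eq, hb]
    have e3 : a + b*(a+1) = b + a*(b+1) := by ring
    rw [e3, e2] at e1
    exact (hinj _ _ _ _ e1).1.symm
  · intro z hz
    obtain ⟨w, hw, ⟨i, hi⟩⟩ := Relation.TransGen.tail'_iff.1 ((hZ z).1 hz)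
    exact ⟨i, w, (hZ _).2 (Relation.TransGen.head' ⟨i, hi⟩ hw), hi⟩

theorem frt_part2 {Γ X : Type*} [Group Γ] [MulAction Γ X] [MeasurableSpace X]
    (hact : ∀ γ : Γ, Measurable (fun x : X => γ • x))
    (hEq : ∀ u v : X → X, Measurable u → Measurable v → MeasurableSet {x | u x = v x})
    (S : Finset Γ) (c : Fin 3 → X → X) (hc : ∀ i, Measurable (c i))
    (hinj : ∀ i j x y, c i x = c j y → i = j ∧ x = y)
    (hL : ∀ i y, ∃ s ∈ S, s • y = c i y) :
    ∃ G : SimpleGraph X, (∀ x, (G.neighborSet x).ncard = 4) ∧ G.IsAcyclic ∧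
      ∃ S' : Finset Γ, (∀ x y, G.Adj x y → ∃ γ ∈ S', γ • x = y) ∧
        ∀ γ ∈ S', MeasurableSet {x | G.Adj x (γ • x)} := by
  classical
  let Z : Set X := {x | Relation.TransGen (fun y x => ∃ i, c i y = x) x x}
  obtain ⟨hZ1, hZ2, hZ3⟩ := frt_cyc c hinj Z (fun _ => Iff.rfl)
  have hword : ∀ x y, Relation.TransGen (fun y x => ∃ i, c i y = x) x y ↔
      ∃ w : List (Fin 3), w ≠ [] ∧ w.foldr (fun i z => c i z) x = y := by
    intro x y
    constructor
    · intro h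
      induction h with
      | single h => obtain ⟨i, rfl⟩ := h; exact ⟨[i], by simp, rfl⟩
      | tail _ h ih =>
        obtain ⟨i, rfl⟩ := h
        obtain ⟨w, -, hw⟩ := ih
        exact ⟨i :: w, by simp, by simp [hw]⟩
    · rintro ⟨w, hw, rfl⟩
      induction w with
      | nil => exact absurd rfl hw
      | cons i w ih =>
        by_cases h : w = []
        · subst h; exact .single ⟨i, rfl⟩
        · exact (ih h).tail ⟨i, rfl⟩
  have hZm : MeasurableSet Z := by
    have : Z = ⋃ w : List (Fin 3), {x | w ≠ [] ∧ w.foldr (fun i z => c i z) x = x} := by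
      ext x
      simp only [Z, Set.mem_ofPred_eq, hword, Set.mem_iUnion]
    rw [this]
    refine MeasurableSet.iUnion fun w => ?_
    refine MeasurableSet.inter (MeasurableSet.const (w ≠ [])) (hEq (fun x => w.foldr (fun i z => c i z) x) id ?_ measurable_id)
    induction w with
    | nil => exact measurable_id
    | cons i w ih => exact (hc i).comp ih
  let π : X → Equiv.Perm (Fin 3) := fun y => if y ∈ Z ∧ c 0 y ∈ Z then Equiv.swap 0 2 else
    if y ∈ Z ∧ c 1 y ∈ Z then Equiv.swap 1 2 else 1
  let c' : Fin 3 → X → X := fun i y => c (π y i) y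
  have hc'm : ∀ i, Measurable (c' i) := by
    intro i
    have : c' i = fun y => if y ∈ Z ∧ c 0 y ∈ Z then c (Equiv.swap 0 2 i) y else
        if y ∈ Z ∧ c 1 y ∈ Z then c (Equiv.swap 1 2 i) y else c i y := by
      ext y
      simp only [c', π]
      split_ifs <;> rfl
    rw [this]
    refine Measurable.ite (hZm.inter (hc 0 hZm)) (hc _) (Measurable.ite (hZm.inter (hc 1 hZm)) (hc _) (hc _))
  have hc'L : ∀ i y, ∃ s ∈ S, s • y = c' i y := fun i y => hL _ _
  have hc'inj : ∀ i j x y, c' i x = c' j y → i = j ∧ x = y := by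
    intro i j x y h
    obtain ⟨h1, h2⟩ := hinj _ _ _ _ h
    subst h2
    exact ⟨(π x).injective h1, rfl⟩
  have hc'2 : ∀ z ∈ Z, c' 2 z ∈ Z := by
    intro z hz
    obtain ⟨i, hi⟩ := hZ1 z hz
    simp only [c', π, hz, true_and]
    split_ifs with h0 h1
    · simpa using h0
    · simpa using h1
    · fin_cases i
      · exact absurd hi h0
      · exact absurd hi h1
      · exact hi
  have hrel : ∀ y x, (∃ i, c' i y = x) ↔ ∃ i, c i y = x := by
    intro y x
    constructor
    · rintro ⟨i, h⟩; exact ⟨_, h⟩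
    · rintro ⟨i, h⟩; exact ⟨(π y).symm i, by simpa [c'] using h⟩
  have hc'p : ∀ z ∈ Z, ∃ y ∈ Z, c' 2 y = z := by
    intro z hz
    obtain ⟨i, y, hy, rfl⟩ := hZ3 z hz
    refine ⟨y, hy, ?_⟩
    have := hZ2 y _ _ (hc'2 y hy) hz
    simp only [c']
    rw [this]
  have himg : ∀ i (B : Set X), MeasurableSet B → MeasurableSet (c' i '' B) := by
    intro i B hB
    have : c' i '' B = ⋃ s ∈ S, {x | s⁻¹ • x ∈ B ∧ c' i (s⁻¹ • x) = x} := by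
      ext x
      simp only [Set.mem_image, Set.mem_iUnion, Set.mem_ofPred_eq, exists_prop]
      constructor
      · rintro ⟨y, hy, rfl⟩
        obtain ⟨s, hs, h⟩ := hc'L i y
        refine ⟨s, hs, ?_⟩
        rw [← h, inv_smul_smul]
        exact ⟨hy, h.symm⟩
      · rintro ⟨s, hs, h, h'⟩
        exact ⟨_, h, h'⟩
    rw [this]
    refine Finset.measurableSet_biUnion _ fun s _ => ?_
    exact (hact s⁻¹ hB).inter (hEq (fun x => c' i (s⁻¹ • x)) id ((hc'm i).comp (hact _)) measurable_id)
  let Q : Set X := {x | ∀ i y, c' i y ≠ x}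
  have hQm : MeasurableSet Q := by
    have : Q = (⋃ i, c' i '' Set.univ)ᶜ := by
      ext x; simp [Q]
    rw [this]
    exact (MeasurableSet.iUnion fun i => himg i _ MeasurableSet.univ).compl
  have hitm : ∀ (B : Set X), MeasurableSet B →
      MeasurableSet {x | ∃ n : ℕ, ∃ r ∈ B, (c' 0)^[n] r = x} := by
    intro B hB
    have : {x | ∃ n : ℕ, ∃ r ∈ B, (c' 0)^[n] r = x} = ⋃ n : ℕ, (c' 0)^[n] '' B := by
      ext x; simp
    rw [this]
    refine MeasurableSet.iUnion fun n => ?_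
    induction n with
    | zero => simpa using hB
    | succ n ih =>
      rw [Function.iterate_succ', Set.image_comp]
      exact himg 0 _ ih
  let V : Set X := {x | ∃ n : ℕ, ∃ r ∈ Q, (c' 0)^[n] r = x}
  let W : Set X := {x | ∃ n : ℕ, ∃ r ∈ Z, (c' 0)^[n] r = x}
  have hVm : MeasurableSet V := hitm Q hQm
  have hWm : MeasurableSet W := hitm Z hZm
  let d : Fin 4 → X → X := ![c' 0, fun y => if y ∈ V ∪ W then c' 1 (c' 0 y) else c' 1 y,
    fun y => if y ∈ W then c' 2 (c' 0 y) else c' 2 y, c' 1]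
  have hdm : ∀ i, Measurable (d i) := by
    intro i
    fin_cases i
    · exact hc'm 0
    · exact Measurable.ite (hVm.union hWm) ((hc'm 1).comp (hc'm 0)) (hc'm 1)
    · exact Measurable.ite hWm ((hc'm 2).comp (hc'm 0)) (hc'm 2)
    · exact hc'm 1
  let T : Finset Γ := S ∪ S * S
  have hT1 : ∀ i y, ∃ t ∈ T, t • y = c' i y := by
    intro i y
    obtain ⟨s, hs, h⟩ := hc'L i y
    exact ⟨s, Finset.mem_union_left _ hs, h⟩
  have hT2 : ∀ i j y, ∃ t ∈ T, t • y = c' i (c' j y) := by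
    intro i j y
    obtain ⟨s, hs, h⟩ := hc'L j y
    obtain ⟨s', hs', h'⟩ := hc'L i (c' j y)
    exact ⟨s' * s, Finset.mem_union_right _ (Finset.mul_mem_mul hs' hs), by rw [mul_smul, h, h']⟩
  have hdL : ∀ i y, ∃ t ∈ T, t • y = d i y := by
    intro i y
    fin_cases i
    · exact hT1 0 y
    · by_cases h : y ∈ V ∪ W
      · have e : d 1 y = c' 1 (c' 0 y) := if_pos h
        change ∃ t ∈ T, t • y = d 1 y
        rw [e]; exact hT2 1 0 y
      · have e : d 1 y = c' 1 y := if_neg h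
        change ∃ t ∈ T, t • y = d 1 y
        rw [e]; exact hT1 1 y
    · by_cases h : y ∈ W
      · simpa [d, h] using hT2 2 0 y
      · simpa [d, h] using hT1 2 y
    · exact hT1 1 y
  obtain ⟨G, hG, hGac, hGreg⟩ := frt_core c' hc'inj Z Q V W hc'p hc'2
    (by
      intro x hx
      have : (fun y x => ∃ i, c' i y = x) = (fun y x => ∃ i, c i y = x) := by
        ext y x; exact hrel y x
      rw [this] at hx
      exact hx)
    (fun _ => Iff.rfl) (fun _ => Iff.rfl) (fun _ => Iff.rfl) d (fun _ => rfl)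
    (fun y h => if_pos h) (fun y h => if_neg h) (fun y h => if_pos h) (fun y h => if_neg h)
    (fun _ => rfl)
  refine ⟨G, hGreg, hGac, T ∪ T⁻¹, ?_, ?_⟩
  · intro x y h
    rcases (hG x y).1 h with ⟨i, hi, -⟩ | ⟨i, hi, -⟩
    · obtain ⟨t, ht, h⟩ := hdL i x
      exact ⟨t, Finset.mem_union_left _ ht, h.trans hi⟩
    · obtain ⟨t, ht, h⟩ := hdL i y
      exact ⟨t⁻¹, Finset.mem_union_right _ (Finset.inv_mem_inv ht), by
        rw [← hi, ← h, inv_smul_smul]⟩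
  · intro γ _
    have : {x | G.Adj x (γ • x)} = (⋃ i, {x | d i x = γ • x} ∩ {x | i = 3 → x ∈ Q ∪ Z}) ∪
        (⋃ i, {x | d i (γ • x) = x} ∩ {x | i = 3 → γ • x ∈ Q ∪ Z}) := by
      ext x
      simp only [Set.mem_ofPred_eq, hG, Set.mem_union, Set.mem_iUnion, Set.mem_inter_iff]
    rw [this]
    refine MeasurableSet.union ?_ ?_
    · refine MeasurableSet.iUnion fun i => MeasurableSet.inter (hEq _ _ (hdm i) (hact γ)) ?_
      exact MeasurableSet.imp (MeasurableSet.const _) (hQm.union hZm)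
    · refine MeasurableSet.iUnion fun i => MeasurableSet.inter (hEq _ id ((hdm i).comp (hact γ)) measurable_id) ?_
      exact MeasurableSet.imp (MeasurableSet.const _) (hact γ (hQm.union hZm))

section frtcomb
open scoped Classical
variable {Γ X : Type*} [Group Γ] [MulAction Γ X]

noncomputable def frtSet (S : Finset Γ) (R : Set X) (F : Finset X) : Finset X :=
  (S • F).filter (fun x => x ∉ R)

theorem mem_frtSet {S : Finset Γ} {R : Set X} {F : Finset X} {x : X} :
    x ∈ frtSet S R F ↔ x ∈ S • F ∧ x ∉ R := by
  unfold frtSet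
  rw [Finset.mem_filter]

theorem frtSet_mono {S : Finset Γ} {R : Set X} {F F' : Finset X} (h : F ⊆ F') :
    frtSet S R F ⊆ frtSet S R F' := by
  intro x hx
  rw [mem_frtSet] at hx ⊢
  exact ⟨Finset.smul_subset_smul_left h hx.1, hx.2⟩

noncomputable def frtCnt (S : Finset Γ) (R : Set X) (F : Finset X) : ℕ :=
  (frtSet S R F).card

def frtHall (S : Finset Γ) (D R : Set X) : Prop :=
  ∀ F : Finset X, (∀ x ∈ F, x ∉ D) → 3 * F.card ≤ frtCnt S R F

def frtConn (S : Finset Γ) (F : Finset X) : Prop :=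
  ∀ F' ⊆ F, F'.Nonempty → F' ≠ F → ∃ x ∈ F', ∃ y ∈ F \ F', ∃ s ∈ S, ∃ t ∈ S, s • x = t • y

def frtLarge (S : Finset Γ) (D R : Set X) (k N : ℕ) : Prop :=
  ∀ F : Finset X, frtConn S F → (∀ x ∈ F, x ∉ D) → N ≤ F.card →
    (3 * k + 1) * F.card ≤ k * frtCnt S R F

/-- ball relation -/
def frtB (S : Finset Γ) (j : ℕ) (x y : X) : Prop := ∃ g ∈ (S⁻¹ * S) ^ j, g • x = y

theorem frtB_zero (S : Finset Γ) (x : X) : frtB S 0 x x := ⟨1, by simp, by simp⟩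

theorem frtB_trans {S : Finset Γ} {i j : ℕ} {x y z : X} (h : frtB S i x y) (h' : frtB S j y z) :
    frtB S (i + j) x z := by
  obtain ⟨g, hg, rfl⟩ := h
  obtain ⟨g', hg', rfl⟩ := h'
  refine ⟨g' * g, ?_, mul_smul _ _ _⟩
  rw [add_comm, pow_add]
  exact Finset.mul_mem_mul hg' hg

theorem frtB_one {S : Finset Γ} {s t : Γ} (hs : s ∈ S) (ht : t ∈ S) {x y : X}
    (h : s • x = t • y) : frtB S 1 x y := by
  refine ⟨t⁻¹ * s, ?_, ?_⟩
  · rw [pow_one]; exact Finset.mul_mem_mul (Finset.inv_mem_inv ht) hs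
  · rw [mul_smul, h, inv_smul_smul]

theorem frtB_symm {S : Finset Γ} {j : ℕ} {x y : X} (h : frtB S j x y) : frtB S j y x := by
  obtain ⟨g, hg, rfl⟩ := h
  refine ⟨g⁻¹, ?_, inv_smul_smul _ _⟩
  have : ((S⁻¹ * S) ^ j)⁻¹ = (S⁻¹ * S) ^ j := by
    rw [← inv_pow, mul_inv_rev, inv_inv]
  rw [← this]
  exact Finset.inv_mem_inv hg

theorem frtB_mono {S : Finset Γ} (h1 : (1 : Γ) ∈ S) {i j : ℕ} (hij : i ≤ j) {x y : X}
    (h : frtB S i x y) : frtB S j x y := by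
  obtain ⟨g, hg, rfl⟩ := h
  refine ⟨g, ?_, rfl⟩
  have h1' : (1 : Γ) ∈ S⁻¹ * S := by
    have := Finset.mul_mem_mul (Finset.inv_mem_inv h1) h1
    simpa using this
  exact Finset.pow_subset_pow_right h1' hij hg

theorem frt_growth {S : Finset Γ} (h1 : (1 : Γ) ∈ S) {F : Finset X} (hF : frtConn S F) {x : X}
    (hx : x ∈ F) (j : ℕ) :
    (∀ y ∈ F, frtB S j x y) ∨ j + 1 ≤ (F.filter (fun y => frtB S j x y)).card := by
  induction j with
  | zero =>
    right
    rw [Nat.zero_add, Nat.one_le_iff_ne_zero, Finset.card_ne_zero]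
    exact ⟨x, by simp [hx, frtB_zero]⟩
  | succ j ih =>
    rcases ih with h | h
    · left
      exact fun y hy => frtB_mono h1 (Nat.le_succ j) (h y hy)
    · by_cases hall : ∀ y ∈ F, frtB S (j+1) x y
      · exact Or.inl hall
      right
      have hne : F.filter (fun y => frtB S j x y) ≠ F := by
        intro he
        apply hall
        intro y hy
        rw [← he] at hy
        exact frtB_mono h1 (Nat.le_succ j) (Finset.mem_filter.1 hy).2
      obtain ⟨u, hu, v, hv, s, hs, t, ht, hst⟩ := hF _ (Finset.filter_subset _ _)
        (Finset.card_pos.1 (by omega)) hne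
      have : F.filter (fun y => frtB S j x y) ⊂ F.filter (fun y => frtB S (j+1) x y) := by
        rw [Finset.ssubset_iff_of_subset]
        · refine ⟨v, ?_, (Finset.mem_sdiff.1 hv).2⟩
          rw [Finset.mem_filter]
          exact ⟨(Finset.mem_sdiff.1 hv).1, frtB_trans (Finset.mem_filter.1 hu).2 (frtB_one hs ht hst)⟩
        · intro y hy
          rw [Finset.mem_filter] at hy ⊢
          exact ⟨hy.1, frtB_mono h1 (Nat.le_succ j) hy.2⟩
      have := Finset.card_lt_card this
      omega

theorem frt_hall_of_conn {S : Finset Γ} {D R : Set X}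
    (h : ∀ F : Finset X, frtConn S F → (∀ x ∈ F, x ∉ D) → 3 * F.card ≤ frtCnt S R F) :
    frtHall S D R := by
  intro F
  induction F using Finset.strongInduction with
  | H F ih =>
    intro hD
    by_cases hc : frtConn S F
    · exact h F hc hD
    unfold frtConn at hc
    push Not at hc
    obtain ⟨F', hF', hne, hneq, hsep⟩ := hc
    have h1 := ih F' (lt_of_le_of_ne hF' hneq) (fun x hx => hD x (hF' hx))
    have hss : F \ F' ⊂ F := by
      rw [Finset.ssubset_iff_of_subset Finset.sdiff_subset]
      obtain ⟨x, hx⟩ := hne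
      exact ⟨x, hF' hx, by simp [hx]⟩
    have h2 := ih (F \ F') hss (fun x hx => hD x (Finset.sdiff_subset hx))
    have hcard : (F \ F').card + F'.card = F.card := Finset.card_sdiff_add_card_eq_card hF'
    have hdisj : Disjoint (frtSet S R F') (frtSet S R (F \ F')) := by
      rw [Finset.disjoint_left]
      intro x hx hy
      rw [mem_frtSet, Finset.mem_smul] at hx hy
      obtain ⟨⟨s, hs, u, hu, hsu⟩, -⟩ := hx
      obtain ⟨⟨t, ht, v, hv, htv⟩, -⟩ := hy
      exact hsep u hu v hv s hs t ht (hsu.trans htv.symm)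
    have hsub : (frtSet S R F') ∪ (frtSet S R (F \ F')) ⊆
        frtSet S R F := by
      apply Finset.union_subset
      · exact frtSet_mono hF'
      · exact frtSet_mono Finset.sdiff_subset
    have := Finset.card_le_card hsub
    rw [Finset.card_union_of_disjoint hdisj] at this
    unfold frtCnt at *
    omega

theorem frt_step_comb {S : Finset Γ} (h1 : (1 : Γ) ∈ S) {D R : Set X} {k N : ℕ}
    (hk : 0 < k) (hall : frtHall S D R) (hlarge : frtLarge S D R k N)
    (A : Set X) (τ : Fin 3 → Γ) (hτ : ∀ i, τ i ∈ S)
    (hdisc : ∀ a ∈ A, ∀ a' ∈ A, frtB S (2 * (max N (6 * k)) + 2) a a' → a = a')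
    (hok : ∀ a ∈ A, ∀ F : Finset Γ, (∀ h ∈ F, h • a ∉ D ∧ h • a ≠ a) →
      3 * (F.image (fun h => h • a)).card ≤
        frtCnt S (R ∪ {x | ∃ i, τ i • a = x}) (F.image (fun h => h • a))) :
    frtHall S (D ∪ A) (R ∪ {x | ∃ a ∈ A, ∃ i, τ i • a = x}) ∧
    frtLarge S (D ∪ A) (R ∪ {x | ∃ a ∈ A, ∃ i, τ i • a = x}) (2 * k) (max N (6 * k)) := by
  set C := max N (6 * k) with hC
  set R' : Set X := R ∪ {x | ∃ a ∈ A, ∃ i, τ i • a = x} with hR'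
  have hCN : N ≤ C := le_max_left _ _
  have hCk : 6 * k ≤ C := le_max_right _ _
  let P : Finset X → Finset X := fun F =>
    ((Finset.univ : Finset (Fin 3)).biUnion fun i => (S • F).image (fun x => (τ i)⁻¹ • x)).filter
      (fun a => a ∈ A)
  have hP : ∀ F a, a ∈ P F ↔ a ∈ A ∧ ∃ i, τ i • a ∈ S • F := by
    intro F a
    simp only [P, Finset.mem_filter, Finset.mem_biUnion, Finset.mem_univ, true_and, Finset.mem_image]
    rw [and_comm]
    refine and_congr_right fun _ => exists_congr fun i => ?_
    constructor
    · rintro ⟨x, hx, rfl⟩; rwa [smul_inv_smul]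
    · intro h; exact ⟨_, h, inv_smul_smul _ _⟩
  have hPx : ∀ F a, a ∈ P F → ∃ x ∈ F, frtB S 1 a x := by
    intro F a ha
    obtain ⟨-, i, hi⟩ := (hP F a).1 ha
    obtain ⟨s, hs, x, hx, h⟩ := Finset.mem_smul.1 hi
    exact ⟨x, hx, frtB_one (hτ i) hs h.symm⟩
  have hcount : ∀ F, frtCnt S R F ≤ frtCnt S R' F + 3 * (P F).card := by
    intro F
    have hsub : frtSet S R F ⊆ frtSet S R' F ∪
        (P F).biUnion (fun a => Finset.univ.image (fun i => τ i • a)) := by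
      intro x hx
      rw [mem_frtSet] at hx
      rw [Finset.mem_union, mem_frtSet, Finset.mem_biUnion]
      by_cases hxR : x ∈ R'
      · right
        rcases hxR with h | ⟨a, ha, i, rfl⟩
        · exact absurd h hx.2
        · exact ⟨a, (hP F a).2 ⟨ha, i, hx.1⟩, Finset.mem_image.2 ⟨i, Finset.mem_univ _, rfl⟩⟩
      · exact Or.inl ⟨hx.1, hxR⟩
    have h2 : ((P F).biUnion (fun a => Finset.univ.image (fun i => τ i • a))).card ≤ (P F).card * 3 := by
      apply Finset.card_biUnion_le_card_mul
      intro a _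
      exact Finset.card_image_le.trans (by simp)
    have := (Finset.card_le_card hsub).trans (Finset.card_union_le _ _)
    unfold frtCnt
    omega
  -- many points nearby force F to be big
  have hbig : ∀ F, frtConn S F → 2 ≤ (P F).card → C * (P F).card ≤ F.card := by
    intro F hF h2
    have hex : ∀ a, ∃ x, a ∈ P F → x ∈ F ∧ frtB S 1 a x := by
      intro a
      by_cases ha : a ∈ P F
      · obtain ⟨x, hx, h⟩ := hPx F a ha
        exact ⟨x, fun _ => ⟨hx, h⟩⟩
      · exact ⟨a, fun h => absurd h ha⟩
    choose ξ hξ using hex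
    have hfar : ∀ a ∈ P F, ∀ a' ∈ P F, ∀ y, frtB S C (ξ a) y → frtB S C (ξ a') y → a = a' := by
      intro a ha a' ha' y h h'
      refine hdisc a ((hP F a).1 ha).1 a' ((hP F a').1 ha').1 ?_
      have := frtB_trans (frtB_trans (frtB_trans (hξ a ha).2 h) (frtB_symm h')) (frtB_symm (hξ a' ha').2)
      have e : 1 + C + C + 1 = 2 * C + 2 := by ring
      rwa [e] at this
    have hcard : ∀ a ∈ P F, C ≤ (F.filter (fun y => frtB S C (ξ a) y)).card := by
      intro a ha
      rcases frt_growth h1 hF (hξ a ha).1 C with h | h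
      · exfalso
        obtain ⟨a', ha', hne⟩ := Finset.exists_mem_ne (show 1 < (P F).card by omega) a
        exact hne (hfar a' ha' a ha (ξ a') (frtB_mono h1 (Nat.zero_le C) (frtB_zero S _))
          (h _ (hξ a' ha').1))
      · omega
    have hU : (P F).biUnion (fun a => F.filter (fun y => frtB S C (ξ a) y)) ⊆ F := by
      apply Finset.biUnion_subset.2
      intro a _
      exact Finset.filter_subset _ _
    have := Finset.card_le_card hU
    rw [Finset.card_biUnion] at this
    · have h3 := Finset.sum_le_sum hcard
      rw [Finset.sum_const, smul_eq_mul, mul_comm] at h3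
      omega
    · intro a ha a' ha' hne
      change Disjoint _ _
      rw [Finset.disjoint_left]
      intro y hy hy'
      exact hne (hfar a ha a' ha' y (Finset.mem_filter.1 hy).2 (Finset.mem_filter.1 hy').2)
  have hL : frtLarge S (D ∪ A) R' (2 * k) C := by
    intro F hF hav hCF
    have hold := hlarge F hF (fun x hx h => hav x hx (Or.inl h)) (hCN.trans hCF)
    have hm : 6 * k * (P F).card ≤ F.card := by
      by_cases h2 : 2 ≤ (P F).card
      · exact (Nat.mul_le_mul_right _ hCk).trans (hbig F hF h2)
      · have : (P F).card ≤ 1 := by omega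
        calc 6 * k * (P F).card ≤ 6 * k * 1 := Nat.mul_le_mul_left _ this
          _ ≤ F.card := by omega
    have hc := Nat.mul_le_mul_left (2 * k) (hcount F)
    nlinarith
  refine ⟨frt_hall_of_conn ?_, hL⟩
  intro F hF hav
  have havD : ∀ x ∈ F, x ∉ D := fun x hx h => hav x hx (Or.inl h)
  by_cases h2 : 2 ≤ (P F).card
  · have hb := hbig F hF h2
    have hCF : C ≤ F.card := by nlinarith
    have := hL F hF hav hCF
    have h3 : 2 * k * (3 * F.card) ≤ 2 * k * frtCnt S R' F := by nlinarith
    exact Nat.le_of_mul_le_mul_left h3 (by omega)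
  · by_cases h0 : (P F).card = 0
    · have := hcount F
      have := hall F havD
      omega
    · obtain ⟨a, ha⟩ := Finset.card_eq_one.1 (show (P F).card = 1 by omega)
      have haP : a ∈ P F := by rw [ha]; simp
      have haA := ((hP F a).1 haP).1
      obtain ⟨x, hxF, hax⟩ := hPx F a haP
      have hcnt : frtCnt S R' F = frtCnt S (R ∪ {x | ∃ i, τ i • a = x}) F := by
        unfold frtCnt
        congr 1
        ext y
        rw [mem_frtSet, mem_frtSet]
        refine and_congr_right fun hy => ?_
        rw [not_iff_not, hR']
        constructor
        · rintro (h | ⟨b, hb, i, rfl⟩)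
          · exact Or.inl h
          · have : b ∈ P F := (hP F b).2 ⟨hb, i, hy⟩
            rw [ha, Finset.mem_singleton] at this
            subst this
            exact Or.inr ⟨i, rfl⟩
        · rintro (h | ⟨i, rfl⟩)
          · exact Or.inl h
          · exact Or.inr ⟨a, haA, i, rfl⟩
      have hsubF : ∀ y ∈ F, frtB S F.card x y := by
        rcases frt_growth h1 hF hxF F.card with h | h
        · exact h
        · have := Finset.card_filter_le F (fun y => frtB S F.card x y)
          omega
      have hg : ∀ y, ∃ g : Γ, y ∈ F → g • a = y := by
        intro y
        by_cases hy : y ∈ F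
        · obtain ⟨g, -, hg⟩ := frtB_trans hax (hsubF y hy)
          exact ⟨g, fun _ => hg⟩
        · exact ⟨1, fun h => absurd h hy⟩
      choose g hg using hg
      have hFi : (F.image g).image (fun h => h • a) = F := by
        ext y
        simp only [Finset.mem_image]
        constructor
        · rintro ⟨_, ⟨z, hz, rfl⟩, rfl⟩; rw [hg z hz]; exact hz
        · intro hy; exact ⟨_, ⟨y, hy, rfl⟩, hg y hy⟩
      have := hok a haA (F.image g) (by
        intro h hh
        obtain ⟨z, hz, rfl⟩ := Finset.mem_image.1 hh
        rw [hg z hz]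
        refine ⟨havD z hz, ?_⟩
        rintro rfl
        exact hav z hz (Or.inr haA))
      rw [hFi] at this
      rw [hcnt]
      exact this

theorem frt_choice {S : Finset Γ} {D R : Set X} (hall : frtHall S D R) (a : X) (ha : a ∉ D) :
    ∃ τ : Fin 3 → Γ, (∀ i, τ i ∈ S) ∧ (∀ i, τ i • a ∉ R) ∧ (∀ i j, τ i • a = τ j • a → i = j) ∧
      ∀ F : Finset X, (∀ x ∈ F, x ∉ D ∧ x ≠ a) →
        3 * F.card ≤ frtCnt S (R ∪ {x | ∃ i, τ i • a = x}) F := by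
  let t : {y : X // y ∉ D} × Fin 3 → Finset X := fun p => frtSet S R ({p.1.1} : Finset X)
  have hH : ∀ s : Finset ({y : X // y ∉ D} × Fin 3), s.card ≤ (s.biUnion t).card := by
    intro s
    let F : Finset X := s.image (fun p => p.1.1)
    have h1 : s.card ≤ 3 * F.card := by
      have : s.card ≤ (F ×ˢ (Finset.univ : Finset (Fin 3))).card := by
        apply Finset.card_le_card_of_injOn (fun p => (p.1.1, p.2))
        · intro p hp
          simp only [Finset.coe_product, Set.mem_prod, Finset.mem_coe, Finset.mem_univ, and_true]
          exact Finset.mem_image.2 ⟨p, hp, rfl⟩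
        · rintro ⟨⟨x, hx⟩, i⟩ - ⟨⟨y, hy⟩, j⟩ - h
          simp only [Prod.mk.injEq] at h
          obtain ⟨rfl, rfl⟩ := h
          rfl
      rw [Finset.card_product] at this
      simp at this
      omega
    have h2 := hall F (by
      intro x hx
      obtain ⟨p, -, rfl⟩ := Finset.mem_image.1 hx
      exact p.1.2)
    have h3 : frtSet S R F ⊆ s.biUnion t := by
      intro x hx
      rw [mem_frtSet] at hx
      obtain ⟨g, hg, y, hy, rfl⟩ := Finset.mem_smul.1 hx.1
      obtain ⟨p, hp, rfl⟩ := Finset.mem_image.1 hy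
      rw [Finset.mem_biUnion]
      refine ⟨p, hp, ?_⟩
      simp only [t, mem_frtSet]
      exact ⟨Finset.smul_mem_smul hg (Finset.mem_singleton_self _), hx.2⟩
    have h4 := Finset.card_le_card h3
    unfold frtCnt at h2
    omega
  obtain ⟨φ, hφ, hφt⟩ := (Finset.all_card_le_biUnion_card_iff_exists_injective t).1 hH
  have hφm : ∀ p, φ p ∉ R ∧ ∃ s ∈ S, s • p.1.1 = φ p := by
    intro p
    have := hφt p
    simp only [t, mem_frtSet] at this
    refine ⟨this.2, ?_⟩
    obtain ⟨g, hg, y, hy, h⟩ := Finset.mem_smul.1 this.1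
    rw [Finset.mem_singleton] at hy
    subst hy
    exact ⟨g, hg, h⟩
  choose hφR s hsS hs using hφm
  refine ⟨fun i => s (⟨a, ha⟩, i), fun i => hsS _, ?_, ?_, ?_⟩
  · intro i
    rw [hs (⟨a, ha⟩, i)]; exact hφR _
  · intro i j h
    rw [hs (⟨a, ha⟩, i), hs (⟨a, ha⟩, j)] at h
    exact congrArg Prod.snd (hφ h)
  · intro F hF
    have hc : (F.attach ×ˢ (Finset.univ : Finset (Fin 3))).card ≤
        frtCnt S (R ∪ {x | ∃ i, s (⟨a, ha⟩, i) • a = x}) F := by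
      unfold frtCnt
      apply Finset.card_le_card_of_injOn (fun p => φ (⟨p.1.1, (hF _ p.1.2).1⟩, p.2))
      · rintro ⟨⟨x, hx⟩, i⟩ -
        rw [Finset.mem_coe, mem_frtSet]
        refine ⟨?_, ?_⟩
        · change φ _ ∈ S • F
          rw [← hs]
          exact Finset.smul_mem_smul (hsS _) hx
        · rintro (h | ⟨j, hj⟩)
          · exact hφR _ h
          · rw [hs (⟨a, ha⟩, j)] at hj
            have := congrArg (fun p => p.1.1) (hφ hj)
            exact (hF x hx).2 this.symm
      · rintro ⟨⟨x, hx⟩, i⟩ - ⟨⟨y, hy⟩, j⟩ - h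
        have := hφ h
        simp only [Prod.mk.injEq, Subtype.mk.injEq] at this
        obtain ⟨rfl, rfl⟩ := this
        rfl
    rw [Finset.card_product] at hc
    rw [Finset.card_attach, Finset.card_univ, Fintype.card_fin, mul_comm] at hc
    exact hc

end frtcomb

section frtbaire
open scoped Classical
variable {Γ X : Type*} [Group Γ] [MulAction Γ X]

noncomputable def frtImg (p : Γ → X → Prop) (F : Finset Γ) (a : X) : Finset X :=
  (F.filter (fun h => p h a)).image (fun h => h • a)

theorem mem_frtImg {p : Γ → X → Prop} {F : Finset Γ} {a y : X} :
    y ∈ frtImg p F a ↔ ∃ g, (g ∈ F ∧ p g a) ∧ g • a = y := by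
  unfold frtImg
  simp only [Finset.mem_image, Finset.mem_filter]

theorem frt_meas_card [MeasurableSpace X]
    (hact : ∀ γ : Γ, Measurable (fun x : X => γ • x))
    (hEq : ∀ u v : X → X, Measurable u → Measurable v → MeasurableSet {x | u x = v x})
    (p : Γ → X → Prop) (hp : ∀ h, MeasurableSet {a | p h a}) (F : Finset Γ) :
    Measurable (fun a : X => (frtImg p F a).card) := by
  unfold frtImg
  induction F using Finset.induction_on with
  | empty => simp
  | insert h F hh ih =>
    have hm : MeasurableSet {a : X | h • a ∈ (F.filter (fun h => p h a)).image (fun h => h • a)} := by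
      have : {a : X | h • a ∈ (F.filter (fun h => p h a)).image (fun h => h • a)} =
          ⋃ g ∈ F, ({a | p g a} ∩ {a | g • a = h • a}) := by
        ext a
        simp only [Set.mem_ofPred_eq, Finset.mem_image, Finset.mem_filter, Set.mem_iUnion, Set.mem_inter_iff]
        constructor
        · rintro ⟨g, ⟨hg, hpg⟩, he⟩; exact ⟨g, hg, hpg, he⟩
        · rintro ⟨g, hg, hpg, he⟩; exact ⟨g, ⟨hg, hpg⟩, he⟩
      rw [this]
      exact Finset.measurableSet_biUnion _ fun g _ => (hp g).inter (hEq _ _ (hact g) (hact h))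
    have e : (fun a : X => (((insert h F).filter (fun h => p h a)).image (fun h => h • a)).card) =
        fun a => if p h a then (if h • a ∈ (F.filter (fun h => p h a)).image (fun h => h • a) then
          ((F.filter (fun h => p h a)).image (fun h => h • a)).card else
          ((F.filter (fun h => p h a)).image (fun h => h • a)).card + 1) else
          ((F.filter (fun h => p h a)).image (fun h => h • a)).card := by
      funext a
      rw [Finset.filter_insert]
      by_cases h1 : p h a
      · rw [if_pos h1, if_pos h1, Finset.image_insert, Finset.card_insert_eq_ite]
      · rw [if_neg h1, if_neg h1]
    rw [e]
    exact Measurable.ite (hp h) (Measurable.ite hm ih (ih.add_const 1)) ih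

def frtOK (S : Finset Γ) (D R : Set X) (τ : Fin 3 → Γ) (a : X) : Prop :=
  (∀ i, τ i ∈ S) ∧ (∀ i, τ i • a ∉ R) ∧ (∀ i j, τ i • a = τ j • a → i = j) ∧
  ∀ F : Finset Γ, (∀ h ∈ F, h • a ∉ D ∧ h • a ≠ a) →
      3 * (F.image (fun h => h • a)).card ≤
        frtCnt S (R ∪ {x | ∃ i, τ i • a = x}) (F.image (fun h => h • a))

theorem frt_ok_meas [MeasurableSpace X] [Countable Γ]
    (hact : ∀ γ : Γ, Measurable (fun x : X => γ • x))
    (hEq : ∀ u v : X → X, Measurable u → Measurable v → MeasurableSet {x | u x = v x})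
    (S : Finset Γ) (D R : Set X) (hD : MeasurableSet D) (hR : MeasurableSet R) (τ : Fin 3 → Γ) :
    MeasurableSet {a : X | frtOK S D R τ a} := by
  unfold frtOK
  refine (MeasurableSet.const _).inter (MeasurableSet.inter ?_ (MeasurableSet.inter ?_ ?_))
  · have : {a : X | ∀ i, τ i • a ∉ R} = ⋂ i, ((fun a : X => τ i • a) ⁻¹' R)ᶜ := by
      ext a; simp
    change MeasurableSet {a : X | ∀ i, τ i • a ∉ R}
    rw [this]
    exact MeasurableSet.iInter fun i => (hact _ hR).compl
  · have : {a : X | ∀ i j, τ i • a = τ j • a → i = j} =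
        ⋂ i, ⋂ j, ({a | τ i • a = τ j • a}ᶜ ∪ {_a | i = j}) := by
      ext a
      simp only [Set.mem_ofPred_eq, Set.mem_iInter, Set.mem_union, Set.mem_compl_iff]
      exact forall_congr' fun i => forall_congr' fun j => imp_iff_not_or
    change MeasurableSet {a : X | ∀ i j, τ i • a = τ j • a → i = j}
    rw [this]
    exact MeasurableSet.iInter fun i => MeasurableSet.iInter fun j =>
      (hEq _ _ (hact _) (hact _)).compl.union (MeasurableSet.const _)
  · change MeasurableSet {a : X | ∀ F : Finset Γ, (∀ h ∈ F, h • a ∉ D ∧ h • a ≠ a) →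
      3 * (F.image (fun h => h • a)).card ≤
        frtCnt S (R ∪ {x | ∃ i, τ i • a = x}) (F.image (fun h => h • a))}
    have : {a : X | ∀ F : Finset Γ, (∀ h ∈ F, h • a ∉ D ∧ h • a ≠ a) →
      3 * (F.image (fun h => h • a)).card ≤
        frtCnt S (R ∪ {x | ∃ i, τ i • a = x}) (F.image (fun h => h • a))} =
        ⋂ F : Finset Γ, ((⋂ h ∈ F, (((fun a : X => h • a) ⁻¹' D)ᶜ ∩ {a : X | h • a = a}ᶜ))ᶜ ∪
          {a : X | 3 * (frtImg (fun _ _ => True) F a).card ≤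
            (frtImg (fun g a => g • a ∉ R ∧ ∀ i, τ i • a ≠ g • a) (S * F) a).card}) := by
      ext a
      simp only [Set.mem_ofPred_eq, Set.mem_iInter, Set.mem_union, Set.mem_compl_iff,
        Set.mem_inter_iff, Set.mem_preimage]
      refine forall_congr' fun F => ?_
      rw [imp_iff_not_or]
      refine or_congr Iff.rfl ?_
      have h1 : frtImg (fun _ _ => True) F a = F.image (fun h => h • a) := by simp [frtImg]
      have h2 : frtSet S (R ∪ {x | ∃ i, τ i • a = x}) (F.image (fun h => h • a)) =
          frtImg (fun g a => g • a ∉ R ∧ ∀ i, τ i • a ≠ g • a) (S * F) a := by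
        ext y
        rw [mem_frtImg, mem_frtSet, Finset.mem_smul]
        constructor
        · rintro ⟨⟨s, hs, z, hz, rfl⟩, hn⟩
          obtain ⟨f, hf, rfl⟩ := Finset.mem_image.1 hz
          refine ⟨s * f, ⟨Finset.mul_mem_mul hs hf, ?_⟩, mul_smul _ _ _⟩
          rw [mul_smul]
          exact ⟨fun h => hn (Or.inl h), fun i h => hn (Or.inr ⟨i, h⟩)⟩
        · rintro ⟨g, ⟨hg, hn1, hn2⟩, rfl⟩
          obtain ⟨s, hs, f, hf, rfl⟩ := Finset.mem_mul.1 hg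
          refine ⟨⟨s, hs, f • a, Finset.mem_image.2 ⟨f, hf, rfl⟩, (mul_smul _ _ _).symm⟩, ?_⟩
          rintro (h | ⟨i, h⟩)
          · exact hn1 h
          · exact hn2 i h
      unfold frtCnt
      rw [h1, h2]
    rw [this]
    refine MeasurableSet.iInter fun F => MeasurableSet.union ?_ ?_
    · refine (Finset.measurableSet_biInter F fun h _ => ?_).compl
      exact (hact h hD).compl.inter (hEq _ _ (hact h) measurable_id).compl
    · refine measurableSet_le ?_ ?_
      · exact (frt_meas_card hact hEq (fun _ _ => True) (fun _ => MeasurableSet.const _) F).const_mul 3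
      · refine frt_meas_card hact hEq (fun g a => g • a ∉ R ∧ ∀ i, τ i • a ≠ g • a) (fun g => ?_) _
        have : {a : X | g • a ∉ R ∧ ∀ i, τ i • a ≠ g • a} =
          ((fun a : X => g • a) ⁻¹' R)ᶜ ∩ ⋂ i, {a : X | τ i • a = g • a}ᶜ := by
          ext a; simp
        rw [this]
        exact (hact g hR).compl.inter (MeasurableSet.iInter fun i => (hEq _ _ (hact _) (hact _)).compl)

def frtD (σ : X → Option (Fin 3 → Γ)) : Set X := {y | σ y ≠ none}
def frtR (σ : X → Option (Fin 3 → Γ)) : Set X := {x | ∃ y τ i, σ y = some τ ∧ τ i • y = x}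

structure FrtState [MeasurableSpace X] (S : Finset Γ) (σ : X → Option (Fin 3 → Γ)) : Prop where
  meas : ∀ τ, MeasurableSet {y | σ y = some τ}
  mem : ∀ y τ, σ y = some τ → ∀ i, τ i ∈ S
  inj : ∀ y y' τ τ' i j, σ y = some τ → σ y' = some τ' → τ i • y = τ' j • y' → y = y' ∧ i = j
  hall : frtHall S (frtD σ) (frtR σ)
  large : ∃ k N, 0 < k ∧ frtLarge S (frtD σ) (frtR σ) k N

theorem frtD_meas [MeasurableSpace X] [Countable Γ] (σ : X → Option (Fin 3 → Γ))
    (h : ∀ τ, MeasurableSet {y | σ y = some τ}) : MeasurableSet (frtD σ) := by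
  have : frtD σ = ⋃ τ, {y | σ y = some τ} := by
    ext y
    simp only [frtD, Set.mem_ofPred_eq, Set.mem_iUnion]
    exact Option.ne_none_iff_exists'
  rw [this]
  exact MeasurableSet.iUnion h

theorem frtR_meas [MeasurableSpace X] [Countable Γ]
    (hact : ∀ γ : Γ, Measurable (fun x : X => γ • x)) (σ : X → Option (Fin 3 → Γ))
    (h : ∀ τ, MeasurableSet {y | σ y = some τ}) : MeasurableSet (frtR σ) := by
  have : frtR σ = ⋃ τ : Fin 3 → Γ, ⋃ i, (fun x : X => (τ i)⁻¹ • x) ⁻¹' {y | σ y = some τ} := by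
    ext x
    simp only [frtR, Set.mem_ofPred_eq, Set.mem_iUnion, Set.mem_preimage]
    constructor
    · rintro ⟨y, τ, i, hy, rfl⟩; exact ⟨τ, i, by rwa [inv_smul_smul]⟩
    · rintro ⟨τ, i, hy⟩; exact ⟨_, τ, i, hy, smul_inv_smul _ _⟩
  rw [this]
  exact MeasurableSet.iUnion fun τ => MeasurableSet.iUnion fun i => hact _ (h τ)

theorem frt_extend [MeasurableSpace X] {S : Finset Γ} (h1 : (1 : Γ) ∈ S)
    {σ : X → Option (Fin 3 → Γ)} (hσ : FrtState S σ) {k N : ℕ} (hk : 0 < k)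
    (hlarge : frtLarge S (frtD σ) (frtR σ) k N) (A : Set X) (hA : MeasurableSet A)
    (τ : Fin 3 → Γ) (hAD : ∀ a ∈ A, σ a = none)
    (hdisc : ∀ a ∈ A, ∀ a' ∈ A, frtB S (2 * (max N (6 * k)) + 2) a a' → a = a')
    (hτS : ∀ i, τ i ∈ S)
    (hok : ∀ a ∈ A, frtOK S (frtD σ) (frtR σ) τ a) :
    FrtState S (fun y => if y ∈ A then some τ else σ y) := by
  have hD : frtD (fun y => if y ∈ A then some τ else σ y) = frtD σ ∪ A := by
    ext y
    by_cases hy : y ∈ A <;> simp [frtD, hy]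
  have hR : frtR (fun y => if y ∈ A then some τ else σ y) =
      frtR σ ∪ {x | ∃ a ∈ A, ∃ i, τ i • a = x} := by
    ext x
    constructor
    · rintro ⟨y, τ', i, hy, rfl⟩
      by_cases hyA : y ∈ A
      · simp only [hyA, if_true, Option.some.injEq] at hy
        subst hy
        exact Or.inr ⟨y, hyA, i, rfl⟩
      · simp only [hyA, if_false] at hy
        exact Or.inl ⟨y, τ', i, hy, rfl⟩
    · rintro (⟨y, τ', i, hy, rfl⟩ | ⟨y, hy, i, rfl⟩)
      · have hyA : y ∉ A := fun h => by rw [hAD y h] at hy; cases hy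
        exact ⟨y, τ', i, by simp [hyA, hy], rfl⟩
      · exact ⟨y, τ, i, by simp [hy], rfl⟩
  have hcomb := frt_step_comb h1 hk hσ.hall hlarge A τ hτS hdisc (fun a ha => (hok a ha).2.2.2)
  constructor
  · intro τ'
    have : {y | (if y ∈ A then some τ else σ y) = some τ'} =
        (A ∩ {_y | τ = τ'}) ∪ (Aᶜ ∩ {y | σ y = some τ'}) := by
      ext y
      by_cases hy : y ∈ A <;> simp [hy]
    rw [this]
    exact (hA.inter (MeasurableSet.const _)).union (hA.compl.inter (hσ.meas τ'))
  · intro y τ' hy i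
    by_cases hyA : y ∈ A
    · simp only [hyA, if_true, Option.some.injEq] at hy
      subst hy
      exact hτS i
    · simp only [hyA, if_false] at hy
      exact hσ.mem y τ' hy i
  · intro y y' τ₁ τ₂ i j hy hy' he
    by_cases hyA : y ∈ A <;> by_cases hyA' : y' ∈ A <;>
      simp only [hyA, hyA', if_true, if_false, Option.some.injEq] at hy hy'
    · subst hy; subst hy'
      have : y = y' := hdisc y hyA y' hyA' (frtB_mono h1 (by omega) (frtB_one (hτS i) (hτS j) he))
      subst this
      exact ⟨rfl, (hok y hyA).2.2.1 i j he⟩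
    · subst hy
      exact absurd ⟨y', τ₂, j, hy', he.symm⟩ ((hok y hyA).2.1 i)
    · subst hy'
      exact absurd ⟨y, τ₁, i, hy, he⟩ ((hok y' hyA').2.1 j)
    · exact hσ.inj y y' τ₁ τ₂ i j hy hy' he
  · rw [hD, hR]; exact hcomb.1
  · rw [hD, hR]; exact ⟨2 * k, _, by omega, hcomb.2⟩

theorem frt_step [TopologicalSpace X] [PolishSpace X] [MeasurableSpace X] [BorelSpace X]
    [Countable Γ] (hact : ∀ γ : Γ, Measurable (fun x : X => γ • x))
    {S : Finset Γ} (h1 : (1 : Γ) ∈ S)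
    {σ : X → Option (Fin 3 → Γ)} (hσ : FrtState S σ) (U : Set X) (hU : IsOpen U)
    (hne : U.Nonempty) (γ : Γ) :
    ∃ σ' : X → Option (Fin 3 → Γ), FrtState S σ' ∧ (∀ y τ, σ y = some τ → σ' y = some τ) ∧
      ¬ IsMeagre (U ∩ {x | σ' (γ • x) ≠ none}) := by
  have hEq : ∀ u v : X → X, Measurable u → Measurable v → MeasurableSet {x | u x = v x} :=
    fun u v hu hv => measurableSet_eq_fun hu hv
  obtain ⟨k, N, hk, hlarge⟩ := hσ.large
  have hUm : ¬ IsMeagre U := not_isMeagre_of_isOpen hU hne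
  let E : Finset Γ := (S⁻¹ * S) ^ (2 * (max N (6 * k)) + 2)
  let A : TopologicalSpace.countableBasis X × (Fin 3 → Γ) → Set X := fun q =>
    {a | a ∉ frtD σ} ∩ ((q.1 : Set X) ∩ ((⋂ t ∈ E, ({a : X | t • a = a} ∪ ((fun a : X => t • a) ⁻¹' (q.1 : Set X))ᶜ)) ∩
      {a | frtOK S (frtD σ) (frtR σ) q.2 a}))
  have hcov : ∀ a : X, a ∉ frtD σ → ∃ q, a ∈ A q := by
    intro a ha
    obtain ⟨τ, hτ1, hτ2, hτ3, hτ4⟩ := frt_choice hσ.hall a ha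
    have hfin : ((E.image (fun t => t • a)).erase a : Set X).Finite := Finset.finite_toSet _
    obtain ⟨W, hW, haW, hWs⟩ := (TopologicalSpace.isBasis_countableBasis X).exists_subset_of_mem_open
      (show a ∈ ((E.image (fun t => t • a)).erase a : Set X)ᶜ by simp) hfin.isClosed.isOpen_compl
    refine ⟨(⟨W, hW⟩, τ), ha, haW, ?_, hτ1, hτ2, hτ3, ?_⟩
    · simp only [Set.mem_iInter]
      intro t ht
      by_cases h : t • a = a
      · exact Or.inl h
      · right
        intro htW
        apply hWs htW
        rw [Finset.mem_coe, Finset.mem_erase]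
        exact ⟨h, Finset.mem_image.2 ⟨t, ht, rfl⟩⟩
    · intro F hF
      apply hτ4
      intro x hx
      obtain ⟨h, hh, rfl⟩ := Finset.mem_image.1 hx
      exact hF h hh
  have hDm := frtD_meas σ hσ.meas
  have hRm := frtR_meas hact σ hσ.meas
  have hAm : ∀ q, MeasurableSet (A q) := by
    rintro ⟨⟨W, hW⟩, τ⟩
    have hWm : MeasurableSet W := ((TopologicalSpace.isBasis_countableBasis X).isOpen hW).measurableSet
    refine hDm.compl.inter (hWm.inter (MeasurableSet.inter ?_ (frt_ok_meas hact hEq S _ _ hDm hRm τ)))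
    exact Finset.measurableSet_biInter _ fun t _ => (hEq _ _ (hact t) measurable_id).union (hact t hWm).compl
  by_cases hcase : IsMeagre (U ∩ {x | σ (γ • x) ≠ none})
  · have : ∃ q, ¬ IsMeagre (U ∩ {x | γ • x ∈ A q}) := by
      by_contra hcon
      push Not at hcon
      apply hUm
      refine (hcase.union (isMeagre_iUnion hcon)).mono ?_
      intro x hx
      by_cases hx' : σ (γ • x) = none
      · right
        obtain ⟨q, hq⟩ := hcov (γ • x) (by simp [frtD, hx'])
        exact Set.mem_iUnion.2 ⟨q, hx, hq⟩
      · exact Or.inl ⟨hx, hx'⟩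
    obtain ⟨q, hq⟩ := this
    have hqne : ∃ a, a ∈ A q := by
      by_contra hcon
      push Not at hcon
      apply hq
      have : U ∩ {x | γ • x ∈ A q} = ∅ := by
        ext x; simp [hcon]
      rw [this]; exact IsMeagre.empty
    have hAD : ∀ a ∈ A q, σ a = none := by
      intro a ha
      have := ha.1
      simpa [frtD] using this
    refine ⟨_, frt_extend h1 hσ hk hlarge (A q) (hAm q) q.2 hAD ?_ ?_ ?_, ?_, ?_⟩
    · rintro a ha a' ha' ⟨t, ht, rfl⟩
      have := Set.mem_iInter₂.1 ha.2.2.1 t ht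
      rcases this with h | h
      · exact h.symm
      · exact absurd ha'.2.1 h
    · obtain ⟨a, ha⟩ := hqne
      exact ha.2.2.2.1
    · exact fun a ha => ha.2.2.2
    · intro y τ hy
      have hyA : y ∉ A q := fun h => by rw [hAD y h] at hy; cases hy
      simp [hyA, hy]
    · intro hm
      apply hq
      refine hm.mono ?_
      rintro x ⟨hx, hx'⟩
      refine ⟨hx, ?_⟩
      have hx'' : γ • x ∈ A q := hx'
      simp [hx'']
  · exact ⟨σ, hσ, fun _ _ h => h, hcase⟩

end frtbaire

section frtlimit
open scoped Classical
variable {Γ X : Type*} [Group Γ] [MulAction Γ X]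

theorem frt_residual [TopologicalSpace X] [PolishSpace X] [MeasurableSpace X] [BorelSpace X]
    (M : Set X) (hM : MeasurableSet M)
    (h : ∀ U ∈ TopologicalSpace.countableBasis X, ¬ IsMeagre (U ∩ M)) : M ∈ residual X := by
  obtain ⟨V, hV, hMV⟩ := hM.residualEq_isOpen
  have hmem : ∀ᶠ x in residual X, (x ∈ M ↔ x ∈ V) := Filter.eventuallyEq_set.1 hMV
  have hd : Dense V := by
    rw [(TopologicalSpace.isBasis_countableBasis X).dense_iff]
    intro U hU _
    by_contra hcon
    rw [Set.not_nonempty_iff_eq_empty] at hcon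
    apply h U hU
    change (U ∩ M)ᶜ ∈ residual X
    filter_upwards [hmem] with x hx
    rintro ⟨hxU, hxM⟩
    have : x ∈ U ∩ V := ⟨hxU, hx.1 hxM⟩
    rw [hcon] at this
    exact this
  filter_upwards [hmem, residual_of_dense_open hV hd] with x hx hxV
  exact hx.2 hxV

theorem frt_part1 [Nonempty X] [TopologicalSpace X] [PolishSpace X] [MeasurableSpace X] [BorelSpace X]
    [Countable Γ] (hact : ∀ γ : Γ, Measurable (fun x : X => γ • x))
    {S : Finset Γ} (h1 : (1 : Γ) ∈ S)
    (hS : ∀ F : Finset X, 4 * F.card ≤ frtCnt S (∅ : Set X) F)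
    (d : Fin 3 → X → X) (hdinj : ∀ i j x y, d i x = d j y → i = j ∧ x = y)
    (hdL : ∀ i y, ∃ s ∈ S, s • y = d i y) :
    ∃ A : Set X, MeasurableSet A ∧ A ∈ residual X ∧ (∀ (γ : Γ) (x : X), x ∈ A → γ • x ∈ A) ∧
      ∃ c : Fin 3 → X → X, (∀ i j x y, c i x = c j y → i = j ∧ x = y) ∧
        (∀ i y, ∃ s ∈ S, s • y = c i y) ∧
        ∀ i (γ : Γ), MeasurableSet {y | y ∈ A ∧ γ • y = c i y} := by
  have hEq : ∀ u v : X → X, Measurable u → Measurable v → MeasurableSet {x | u x = v x} :=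
    fun u v hu hv => measurableSet_eq_fun hu hv
  have h0 : FrtState (X := X) S (fun _ => none) := by
    have hD : frtD (fun _ : X => (none : Option (Fin 3 → Γ))) = ∅ := by ext; simp [frtD]
    have hR : frtR (fun _ : X => (none : Option (Fin 3 → Γ))) = ∅ := by ext; simp [frtR]
    refine ⟨?_, ?_, ?_, ?_, ?_⟩
    · intro τ; simp
    · intro y τ h; cases h
    · intro y y' τ τ' i j h; cases h
    · rw [hD, hR]
      intro F _
      have := hS F
      omega
    · rw [hD, hR]
      refine ⟨1, 0, Nat.one_pos, ?_⟩
      intro F _ _ _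
      have := hS F
      omega
  haveI : Nonempty (TopologicalSpace.countableBasis X) := by
    obtain ⟨x⟩ := ‹Nonempty X›
    obtain ⟨W, hW, -, -⟩ := (TopologicalSpace.isBasis_countableBasis X).exists_subset_of_mem_open
      (Set.mem_univ x) isOpen_univ
    exact ⟨⟨W, hW⟩⟩
  obtain ⟨e, he⟩ := exists_surjective_nat (TopologicalSpace.countableBasis X × Γ)
  have hstep : ∀ (n : ℕ) (σ : {σ : X → Option (Fin 3 → Γ) // FrtState S σ}),
      ∃ σ' : {σ : X → Option (Fin 3 → Γ) // FrtState S σ},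
        (∀ y τ, σ.1 y = some τ → σ'.1 y = some τ) ∧
        ¬ IsMeagre (((e n).1 : Set X) ∩ {x | σ'.1 ((e n).2 • x) ≠ none}) := by
    intro n σ
    obtain ⟨σ', h, h', h''⟩ := frt_step hact h1 σ.2 (e n).1
      ((TopologicalSpace.isBasis_countableBasis X).isOpen (e n).1.2)
      (TopologicalSpace.nonempty_of_mem_countableBasis (e n).1.2) (e n).2
    exact ⟨⟨σ', h⟩, h', h''⟩
  choose next hext hnm using hstep
  let q : ℕ → {σ : X → Option (Fin 3 → Γ) // FrtState S σ} :=
    fun n => Nat.rec ⟨_, h0⟩ (fun n σ => next n σ) n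
  have hq : ∀ n, q (n + 1) = next n (q n) := fun n => rfl
  have hmono : ∀ m n, m ≤ n → ∀ y τ, (q m).1 y = some τ → (q n).1 y = some τ := by
    intro m n hmn
    induction n, hmn using Nat.le_induction with
    | base => exact fun _ _ h => h
    | succ n _ ih =>
      intro y τ h
      rw [hq]
      exact hext n (q n) y τ (ih y τ h)
  have hlim : ∀ y, ∃ o : Option (Fin 3 → Γ), ∀ τ, o = some τ ↔ ∃ n, (q n).1 y = some τ := by
    intro y
    by_cases h : ∃ n τ, (q n).1 y = some τ
    · obtain ⟨n, τ, hn⟩ := h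
      refine ⟨some τ, fun τ' => ⟨?_, ?_⟩⟩
      · rintro h; exact ⟨n, hn.trans h⟩
      · rintro ⟨m, hm⟩
        have a1 := hmono n (max n m) (le_max_left _ _) y τ hn
        have a2 := hmono m (max n m) (le_max_right _ _) y τ' hm
        exact a1.symm.trans a2
    · refine ⟨none, fun τ => ⟨fun h => (by cases h), ?_⟩⟩
      rintro ⟨n, hn⟩
      exact absurd ⟨n, τ, hn⟩ h
  choose σ hσ using hlim
  have hσm : ∀ τ, MeasurableSet {y | σ y = some τ} := by
    intro τ
    have : {y | σ y = some τ} = ⋃ n, {y | (q n).1 y = some τ} := by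
      ext y; simp [hσ]
    rw [this]
    exact MeasurableSet.iUnion fun n => (q n).2.meas τ
  have hDm := frtD_meas σ hσm
  have hσS : ∀ y τ, σ y = some τ → ∀ i, τ i ∈ S := by
    intro y τ h
    obtain ⟨n, hn⟩ := (hσ y τ).1 h
    exact (q n).2.mem y τ hn
  have hσinj : ∀ y y' τ τ' i j, σ y = some τ → σ y' = some τ' → τ i • y = τ' j • y' →
      y = y' ∧ i = j := by
    intro y y' τ τ' i j h h' he
    obtain ⟨n, hn⟩ := (hσ y τ).1 h
    obtain ⟨m, hm⟩ := (hσ y' τ').1 h'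
    exact (q (max n m)).2.inj y y' τ τ' i j (hmono n _ (le_max_left _ _) y τ hn)
      (hmono m _ (le_max_right _ _) y' τ' hm) he
  have hres : ∀ γ : Γ, (fun x : X => γ • x) ⁻¹' (frtD σ) ∈ residual X := by
    intro γ
    refine frt_residual _ (hact γ hDm) ?_
    intro U hU hm
    obtain ⟨n, hn⟩ := he (⟨U, hU⟩, γ)
    have := hnm n (q n)
    rw [hn] at this
    apply this
    refine hm.mono ?_
    rintro x ⟨hxU, hx⟩
    refine ⟨hxU, ?_⟩
    obtain ⟨τ, hτ⟩ := Option.ne_none_iff_exists'.1 hx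
    have : σ (γ • x) = some τ := (hσ _ _).2 ⟨n + 1, hτ⟩
    change σ (γ • x) ≠ none
    rw [this]; simp
  let A : Set X := ⋂ γ : Γ, (fun x : X => γ • x) ⁻¹' (frtD σ)
  have hAinv : ∀ (γ : Γ) (x : X), x ∈ A → γ • x ∈ A := by
    intro γ x hx
    refine Set.mem_iInter.2 fun g => ?_
    have := Set.mem_iInter.1 hx (g * γ)
    simpa only [Set.mem_preimage, mul_smul] using this
  have hAinv' : ∀ (γ : Γ) (x : X), γ • x ∈ A → x ∈ A := by
    intro γ x hx
    have := hAinv γ⁻¹ _ hx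
    rwa [inv_smul_smul] at this
  have hAσ : ∀ x ∈ A, ∃ τ, σ x = some τ := by
    intro x hx
    have := Set.mem_iInter.1 hx 1
    simp only [Set.mem_preimage, one_smul] at this
    exact Option.ne_none_iff_exists'.1 this
  have hAm : MeasurableSet A := MeasurableSet.iInter fun γ => hact γ hDm
  have hcex : ∀ (i : Fin 3) (y : X), ∃ z, (∀ τ, y ∈ A → σ y = some τ → z = τ i • y) ∧
      (y ∉ A → z = d i y) := by
    intro i y
    by_cases hy : y ∈ A
    · obtain ⟨τ, hτ⟩ := hAσ y hy
      refine ⟨τ i • y, fun τ' _ h' => ?_, fun h => absurd hy h⟩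
      rw [hτ] at h'
      rw [Option.some.inj h']
    · exact ⟨d i y, fun _ h => absurd h hy, fun _ => rfl⟩
  choose c hc1 hc2 using hcex
  have hcL : ∀ i y, ∃ s ∈ S, s • y = c i y := by
    intro i y
    by_cases hy : y ∈ A
    · obtain ⟨τ, hτ⟩ := hAσ y hy
      exact ⟨τ i, hσS y τ hτ i, (hc1 i y τ hy hτ).symm⟩
    · rw [hc2 i y hy]; exact hdL i y
  have hcA : ∀ i y, c i y ∈ A ↔ y ∈ A := by
    intro i y
    obtain ⟨s, -, hs⟩ := hcL i y
    rw [← hs]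
    exact ⟨hAinv' s y, hAinv s y⟩
  refine ⟨A, hAm, countable_iInter_mem.2 hres, hAinv, c, ?_, hcL, ?_⟩
  · intro i j x y h
    by_cases hx : x ∈ A
    · have hy : y ∈ A := by rw [← hcA j y, ← h, hcA]; exact hx
      obtain ⟨τ, hτ⟩ := hAσ x hx
      obtain ⟨τ', hτ'⟩ := hAσ y hy
      rw [hc1 i x τ hx hτ, hc1 j y τ' hy hτ'] at h
      exact (hσinj x y τ τ' i j hτ hτ' h).symm
    · have hy : y ∉ A := by rw [← hcA j y, ← h, hcA]; exact hx
      rw [hc2 i x hx, hc2 j y hy] at h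
      exact hdinj i j x y h
  · intro i γ
    have : {y | y ∈ A ∧ γ • y = c i y} =
        A ∩ ⋃ τ : Fin 3 → Γ, ({y | σ y = some τ} ∩ {y | γ • y = τ i • y}) := by
      ext y
      simp only [Set.mem_ofPred_eq, Set.mem_inter_iff, Set.mem_iUnion]
      refine and_congr_right fun hy => ?_
      constructor
      · intro h
        obtain ⟨τ, hτ⟩ := hAσ y hy
        exact ⟨τ, hτ, h.trans (hc1 i y τ hy hτ)⟩
      · rintro ⟨τ, hτ, h⟩
        exact h.trans (hc1 i y τ hy hτ).symm
    rw [this]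
    exact hAm.inter (MeasurableSet.iUnion fun τ => (hσm τ).inter (hEq _ _ (hact _) (hact _)))

end frtlimit

section frtfinal
open scoped Classical

theorem frt_piece {H X : Type*} [Group H] [MulAction H X] {n : ℕ} (A : Fin n → Set X)
    (α : Fin n → H) (hdis : ∀ i j, i ≠ j → Disjoint (A i) (A j))
    (hcov : ∀ x, ∃ i, ∃ a ∈ A i, α i • a = x) :
    ∃ (p : X → X) (T : Finset H), Function.Injective p ∧ (∀ x, ∃ i, p x ∈ A i) ∧
      ∀ x, ∃ t ∈ T, t • x = p x := by
  choose i p hp hip using hcov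
  refine ⟨p, Finset.univ.image (fun i => (α i)⁻¹), ?_, fun x => ⟨_, hp x⟩, ?_⟩
  · intro x y h
    have hi : i x = i y := by
      by_contra hne
      refine Set.disjoint_left.1 (hdis _ _ hne) (hp x) ?_
      rw [h]; exact hp y
    rw [← hip x, ← hip y, hi, h]
  · intro x
    refine ⟨(α (i x))⁻¹, Finset.mem_image.2 ⟨_, Finset.mem_univ _, rfl⟩, ?_⟩
    rw [inv_smul_eq_iff]
    exact (hip x).symm

@[reducible] def frtM {X : Type*} [MeasurableSpace X] (A : Set X) : MeasurableSpace X :=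
  MeasurableSpace.map (Subtype.val : A → X) inferInstance

theorem frtM_iff {X : Type*} [MeasurableSpace X] {A : Set X} (hAm : MeasurableSet A) (B : Set X) :
    @MeasurableSet X (frtM A) B ↔ MeasurableSet (A ∩ B) := by
  constructor
  · intro h
    have h' : MeasurableSet ((Subtype.val : A → X) ⁻¹' B) := h
    have := hAm.subtype_image h'
    rwa [Subtype.image_preimage_coe] at this
  · intro h
    change MeasurableSet ((Subtype.val : A → X) ⁻¹' B)
    have : (Subtype.val : A → X) ⁻¹' B = (Subtype.val : A → X) ⁻¹' (A ∩ B) := by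
      ext x; simp
    rw [this]
    exact measurable_subtype_coe h

theorem frtM_eq {X : Type*} [TopologicalSpace X] [PolishSpace X] [MeasurableSpace X] [BorelSpace X]
    {A : Set X} (hAm : MeasurableSet A) (u v : X → X)
    (hu : @Measurable X X (frtM A) (frtM A) u) (hv : @Measurable X X (frtM A) (frtM A) v) :
    @MeasurableSet X (frtM A) {x | u x = v x} := by
  have key : ∀ w : X → X, @Measurable X X (frtM A) (frtM A) w → Measurable (fun x : A => w x) := by
    intro w hw B hB
    have h : @MeasurableSet X (frtM A) B := (frtM_iff hAm B).2 (hAm.inter hB)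
    exact hw h
  change MeasurableSet ((Subtype.val : A → X) ⁻¹' {x | u x = v x})
  exact measurableSet_eq_fun (key u hu) (key v hv)

theorem frt_main {H X : Type*} [Group H] [Countable H] [Nonempty X] [TopologicalSpace X]
    [PolishSpace X] [MeasurableSpace X] [BorelSpace X] [MulAction H X]
    (hact : ∀ γ : H, Measurable (fun x : X => γ • x))
    (p : Bool → X → X) (hp : ∀ b b' x y, p b x = p b' y → b = b' ∧ x = y)
    (T : Finset H) (hT : ∀ b x, ∃ t ∈ T, t • x = p b x) :
    ∃ G : SimpleGraph X,
      (∀ x : X, (G.neighborSet x).ncard = 4) ∧ G.IsAcyclic ∧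
      (∃ S : Finset H, ∀ x y : X, G.Adj x y → ∃ γ ∈ S, γ • x = y) ∧
      ∃ A : Set X, MeasurableSet A ∧ A ∈ residual X ∧
        (∀ x y : X, G.Adj x y → (x ∈ A ↔ y ∈ A)) ∧
        MeasurableSet {p : X × X | p.1 ∈ A ∧ p.2 ∈ A ∧ G.Adj p.1 p.2} := by
  let S : Finset H := insert 1 (T * T)
  have hL : ∀ b b' y, ∃ s ∈ S, s • y = p b (p b' y) := by
    intro b b' y
    obtain ⟨t, ht, h⟩ := hT b' y
    obtain ⟨t', ht', h'⟩ := hT b (p b' y)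
    exact ⟨t' * t, Finset.mem_insert_of_mem (Finset.mul_mem_mul ht' ht), by rw [mul_smul, h, h']⟩
  have hinj : ∀ b b' c c' x y, p b (p b' x) = p c (p c' y) → b = c ∧ b' = c' ∧ x = y := by
    intro b b' c c' x y h
    obtain ⟨h1, h2⟩ := hp _ _ _ _ h
    exact ⟨h1, hp _ _ _ _ h2⟩
  have hS : ∀ F : Finset X, 4 * F.card ≤ frtCnt S (∅ : Set X) F := by
    intro F
    have hc : (F ×ˢ (Finset.univ : Finset (Bool × Bool))).card ≤ frtCnt S (∅ : Set X) F := by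
      unfold frtCnt
      apply Finset.card_le_card_of_injOn (fun q => p q.2.1 (p q.2.2 q.1))
      · rintro ⟨x, b, b'⟩ hx
        rw [Finset.mem_coe, mem_frtSet]
        refine ⟨?_, fun h => h⟩
        obtain ⟨s, hs, h⟩ := hL b b' x
        change p b (p b' x) ∈ S • F
        rw [← h]
        rw [Finset.mem_coe, Finset.mem_product] at hx
        exact Finset.smul_mem_smul hs hx.1
      · rintro ⟨x, b, b'⟩ - ⟨y, c, c'⟩ - h
        obtain ⟨rfl, rfl, rfl⟩ := hinj _ _ _ _ _ _ h
        rfl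
    rw [Finset.card_product, mul_comm] at hc
    exact hc
  let κ : Fin 3 → Bool × Bool := ![(true, true), (true, false), (false, true)]
  have hκ : ∀ i j, κ i = κ j → i = j := by decide
  obtain ⟨A, hAm, hAr, hAinv, c, hcinj, hcL, hcm⟩ := frt_part1 hact (S := S)
    (Finset.mem_insert_self _ _) hS (fun i x => p (κ i).1 (p (κ i).2 x))
    (by
      intro i j x y h
      obtain ⟨h1, h2, h3⟩ := hinj _ _ _ _ _ _ h
      exact ⟨hκ i j (Prod.ext h1 h2), h3⟩)
    (fun i y => hL _ _ y)
  have hAiff : ∀ (γ : H) (x : X), γ • x ∈ A ↔ x ∈ A := by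
    intro γ x
    refine ⟨fun h => ?_, hAinv γ x⟩
    have := hAinv γ⁻¹ _ h
    rwa [inv_smul_smul] at this
  have hm' := frtM_iff hAm
  obtain ⟨G, hG4, hGa, S', hS', hS'm⟩ := @frt_part2 H X _ _ (frtM A)
    (by
      intro γ B hB
      rw [hm'] at hB ⊢
      have : A ∩ (fun x : X => γ • x) ⁻¹' B = (fun x : X => γ • x) ⁻¹' (A ∩ B) := by
        ext x; simp [hAiff]
      rw [this]
      exact hact γ hB)
    (frtM_eq hAm)
    S c
    (by
      intro i B hB
      rw [hm'] at hB ⊢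
      have : A ∩ c i ⁻¹' B = ⋃ s ∈ S, ({y | y ∈ A ∧ s • y = c i y} ∩ (fun x : X => s • x) ⁻¹' (A ∩ B)) := by
        ext x
        simp only [Set.mem_inter_iff, Set.mem_preimage, Set.mem_iUnion, Set.mem_ofPred_eq]
        constructor
        · rintro ⟨hx, hB⟩
          obtain ⟨s, hs, h⟩ := hcL i x
          exact ⟨s, hs, ⟨hx, h⟩, (hAiff s x).2 hx, by rw [h]; exact hB⟩
        · rintro ⟨s, hs, ⟨hx, h⟩, -, hB⟩
          rw [h] at hB
          exact ⟨hx, hB⟩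
      rw [this]
      exact Finset.measurableSet_biUnion _ fun s _ => (hcm i s).inter (hact s hB))
    hcinj hcL
  refine ⟨G, hG4, hGa, ⟨S', hS'⟩, A, hAm, hAr, ?_, ?_⟩
  · intro x y h
    obtain ⟨γ, -, rfl⟩ := hS' x y h
    exact (hAiff γ x).symm
  · have : {p : X × X | p.1 ∈ A ∧ p.2 ∈ A ∧ G.Adj p.1 p.2} =
        ⋃ γ ∈ S', (Prod.fst ⁻¹' (A ∩ {x | G.Adj x (γ • x)}) ∩ {p : X × X | γ • p.1 = p.2}) := by
      ext ⟨x, y⟩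
      simp only [Set.mem_ofPred_eq, Set.mem_iUnion, Set.mem_inter_iff, Set.mem_preimage]
      constructor
      · rintro ⟨hx, hy, h⟩
        obtain ⟨γ, hγ, rfl⟩ := hS' x y h
        exact ⟨γ, hγ, ⟨hx, h⟩, rfl⟩
      · rintro ⟨γ, hγ, ⟨hx, h⟩, rfl⟩
        exact ⟨hx, (hAiff γ x).2 hx, h⟩
    rw [this]
    refine Finset.measurableSet_biUnion _ fun γ hγ => ?_
    refine (measurable_fst ((hm' _).1 (hS'm γ hγ))).inter ?_
    exact measurableSet_eq_fun ((hact γ).comp measurable_fst) measurable_snd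


end frtfinal

/-- **Lemma (Marks–Unger).** If `a` is a nonamenable (equivalently, paradoxical) action of a
group `Γ` on a Polish space `X` by Borel automorphisms, then there is a `4`-regular acyclic
`a`-Lipschitz graph `G` on `X` and a comeager `G`-invariant Borel set `A ⊆ X` such that the
induced graph `G ↾ A` is Borel. -/
theorem four_regular_tree {Γ X : Type*} [Group Γ] [TopologicalSpace X] [PolishSpace X]
    [MeasurableSpace X] [BorelSpace X] [MulAction Γ X]
    (hBorelAction : ∀ γ : Γ, Measurable (fun x : X => γ • x))
    (hpara : ∃ (n m : ℕ) (A : Fin n → Set X) (B : Fin m → Set X) (α : Fin n → Γ)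
      (β : Fin m → Γ), IsParadoxicalDecomposition A B α β) :
    ∃ G : SimpleGraph X,
      -- `G` is `4`-regular
      (∀ x : X, (G.neighborSet x).ncard = 4) ∧
      -- `G` is acyclic
      G.IsAcyclic ∧
      -- `G` is `a`-Lipschitz
      (∃ S : Finset Γ, ∀ x y : X, G.Adj x y → ∃ γ ∈ S, γ • x = y) ∧
      -- there is a comeager `G`-invariant Borel set `A` on which `G` is Borel
      ∃ A : Set X, MeasurableSet A ∧ A ∈ residual X ∧
        (∀ x y : X, G.Adj x y → (x ∈ A ↔ y ∈ A)) ∧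
        MeasurableSet {p : X × X | p.1 ∈ A ∧ p.2 ∈ A ∧ G.Adj p.1 p.2} := by
  rcases isEmpty_or_nonempty X with hX | hX
  · refine ⟨⊥, fun x => hX.elim x, SimpleGraph.isAcyclic_bot, ⟨∅, fun x => hX.elim x⟩, Set.univ,
      MeasurableSet.univ, Filter.univ_mem, fun x => hX.elim x, ?_⟩
    have : {p : X × X | p.1 ∈ (Set.univ : Set X) ∧ p.2 ∈ (Set.univ : Set X) ∧
        (⊥ : SimpleGraph X).Adj p.1 p.2} = ∅ := by
      ext p; exact hX.elim p.1
    rw [this]; exact MeasurableSet.empty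
  obtain ⟨n, m, A, B, α, β, hA, hB, hAB, -, -, -, hcA, hcB⟩ := hpara
  let f : FreeGroup (Fin n ⊕ Fin m) →* Γ := FreeGroup.lift (Sum.elim α β)
  letI : MulAction (FreeGroup (Fin n ⊕ Fin m)) X := MulAction.compHom X f
  have hsm : ∀ (g : FreeGroup (Fin n ⊕ Fin m)) (x : X), g • x = f g • x := fun _ _ => rfl
  haveI : Countable (FreeGroup (Fin n ⊕ Fin m)) := by
    unfold FreeGroup; infer_instance
  obtain ⟨p₁, T₁, hp₁, hpA, hT₁⟩ := frt_piece A
    (fun i => (FreeGroup.of (Sum.inl i) : FreeGroup (Fin n ⊕ Fin m))) hA (by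
      intro x
      have hx : x ∈ ⋃ i, α i • A i := by rw [hcA]; trivial
      obtain ⟨i, a, ha, h⟩ := Set.mem_iUnion.1 hx
      refine ⟨i, a, ha, ?_⟩
      rw [hsm]
      simpa [f] using h)
  obtain ⟨p₂, T₂, hp₂, hpB, hT₂⟩ := frt_piece B
    (fun i => (FreeGroup.of (Sum.inr i) : FreeGroup (Fin n ⊕ Fin m))) hB (by
      intro x
      have hx : x ∈ ⋃ i, β i • B i := by rw [hcB]; trivial
      obtain ⟨i, a, ha, h⟩ := Set.mem_iUnion.1 hx
      refine ⟨i, a, ha, ?_⟩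
      rw [hsm]
      simpa [f] using h)
  have hne : ∀ x y, p₁ x ≠ p₂ y := by
    intro x y h
    obtain ⟨i, hi⟩ := hpA x
    obtain ⟨j, hj⟩ := hpB y
    rw [← h] at hj
    exact Set.disjoint_left.1 (hAB i j) hi hj
  classical
  obtain ⟨G, h4, hac, ⟨S, hS⟩, hrest⟩ := frt_main (H := FreeGroup (Fin n ⊕ Fin m))
    (fun γ => hBorelAction (f γ)) (fun b => if b = true then p₁ else p₂)
    (by
      intro b b' x y h
      cases b <;> cases b' <;> simp at h ⊢
      · exact hp₂ h
      · exact hne _ _ h.symm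
      · exact hne _ _ h
      · exact hp₁ h)
    (T₁ ∪ T₂)
    (by
      intro b x
      cases b
      · obtain ⟨t, ht, h⟩ := hT₂ x
        exact ⟨t, Finset.mem_union_right _ ht, by simpa using h⟩
      · obtain ⟨t, ht, h⟩ := hT₁ x
        exact ⟨t, Finset.mem_union_left _ ht, by simpa using h⟩)
  refine ⟨G, h4, hac, ⟨S.image f, ?_⟩, hrest⟩
  intro x y h
  obtain ⟨γ, hγ, hxy⟩ := hS x y h
  exact ⟨f γ, Finset.mem_image_of_mem f hγ, hxy⟩
end
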